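/- arXiv:math/0602337 — 3 statements merged into one kernel-verified Lean document; each statement's English description precedes it below -/
import Mathlib

section
/- Let u(y,t) = ∫_{ℝⁿ} K(y,z,t) u₀(z) dz, where K is the Euclidean heat kernel on ℝⁿ and u₀ : ℝⁿ → ℝ is continuous, compactly supported, nonnegative, and not identically zero. Fix x₀ ∈ ℝⁿ and t₀ > 0, write τ = t₀ - t, and let Ĥ(y,t) = (4πτ)^{-n/2} exp(-‖x₀-y‖²/(4τ)) for 0 < t < t₀. Then u(x₀,t₀) Δ log u(x₀,t₀) + (n/(2t₀)) u(x₀,t₀) ≥ (2/t₀²) ∫₀^{t₀} t² ( ∫_{ℝⁿ} ‖ ∇² log u(y,t) + (1/(2t)) I ‖²_F u(y,t) Ĥ(y,t) dy ) dt, and in particular the left-hand side is nonnegative. -/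
open Real MeasureTheory Filter Set

/-- The Euclidean heat kernel on ℝⁿ. -/
noncomputable def heatK (n : ℕ) (x y : EuclideanSpace ℝ (Fin n)) (t : ℝ) : ℝ :=
  (4 * π * t) ^ (-(n : ℝ) / 2) * Real.exp (-‖x - y‖ ^ 2 / (4 * t))

/-- `i`-th partial derivative of `f : ℝⁿ → ℝ`. -/
noncomputable def pdv {n : ℕ} (i : Fin n) (f : EuclideanSpace ℝ (Fin n) → ℝ)
    (y : EuclideanSpace ℝ (Fin n)) : ℝ :=
  fderiv ℝ f y (EuclideanSpace.single i 1)

/-- `(i,j)` entry of the Hessian of `f : ℝⁿ → ℝ`. -/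
noncomputable def hess {n : ℕ} (i j : Fin n) (f : EuclideanSpace ℝ (Fin n) → ℝ)
    (y : EuclideanSpace ℝ (Fin n)) : ℝ :=
  pdv i (pdv j f) y

/-- Euclidean Laplacian (trace of the Hessian) of `f : ℝⁿ → ℝ`. -/
noncomputable def lap {n : ℕ} (f : EuclideanSpace ℝ (Fin n) → ℝ)
    (y : EuclideanSpace ℝ (Fin n)) : ℝ :=
  ∑ i, hess i i f y

open scoped Topology

noncomputable def EE {n : ℕ} (ψ : EuclideanSpace ℝ (Fin n) → ℝ) (s : ℝ)
    (b : EuclideanSpace ℝ (Fin n)) : ℝ :=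
  ∫ z, ψ z * Real.exp (inner ℝ b z - s * ‖z‖ ^ 2 / 2)

/-- continuous with compact support -/
def CC {n : ℕ} (ψ : EuclideanSpace ℝ (Fin n) → ℝ) : Prop :=
  Continuous ψ ∧ HasCompactSupport ψ

lemma CC.mul_left {n : ℕ} {ψ : EuclideanSpace ℝ (Fin n) → ℝ} (h : CC ψ)
    {φ : EuclideanSpace ℝ (Fin n) → ℝ} (hφ : Continuous φ) : CC (fun z => φ z * ψ z) :=
  ⟨hφ.mul h.1, h.2.mul_left⟩

lemma CC.mul_right {n : ℕ} {ψ : EuclideanSpace ℝ (Fin n) → ℝ} (h : CC ψ)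
    {φ : EuclideanSpace ℝ (Fin n) → ℝ} (hφ : Continuous φ) : CC (fun z => ψ z * φ z) :=
  ⟨h.1.mul hφ, h.2.mul_right⟩

lemma CC.integrable {n : ℕ} {ψ : EuclideanSpace ℝ (Fin n) → ℝ} (h : CC ψ) : Integrable ψ :=
  h.1.integrable_of_hasCompactSupport h.2

lemma CC.coord {n : ℕ} {ψ : EuclideanSpace ℝ (Fin n) → ℝ} (h : CC ψ) (i : Fin n) :
    CC (fun z => z i * ψ z) := h.mul_left (by fun_prop)

lemma CC.ee_integrable {n : ℕ} {ψ : EuclideanSpace ℝ (Fin n) → ℝ} (h : CC ψ) (s : ℝ)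
    (b : EuclideanSpace ℝ (Fin n)) :
    Integrable (fun z => ψ z * Real.exp (inner ℝ b z - s * ‖z‖ ^ 2 / 2)) :=
  (h.mul_right (by fun_prop)).integrable

lemma EE_hasFDerivAt {n : ℕ} {ψ : EuclideanSpace ℝ (Fin n) → ℝ} (h : CC ψ) (s : ℝ)
    (b : EuclideanSpace ℝ (Fin n)) :
    HasFDerivAt (EE ψ s)
      (∫ z, (ψ z * Real.exp (inner ℝ b z - s * ‖z‖ ^ 2 / 2)) • innerSL ℝ z) b := by
  unfold EE
  refine hasFDerivAt_integral_of_dominated_of_fderiv_le (s := Metric.ball b 1)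
    (bound := fun z => |ψ z| * (Real.exp ((‖b‖ + 1) * ‖z‖ - s * ‖z‖ ^ 2 / 2) * ‖z‖))
    (F' := fun b z => (ψ z * Real.exp (inner ℝ b z - s * ‖z‖ ^ 2 / 2)) • innerSL ℝ z)
    (Metric.ball_mem_nhds b one_pos) ?_ (h.ee_integrable s b) ?_ ?_ ?_ ?_
  · exact Eventually.of_forall fun x => (h.ee_integrable s x).aestronglyMeasurable
  · have := h.1
    exact Continuous.aestronglyMeasurable (by fun_prop)
  · refine Eventually.of_forall fun z x hx => ?_
    rw [norm_smul, innerSL_apply_norm, norm_mul, Real.norm_eq_abs, Real.norm_eq_abs,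
      Real.abs_exp, mul_assoc]
    have h1 : inner ℝ x z ≤ (‖b‖ + 1) * ‖z‖ := by
      refine (real_inner_le_norm x z).trans ?_
      have : ‖x‖ ≤ ‖b‖ + 1 := by
        have := norm_sub_norm_le x b
        rw [mem_ball_iff_norm] at hx
        linarith
      gcongr
    gcongr
  · have h1 : CC (fun z => |ψ z|) := ⟨h.1.abs, h.2.comp_left (g := fun x : ℝ => |x|) abs_zero⟩
    exact (h1.mul_right (by fun_prop)).integrable
  · refine Eventually.of_forall fun z x hx => ?_
    have h1 : HasFDerivAt (fun x : EuclideanSpace ℝ (Fin n) => inner ℝ x z) (innerSL ℝ z) x := by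
      have := (innerSL ℝ z).hasFDerivAt (x := x)
      refine this.congr_of_eventuallyEq (Eventually.of_forall fun y => ?_)
      simp [real_inner_comm]
    have h2 := ((h1.sub_const (s * ‖z‖ ^ 2 / 2)).exp).const_mul (ψ z)
    rwa [smul_smul] at h2

lemma EE_fderiv_apply {n : ℕ} {ψ : EuclideanSpace ℝ (Fin n) → ℝ} (h : CC ψ) (s : ℝ)
    (b : EuclideanSpace ℝ (Fin n)) (j : Fin n) :
    (∫ z, (ψ z * Real.exp (inner ℝ b z - s * ‖z‖ ^ 2 / 2)) • innerSL ℝ z)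
      (EuclideanSpace.single j 1) = EE (fun z => z j * ψ z) s b := by
  rw [ContinuousLinearMap.integral_apply]
  · unfold EE
    congr 1
    ext z
    simp [EuclideanSpace.inner_single_right]
    ring
  · have := h.1
    refine Continuous.integrable_of_hasCompactSupport (by fun_prop) ?_
    have := (h.mul_right (φ := fun z => Real.exp (inner ℝ b z - s * ‖z‖ ^ 2 / 2)) (by fun_prop)).2
    exact this.smul_right

lemma EE_line {n : ℕ} {ψ : EuclideanSpace ℝ (Fin n) → ℝ} (h : CC ψ) (s : ℝ)
    (b : EuclideanSpace ℝ (Fin n)) (j : Fin n) :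
    HasDerivAt (fun r : ℝ => EE ψ s (b + r • EuclideanSpace.single j 1))
      (EE (fun z => z j * ψ z) s b) 0 := by
  have := (EE_hasFDerivAt h s b).hasLineDerivAt (EuclideanSpace.single j 1)
  rw [EE_fderiv_apply h] at this
  exact this

lemma EE_cont {n : ℕ} {ψ : EuclideanSpace ℝ (Fin n) → ℝ} (h : CC ψ) (s : ℝ) :
    Continuous (EE ψ s) :=
  continuous_iff_continuousAt.2 fun b => (EE_hasFDerivAt h s b).continuousAt

lemma EE_time {n : ℕ} {ψ : EuclideanSpace ℝ (Fin n) → ℝ} (h : CC ψ) (s : ℝ)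
    (b : EuclideanSpace ℝ (Fin n)) :
    HasDerivAt (fun s => EE ψ s b)
      (-(1/2) * ∑ j, EE (fun z => z j * (z j * ψ z)) s b) s := by
  have key : -(1/2) * ∑ j, EE (fun z => z j * (z j * ψ z)) s b
      = ∫ z, ψ z * (Real.exp (inner ℝ b z - s * ‖z‖ ^ 2 / 2) * (-(‖z‖ ^ 2 / 2))) := by
    unfold EE
    rw [← integral_finsetSum, ← integral_const_mul]
    · congr 1
      ext z
      have e1 : ∑ j, z j * (z j * ψ z) * Real.exp (inner ℝ b z - s * ‖z‖ ^ 2 / 2)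
          = (∑ j, z j ^ 2) * (ψ z * Real.exp (inner ℝ b z - s * ‖z‖ ^ 2 / 2)) := by
        rw [Finset.sum_mul]
        exact Finset.sum_congr rfl fun j _ => by ring
      rw [e1, ← EuclideanSpace.real_norm_sq_eq]
      ring
    · intro j _
      exact ((h.coord j).coord j).ee_integrable s b
  rw [key]
  unfold EE
  refine (hasDerivAt_integral_of_dominated_loc_of_deriv_le (s := Metric.ball s 1)
    (bound := fun z => |ψ z| * (Real.exp (inner ℝ b z + (|s| + 1) * ‖z‖ ^ 2 / 2) * (‖z‖^2/2)))
    (F' := fun s z => ψ z * (Real.exp (inner ℝ b z - s * ‖z‖ ^ 2 / 2) * (-(‖z‖ ^ 2 / 2))))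
    (Metric.ball_mem_nhds s one_pos) ?_ (h.ee_integrable s b) ?_ ?_ ?_ ?_).2
  · exact Eventually.of_forall fun x => (h.ee_integrable x b).aestronglyMeasurable
  · have := h.1
    exact Continuous.aestronglyMeasurable (by fun_prop)
  · refine Eventually.of_forall fun z x hx => ?_
    rw [norm_mul, norm_mul, norm_neg, Real.norm_eq_abs, Real.norm_eq_abs,
      Real.abs_exp, Real.norm_eq_abs, abs_of_nonneg (a := ‖z‖ ^ 2 / 2) (by positivity)]
    have h1 : -x ≤ |s| + 1 := by
      rw [mem_ball_iff_norm, Real.norm_eq_abs] at hx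
      have := neg_abs_le s
      have := (abs_lt.1 hx).1
      linarith
    have h2 : inner ℝ b z - x * ‖z‖ ^ 2 / 2 ≤ inner ℝ b z + (|s| + 1) * ‖z‖ ^ 2 / 2 := by
      have := mul_le_mul_of_nonneg_right h1 (show 0 ≤ ‖z‖ ^ 2 / 2 by positivity)
      linarith
    gcongr
  · have h1 : CC (fun z => |ψ z|) := ⟨h.1.abs, h.2.comp_left (g := fun x : ℝ => |x|) abs_zero⟩
    exact (h1.mul_right (by fun_prop)).integrable
  · refine Eventually.of_forall fun z x hx => ?_
    have h1 : HasDerivAt (fun x : ℝ => inner ℝ b z - x * ‖z‖ ^ 2 / 2) (-(‖z‖ ^ 2 / 2)) x := by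
      have := (((hasDerivAt_id x).mul_const (‖z‖ ^ 2)).div_const 2).const_sub (inner ℝ b z)
      simpa using this
    exact h1.exp.const_mul (ψ z)

lemma gauss_integrable {n : ℕ} {a : ℝ} (ha : 0 < a) :
    Integrable (fun b : EuclideanSpace ℝ (Fin n) => Real.exp (-a * ‖b‖ ^ 2)) := by
  by_contra hcon
  have h1 := GaussianFourier.integral_rexp_neg_mul_sq_norm (V := EuclideanSpace ℝ (Fin n)) ha
  rw [integral_undef hcon] at h1
  have : (0:ℝ) < (π / a) ^ (Module.finrank ℝ (EuclideanSpace ℝ (Fin n)) / 2 : ℝ) := by positivity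
  linarith

lemma dom_integrable {n : ℕ} {a : ℝ} (ha : 0 < a) (C R : ℝ) :
    Integrable (fun b : EuclideanSpace ℝ (Fin n) =>
      C * ((1 + ‖b‖ ^ 2) * Real.exp (R * ‖b‖) * Real.exp (-a * ‖b‖ ^ 2))) := by
  refine Integrable.const_mul ?_ C
  refine Integrable.mono' ((gauss_integrable (n := n) (half_pos ha)).const_mul
    (2 * Real.exp ((R + 1) ^ 2 / (2 * a)))) (Continuous.aestronglyMeasurable (by fun_prop)) ?_
  refine Eventually.of_forall fun b => ?_
  rw [Real.norm_eq_abs, abs_of_nonneg (by positivity)]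
  have h1 : 1 + ‖b‖ ^ 2 ≤ 2 * Real.exp ‖b‖ := by
    have := Real.quadratic_le_exp_of_nonneg (norm_nonneg b)
    nlinarith [norm_nonneg b]
  calc (1 + ‖b‖ ^ 2) * Real.exp (R * ‖b‖) * Real.exp (-a * ‖b‖ ^ 2)
      ≤ (2 * Real.exp ‖b‖) * Real.exp (R * ‖b‖) * Real.exp (-a * ‖b‖ ^ 2) := by gcongr
    _ = 2 * Real.exp (‖b‖ + R * ‖b‖ + -a * ‖b‖ ^ 2) := by
        rw [Real.exp_add, Real.exp_add]; ring
    _ ≤ 2 * Real.exp ((R + 1) ^ 2 / (2 * a) + -(a/2) * ‖b‖ ^ 2) := by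
        refine mul_le_mul_of_nonneg_left (Real.exp_le_exp.2 ?_) (by norm_num)
        have : (R + 1) ^ 2 / (2 * a) + -(a/2) * ‖b‖ ^ 2 - (‖b‖ + R * ‖b‖ + -a * ‖b‖ ^ 2)
          = (R + 1 - a * ‖b‖) ^ 2 / (2 * a) := by field_simp; ring
        have : 0 ≤ (R + 1 - a * ‖b‖) ^ 2 / (2 * a) := by positivity
        linarith
    _ = _ := by rw [Real.exp_add]; ring

lemma integral_line_zero {n : ℕ} {X X' : EuclideanSpace ℝ (Fin n) → ℝ} (j : Fin n)
    (hX : Integrable X) (hX' : Integrable X')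
    (h : ∀ b, HasDerivAt (fun r : ℝ => X (b + r • EuclideanSpace.single j 1)) (X' b) 0) :
    ∫ b, X' b = 0 := by
  have := integral_bilinear_hasLineDerivAt_right_eq_neg_left_of_integrable (μ := volume)
    (f := X) (f' := X') (g := fun _ => (1:ℝ)) (g' := fun _ => 0)
    (v := EuclideanSpace.single j 1) (B := ContinuousLinearMap.mul ℝ ℝ)
    (by simpa using hX') (by simp) (by simpa using hX) (fun b _ => h b)
    (fun b _ => by simpa [HasLineDerivAt] using hasDerivAt_const (0:ℝ) (1:ℝ))
  simpa using this

/-- admissible weight -/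
structure Wt {n : ℕ} (w : EuclideanSpace ℝ (Fin n) → ℝ) : Prop where
  cc : CC w
  nn : ∀ z, 0 ≤ w z
  ne : ∃ z, w z ≠ 0

lemma Wt.pos {n : ℕ} {w : EuclideanSpace ℝ (Fin n) → ℝ} (h : Wt w) (s : ℝ)
    (b : EuclideanSpace ℝ (Fin n)) : 0 < EE w s b := by
  obtain ⟨z, hz⟩ := h.ne
  have hc := h.cc.mul_right (φ := fun z => Real.exp (inner ℝ b z - s * ‖z‖ ^ 2 / 2)) (by fun_prop)
  refine Continuous.integral_pos_of_hasCompactSupport_nonneg_nonzero (x := z) hc.1 hc.2 ?_ ?_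
  · intro z
    exact mul_nonneg (h.nn z) (Real.exp_pos _).le
  · exact mul_ne_zero hz (Real.exp_pos _).ne'

/-- normalized moments -/
noncomputable def NN {n : ℕ} (w ψ : EuclideanSpace ℝ (Fin n) → ℝ) (s : ℝ)
    (b : EuclideanSpace ℝ (Fin n)) : ℝ := EE ψ s b / EE w s b

def BdF {n : ℕ} (g : ℝ → EuclideanSpace ℝ (Fin n) → ℝ) : Prop := ∃ K, ∀ s b, |g s b| ≤ K

lemma BdF.add {n : ℕ} {g h : ℝ → EuclideanSpace ℝ (Fin n) → ℝ} (hg : BdF g) (hh : BdF h) :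
    BdF (fun s b => g s b + h s b) := by
  obtain ⟨K, hK⟩ := hg
  obtain ⟨L, hL⟩ := hh
  exact ⟨K + L, fun s b => (abs_add_le _ _).trans (add_le_add (hK s b) (hL s b))⟩

lemma BdF.mul {n : ℕ} {g h : ℝ → EuclideanSpace ℝ (Fin n) → ℝ} (hg : BdF g) (hh : BdF h) :
    BdF (fun s b => g s b * h s b) := by
  obtain ⟨K, hK⟩ := hg
  obtain ⟨L, hL⟩ := hh
  refine ⟨K * L, fun s b => ?_⟩
  rw [abs_mul]
  exact mul_le_mul (hK s b) (hL s b) (abs_nonneg _) ((abs_nonneg _).trans (hK s b))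

lemma BdF.const {n : ℕ} (c : ℝ) : BdF (n := n) (fun _ _ => c) := ⟨|c|, fun _ _ => le_rfl⟩

lemma BdF.sub {n : ℕ} {g h : ℝ → EuclideanSpace ℝ (Fin n) → ℝ} (hg : BdF g) (hh : BdF h) :
    BdF (fun s b => g s b - h s b) := by
  simpa [sub_eq_add_neg] using hg.add ((BdF.const (-1)).mul hh)

lemma BdF.sq {n : ℕ} {g : ℝ → EuclideanSpace ℝ (Fin n) → ℝ} (hg : BdF g) :
    BdF (fun s b => g s b ^ 2) := by
  simpa [pow_two] using hg.mul hg

lemma BdF.sum {n : ℕ} {ι : Type} (S : Finset ι) {g : ι → ℝ → EuclideanSpace ℝ (Fin n) → ℝ}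
    (hg : ∀ i, BdF (g i)) : BdF (fun s b => ∑ i ∈ S, g i s b) := by
  choose K hK using hg
  exact ⟨∑ i ∈ S, K i, fun s b => (Finset.abs_sum_le_sum_abs _ _).trans
    (Finset.sum_le_sum fun i _ => hK i s b)⟩

lemma Wt.bd {n : ℕ} {w : EuclideanSpace ℝ (Fin n) → ℝ} (h : Wt w)
    (φ : EuclideanSpace ℝ (Fin n) → ℝ) (hφ : Continuous φ) :
    BdF (NN w (fun z => φ z * w z)) := by
  obtain ⟨K, hK⟩ := h.cc.2.isCompact.exists_bound_of_continuousOn hφ.continuousOn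
  refine ⟨K, fun s b => ?_⟩
  unfold NN
  rw [abs_div, abs_of_pos (h.pos s b), div_le_iff₀ (h.pos s b)]
  unfold EE
  rw [← integral_const_mul, ← Real.norm_eq_abs]
  refine norm_integral_le_of_norm_le ((h.cc.ee_integrable s b).const_mul K)
    (Eventually.of_forall fun z => ?_)
  rw [norm_mul, norm_mul, Real.norm_eq_abs (w z), abs_of_nonneg (h.nn z), Real.norm_eq_abs (rexp _),
    Real.abs_exp, mul_assoc]
  by_cases hz : w z = 0
  · simp [hz]
  · have := hK z (subset_tsupport _ hz)
    have := h.nn z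
    gcongr

lemma Wt.bd1 {n : ℕ} {w : EuclideanSpace ℝ (Fin n) → ℝ} (h : Wt w) (i : Fin n) :
    BdF (NN w (fun z => z i * w z)) := h.bd _ (by fun_prop)

lemma Wt.bd2 {n : ℕ} {w : EuclideanSpace ℝ (Fin n) → ℝ} (h : Wt w) (i j : Fin n) :
    BdF (NN w (fun z => z i * (z j * w z))) := by
  have := h.bd (fun z => z i * z j) (by fun_prop)
  simpa [mul_assoc] using this

lemma Wt.bd3 {n : ℕ} {w : EuclideanSpace ℝ (Fin n) → ℝ} (h : Wt w) (i j k : Fin n) :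
    BdF (NN w (fun z => z i * (z j * (z k * w z)))) := by
  have := h.bd (fun z => z i * z j * z k) (by fun_prop)
  simpa [mul_assoc] using this

lemma Wt.growth {n : ℕ} {w : EuclideanSpace ℝ (Fin n) → ℝ} (h : Wt w) :
    ∃ C R : ℝ, 0 ≤ C ∧ ∀ s b, 0 ≤ s → EE w s b ≤ C * Real.exp (R * ‖b‖) := by
  obtain ⟨R, hR⟩ := h.cc.2.isCompact.exists_bound_of_continuousOn continuous_id.continuousOn
  refine ⟨∫ z, w z, R, integral_nonneg h.nn, fun s b hs => ?_⟩
  unfold EE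
  rw [← integral_mul_const]
  refine integral_mono (h.cc.ee_integrable s b) (h.cc.integrable.mul_const _) fun z => ?_
  by_cases hz : w z = 0
  · simp [hz]
  · have h1 := hR z (subset_tsupport _ hz)
    refine mul_le_mul_of_nonneg_left (Real.exp_le_exp.2 ?_) (h.nn z)
    have h2 : inner ℝ b z ≤ ‖b‖ * ‖z‖ := real_inner_le_norm b z
    have h3 : ‖b‖ * ‖z‖ ≤ ‖b‖ * R := mul_le_mul_of_nonneg_left h1 (norm_nonneg b)
    have h4 : 0 ≤ s * ‖z‖ ^ 2 / 2 := by positivity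
    linarith

noncomputable def gam {n : ℕ} (s : ℝ) (b : EuclideanSpace ℝ (Fin n)) : ℝ :=
  s ^ (-(n : ℝ) / 2) * Real.exp (-‖b‖ ^ 2 / (2 * s))

lemma gam_pos {n : ℕ} {s : ℝ} (hs : 0 < s) (b : EuclideanSpace ℝ (Fin n)) : 0 < gam s b := by
  unfold gam; positivity

lemma gam_cont {n : ℕ} (s : ℝ) : Continuous (gam (n := n) s) := by
  unfold gam; fun_prop

lemma gam_line {n : ℕ} (s : ℝ) (b : EuclideanSpace ℝ (Fin n)) (j : Fin n) :
    HasDerivAt (fun r : ℝ => gam s (b + r • EuclideanSpace.single j 1))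
      (-(b j / s) * gam s b) 0 := by
  have h0 : ∀ r : ℝ, ‖b + r • EuclideanSpace.single j (1:ℝ)‖ ^ 2
      = ‖b‖ ^ 2 + 2 * r * b j + r ^ 2 := by
    intro r
    rw [norm_add_sq_real, inner_smul_right, norm_smul]
    simp [EuclideanSpace.inner_single_right]
    ring
  have h1 : HasDerivAt (fun r : ℝ => -(‖b‖ ^ 2 + 2 * r * b j + r ^ 2) / (2 * s))
      (-(b j / s)) 0 := by
    have h2 := (((((hasDerivAt_id (0:ℝ)).const_mul 2).mul_const (b j)).const_add (‖b‖ ^ 2)).add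
      ((hasDerivAt_id (0:ℝ)).pow 2)).neg.div_const (2 * s)
    convert! h2 using 1
    simp
    rw [neg_div, mul_div_mul_left _ _ two_ne_zero]
  have h3 := (h1.exp).const_mul (s ^ (-(n : ℝ) / 2))
  unfold gam
  simp only [h0]
  convert! h3 using 1
  simp
  ring

lemma gam_time {n : ℕ} {s : ℝ} (hs : 0 < s) (b : EuclideanSpace ℝ (Fin n)) :
    HasDerivAt (fun s : ℝ => gam s b)
      (1 / 2 * (‖b‖ ^ 2 / s ^ 2 - n / s) * gam s b) s := by
  unfold gam
  have h1 := Real.hasDerivAt_rpow_const (x := s) (p := -(n : ℝ) / 2) (Or.inl hs.ne')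
  have h2 : HasDerivAt (fun s : ℝ => -‖b‖ ^ 2 / (2 * s)) (‖b‖ ^ 2 / (2 * s ^ 2)) s := by
    have h3 := (hasDerivAt_const s (-‖b‖ ^ 2)).div ((hasDerivAt_id s).const_mul 2)
      (by simp [hs.ne'])
    convert! h3 using 1
    simp
    field_simp
  convert! h1.mul h2.exp using 1
  rw [Real.rpow_sub_one hs.ne']
  field_simp
  ring

lemma good_integrable {n : ℕ} {w : EuclideanSpace ℝ (Fin n) → ℝ} (h : Wt w) {s : ℝ} (hs : 0 < s)
    {g : EuclideanSpace ℝ (Fin n) → ℝ} (hg : Continuous g) {K : ℝ}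
    (hK : ∀ b, |g b| ≤ K * (1 + ‖b‖ ^ 2)) :
    Integrable (fun b => EE w s b * g b * gam s b) := by
  obtain ⟨C, R, hC, hZ⟩ := h.growth
  have hK0 : 0 ≤ K := by
    have := (abs_nonneg _).trans (hK 0)
    simpa using this
  have := EE_cont h.cc s
  have := gam_cont (n := n) s
  refine Integrable.mono' (dom_integrable (n := n) (a := 1 / (2 * s)) (by positivity)
    (C * K * s ^ (-(n : ℝ) / 2)) R) (Continuous.aestronglyMeasurable (by fun_prop)) ?_
  refine Eventually.of_forall fun b => ?_
  rw [norm_mul, norm_mul, Real.norm_eq_abs, Real.norm_eq_abs, Real.norm_eq_abs,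
    abs_of_pos (h.pos s b), abs_of_pos (gam_pos hs b)]
  calc EE w s b * |g b| * gam s b
      ≤ (C * Real.exp (R * ‖b‖)) * (K * (1 + ‖b‖ ^ 2)) * gam s b := by
        have := (gam_pos hs b).le
        have := hZ s b hs.le
        have := hK b
        gcongr
    _ = _ := by
        unfold gam
        rw [show -‖b‖ ^ 2 / (2 * s) = -(1 / (2 * s)) * ‖b‖ ^ 2 by ring]
        ring

lemma gam_le {n : ℕ} {s₀ s : ℝ} (hs₀ : 0 < s₀) (h1 : s₀ / 2 < s) (h2 : s < 2 * s₀)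
    (b : EuclideanSpace ℝ (Fin n)) :
    gam s b ≤ (s₀ / 2) ^ (-(n : ℝ) / 2) * Real.exp (-(1 / (4 * s₀)) * ‖b‖ ^ 2) := by
  unfold gam
  have hs : 0 < s := by linarith
  have e1 : s ^ (-(n : ℝ) / 2) ≤ (s₀ / 2) ^ (-(n : ℝ) / 2) := by
    refine Real.rpow_le_rpow_of_nonpos (by positivity) h1.le ?_
    have : (0:ℝ) ≤ n := Nat.cast_nonneg n
    linarith
  have e2 : -‖b‖ ^ 2 / (2 * s) ≤ -(1 / (4 * s₀)) * ‖b‖ ^ 2 := by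
    have : (1 / (4 * s₀)) ≤ 1 / (2 * s) := by
      apply one_div_le_one_div_of_le <;> linarith
    have := mul_le_mul_of_nonneg_right this (sq_nonneg ‖b‖)
    have e3 : -‖b‖ ^ 2 / (2 * s) = -(1 / (2 * s) * ‖b‖ ^ 2) := by ring
    rw [e3]; linarith
  gcongr

lemma fjj_calc {p Z M Q c g : ℝ → ℝ} {T S s g' : ℝ} (hs : s ≠ 0) (hZ : Z 0 ≠ 0)
    (hp : HasDerivAt p (M 0) 0) (hz : HasDerivAt Z (Q 0) 0) (hM : HasDerivAt M T 0)
    (hQ : HasDerivAt Q S 0) (hc : HasDerivAt c 1 0) (hg : HasDerivAt g g' 0)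
    (hg' : g' = -(c 0 / s) * g 0) :
    HasDerivAt (fun r => Z r * (-((p r / Z r) ^ 2 * c r / s)
        - (2 * (p r / Z r) * (M r / Z r) - (p r / Z r) ^ 2 * (Q r / Z r))) * g r)
      (Z 0 * ((p 0 / Z 0) ^ 2 * c 0 ^ 2 / s ^ 2 - (p 0 / Z 0) ^ 2 / s
        - (2 * (M 0 / Z 0) ^ 2 + 2 * (p 0 / Z 0) * (T / Z 0)
            - 4 * (p 0 / Z 0) * (M 0 / Z 0) * (Q 0 / Z 0) - (p 0 / Z 0) ^ 2 * (S / Z 0)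
            + 2 * (p 0 / Z 0) ^ 2 * (Q 0 / Z 0) ^ 2)) * g 0) 0 := by
  have m := hp.div hz hZ
  have mu := hM.div hz hZ
  have q := hQ.div hz hZ
  have A := (((m.pow 2).mul hc).div_const s).neg
  have B := ((m.const_mul 2).mul mu).sub ((m.pow 2).mul q)
  have D := (hz.mul (A.sub B)).mul hg
  convert! D using 1
  subst hg'
  simp only [Pi.div_apply, Pi.pow_apply, Pi.mul_apply, Pi.sub_apply, Pi.neg_apply,
    Nat.reduceSub, pow_one, Nat.cast_ofNat]
  field_simp
  ring

lemma time_calc {p Z g : ℝ → ℝ} {p' Z' g' s : ℝ} (hZ : Z s ≠ 0)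
    (hp : HasDerivAt p p' s) (hz : HasDerivAt Z Z' s) (hg : HasDerivAt g (g' * g s) s) :
    HasDerivAt (fun r => Z r * (p r / Z r) ^ 2 * g r)
      (Z s * (2 * (p s / Z s) * (p' / Z s) - (p s / Z s) ^ 2 * (Z' / Z s)
        + (p s / Z s) ^ 2 * g') * g s) s := by
  have m := hp.div hz hZ
  have D := (hz.mul (m.pow 2)).mul hg
  convert! D using 1
  simp only [Pi.div_apply, Pi.pow_apply, Pi.mul_apply, Nat.reduceSub, pow_one, Nat.cast_ofNat]
  field_simp
  ring

/-- the divergence-part of the integrand -/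
noncomputable def Xd {n : ℕ} (w : EuclideanSpace ℝ (Fin n) → ℝ) (i j : Fin n) (s : ℝ)
    (b : EuclideanSpace ℝ (Fin n)) : ℝ :=
  (NN w (fun z => z i * w z) s b) ^ 2 * b j ^ 2 / s ^ 2 - (NN w (fun z => z i * w z) s b) ^ 2 / s
    - (2 * (NN w (fun z => z j * (z i * w z)) s b) ^ 2
      + 2 * NN w (fun z => z i * w z) s b * NN w (fun z => z j * (z j * (z i * w z))) s b
      - 4 * NN w (fun z => z i * w z) s b * NN w (fun z => z j * (z i * w z)) s b
          * NN w (fun z => z j * w z) s b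
      - (NN w (fun z => z i * w z) s b) ^ 2 * NN w (fun z => z j * (z j * w z)) s b
      + 2 * (NN w (fun z => z i * w z) s b) ^ 2 * (NN w (fun z => z j * w z) s b) ^ 2)

noncomputable def Cv {n : ℕ} (w : EuclideanSpace ℝ (Fin n) → ℝ) (j i : Fin n) (s : ℝ)
    (b : EuclideanSpace ℝ (Fin n)) : ℝ :=
  NN w (fun z => z j * (z i * w z)) s b
    - NN w (fun z => z j * w z) s b * NN w (fun z => z i * w z) s b

noncomputable def Fd {n : ℕ} (w : EuclideanSpace ℝ (Fin n) → ℝ) (i : Fin n) (s : ℝ)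
    (b : EuclideanSpace ℝ (Fin n)) : ℝ :=
  2 * NN w (fun z => z i * w z) s b
      * (-(1/2) * ∑ j, NN w (fun z => z j * (z j * (z i * w z))) s b)
    - (NN w (fun z => z i * w z) s b) ^ 2 * (-(1/2) * ∑ j, NN w (fun z => z j * (z j * w z)) s b)
    + (NN w (fun z => z i * w z) s b) ^ 2 * (1 / 2 * (‖b‖ ^ 2 / s ^ 2 - n / s))

lemma Fd_eq {n : ℕ} (w : EuclideanSpace ℝ (Fin n) → ℝ) (i : Fin n) (s : ℝ)
    (b : EuclideanSpace ℝ (Fin n)) :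
    Fd w i s b = ∑ j, (Cv w j i s b) ^ 2 + 1 / 2 * ∑ j, Xd w i j s b := by
  unfold Fd
  have h1 : ‖b‖ ^ 2 / s ^ 2 - n / s = ∑ j : Fin n, (b j ^ 2 / s ^ 2 - 1 / s) := by
    rw [EuclideanSpace.real_norm_sq_eq, Finset.sum_sub_distrib, Finset.sum_div]
    simp
    ring
  rw [h1]
  simp only [Finset.mul_sum]
  rw [← Finset.sum_sub_distrib, ← Finset.sum_add_distrib, ← Finset.sum_add_distrib]
  refine Finset.sum_congr rfl fun j _ => ?_
  unfold Cv Xd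
  ring

lemma NN_cont {n : ℕ} {w ψ : EuclideanSpace ℝ (Fin n) → ℝ} (h : Wt w) (hψ : CC ψ) (s : ℝ) :
    Continuous (NN w ψ s) :=
  (EE_cont hψ s).div (EE_cont h.cc s) fun b => (h.pos s b).ne'

lemma coord_sq_le {n : ℕ} (b : EuclideanSpace ℝ (Fin n)) (j : Fin n) : b j ^ 2 ≤ ‖b‖ ^ 2 := by
  rw [EuclideanSpace.real_norm_sq_eq]
  exact Finset.single_le_sum (f := fun j => b j ^ 2) (fun _ _ => sq_nonneg _) (Finset.mem_univ j)

lemma Xd_integral {n : ℕ} {w : EuclideanSpace ℝ (Fin n) → ℝ} (h : Wt w) (i j : Fin n) {s : ℝ}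
    (hs : 0 < s) :
    Integrable (fun b => EE w s b * Xd w i j s b * gam s b) ∧
    ∫ b, EE w s b * Xd w i j s b * gam s b = 0 := by
  have c1 := NN_cont h (h.cc.coord i) s
  have c2 := NN_cont h (h.cc.coord j) s
  have c3 := NN_cont h ((h.cc.coord i).coord j) s
  have c4 := NN_cont h ((h.cc.coord j).coord j) s
  have c5 := NN_cont h (((h.cc.coord i).coord j).coord j) s
  obtain ⟨K1, hK1⟩ := (h.bd1 i).sq
  obtain ⟨K2, hK2⟩ : BdF (fun s b => 2 * NN w (fun z => z i * w z) s b
      * NN w (fun z => z j * (z i * w z)) s b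
      - (NN w (fun z => z i * w z) s b) ^ 2 * NN w (fun z => z j * w z) s b) :=
    (((BdF.const 2).mul (h.bd1 i)).mul (h.bd2 j i)).sub ((h.bd1 i).sq.mul (h.bd1 j))
  obtain ⟨K3, hK3⟩ : BdF (fun s b => 2 * (NN w (fun z => z j * (z i * w z)) s b) ^ 2
      + 2 * NN w (fun z => z i * w z) s b * NN w (fun z => z j * (z j * (z i * w z))) s b
      - 4 * NN w (fun z => z i * w z) s b * NN w (fun z => z j * (z i * w z)) s b
          * NN w (fun z => z j * w z) s b
      - (NN w (fun z => z i * w z) s b) ^ 2 * NN w (fun z => z j * (z j * w z)) s b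
      + 2 * (NN w (fun z => z i * w z) s b) ^ 2 * (NN w (fun z => z j * w z) s b) ^ 2) :=
    (((((BdF.const 2).mul (h.bd2 j i).sq).add
      (((BdF.const 2).mul (h.bd1 i)).mul (h.bd3 j j i))).sub
      ((((BdF.const 4).mul (h.bd1 i)).mul (h.bd2 j i)).mul (h.bd1 j))).sub
      ((h.bd1 i).sq.mul (h.bd2 j j))).add
      (((BdF.const 2).mul (h.bd1 i).sq).mul (h.bd1 j).sq)
  have hX' : Integrable (fun b => EE w s b * Xd w i j s b * gam s b) := by
    refine good_integrable h hs (K := K1 / s ^ 2 + K1 / s + K3) ?_ fun b => ?_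
    · unfold Xd
      fun_prop
    · have e1 := hK1 s b
      have e3 := hK3 s b
      have hK10 := (abs_nonneg _).trans e1
      have hK30 := (abs_nonneg _).trans e3
      unfold Xd
      refine (abs_sub _ _).trans ?_
      have a1 : |(NN w (fun z => z i * w z) s b) ^ 2 * b j ^ 2 / s ^ 2| ≤ K1 / s ^ 2 * ‖b‖ ^ 2 := by
        rw [abs_div, abs_mul, abs_of_nonneg (sq_nonneg (b j)), abs_of_pos (pow_pos hs 2)]
        have := coord_sq_le b j
        calc _ ≤ K1 * ‖b‖ ^ 2 / s ^ 2 := by gcongr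
          _ = _ := by ring
      have a2 : |(NN w (fun z => z i * w z) s b) ^ 2 / s| ≤ K1 / s := by
        rw [abs_div, abs_of_pos hs]
        gcongr
      have a3 := (abs_sub ((NN w (fun z => z i * w z) s b) ^ 2 * b j ^ 2 / s ^ 2)
        ((NN w (fun z => z i * w z) s b) ^ 2 / s))
      have a4 : 0 ≤ K1 / s ^ 2 := by positivity
      have a5 : 0 ≤ K1 / s * ‖b‖ ^ 2 := by positivity
      have a6 : 0 ≤ K3 * ‖b‖ ^ 2 := by positivity
      linarith
  refine ⟨hX', ?_⟩
  refine integral_line_zero j (X := fun b => EE w s b * (-((NN w (fun z => z i * w z) s b) ^ 2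
    * b j / s) - (2 * NN w (fun z => z i * w z) s b
      * NN w (fun z => z j * (z i * w z)) s b
      - (NN w (fun z => z i * w z) s b) ^ 2 * NN w (fun z => z j * w z) s b)) * gam s b) ?_ hX' ?_
  · refine good_integrable h hs (K := K1 / s + K2) ?_ fun b => ?_
    · fun_prop
    · have e1 := hK1 s b
      have e2 := hK2 s b
      have hK10 := (abs_nonneg _).trans e1
      have hK20 := (abs_nonneg _).trans e2
      refine (abs_sub _ _).trans ?_
      have hb : |b j| ≤ 1 + ‖b‖ ^ 2 := by
        have := coord_sq_le b j
        have := sq_abs (b j)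
        nlinarith [sq_nonneg (|b j| - 1)]
      have a1 : |-((NN w (fun z => z i * w z) s b) ^ 2 * b j / s)| ≤ K1 / s * (1 + ‖b‖ ^ 2) := by
        rw [abs_neg, abs_div, abs_mul, abs_of_pos hs]
        calc _ ≤ K1 * (1 + ‖b‖ ^ 2) / s := by gcongr
          _ = _ := by ring
      have a6 : 0 ≤ K2 * ‖b‖ ^ 2 := by positivity
      linarith
  · intro b
    have hc : HasDerivAt (fun r : ℝ => (b + r • EuclideanSpace.single j (1:ℝ)) j) 1 0 := by
      have := (hasDerivAt_id (0:ℝ)).const_add (b j)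
      refine this.congr_of_eventuallyEq (Eventually.of_forall fun r => ?_)
      simp
    have hz0 : EE w s (b + (0:ℝ) • EuclideanSpace.single j 1) ≠ 0 := (h.pos s _).ne'
    have hb0 : b + (0:ℝ) • EuclideanSpace.single j (1:ℝ) = b := by simp
    have := fjj_calc (s := s)
      (p := fun r => EE (fun z => z i * w z) s (b + r • EuclideanSpace.single j 1))
      (Z := fun r => EE w s (b + r • EuclideanSpace.single j 1))
      (M := fun r => EE (fun z => z j * (z i * w z)) s (b + r • EuclideanSpace.single j 1))
      (Q := fun r => EE (fun z => z j * w z) s (b + r • EuclideanSpace.single j 1))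
      hs.ne' hz0 (by simpa only [hb0] using EE_line (h.cc.coord i) s b j)
      (by simpa only [hb0] using EE_line h.cc s b j)
      (EE_line ((h.cc.coord i).coord j) s b j)
      (EE_line (h.cc.coord j) s b j) hc (gam_line s b j) (by simp only [hb0])
    simp only [hb0] at this
    exact this

lemma Cv_bd {n : ℕ} {w : EuclideanSpace ℝ (Fin n) → ℝ} (h : Wt w) (i j : Fin n) :
    BdF (Cv w i j) := (h.bd2 i j).sub ((h.bd1 i).mul (h.bd1 j))

lemma Cv_cont {n : ℕ} {w : EuclideanSpace ℝ (Fin n) → ℝ} (h : Wt w) (i j : Fin n) (s : ℝ) :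
    Continuous (Cv w i j s) := by
  have c1 := NN_cont h (h.cc.coord i) s
  have c2 := NN_cont h (h.cc.coord j) s
  have c3 := NN_cont h ((h.cc.coord j).coord i) s
  unfold Cv
  fun_prop

lemma bd_integrable {n : ℕ} {w : EuclideanSpace ℝ (Fin n) → ℝ} (h : Wt w) {s : ℝ} (hs : 0 < s)
    {g : ℝ → EuclideanSpace ℝ (Fin n) → ℝ} (hg : Continuous (g s)) (hb : BdF g) :
    Integrable (fun b => EE w s b * g s b * gam s b) := by
  obtain ⟨K, hK⟩ := hb
  refine good_integrable h hs hg (K := K) fun b => ?_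
  have h1 := hK s b
  have h2 : 0 ≤ K * ‖b‖ ^ 2 := mul_nonneg ((abs_nonneg _).trans h1) (sq_nonneg _)
  linarith

lemma G_deriv {n : ℕ} {w : EuclideanSpace ℝ (Fin n) → ℝ} (h : Wt w) (i : Fin n) {s₀ : ℝ}
    (hs : 0 < s₀) :
    HasDerivAt (fun s => ∫ b, EE w s b * (NN w (fun z => z i * w z) s b) ^ 2 * gam s b)
      (∫ b, EE w s₀ b * (∑ j, (Cv w j i s₀ b) ^ 2) * gam s₀ b) s₀ := by
  have key : ∫ b, EE w s₀ b * (∑ j, (Cv w j i s₀ b) ^ 2) * gam s₀ b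
      = ∫ b, EE w s₀ b * Fd w i s₀ b * gam s₀ b := by
    have e : ∀ b, EE w s₀ b * Fd w i s₀ b * gam s₀ b
        = EE w s₀ b * (∑ j, (Cv w j i s₀ b) ^ 2) * gam s₀ b
          + 1 / 2 * ∑ j, EE w s₀ b * Xd w i j s₀ b * gam s₀ b := by
      intro b
      rw [Fd_eq, ← Finset.sum_mul, ← Finset.mul_sum]
      ring
    simp only [e]
    rw [integral_add, integral_const_mul, integral_finsetSum]
    · simp [(Xd_integral h i _ hs).2]
    · exact fun j _ => (Xd_integral h i j hs).1
    · refine bd_integrable h hs (g := fun s b => ∑ j, (Cv w j i s b) ^ 2) ?_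
        (BdF.sum _ fun j => (Cv_bd h j i).sq)
      exact continuous_finsetSum _ fun j _ => (Cv_cont h j i s₀).pow 2
    · exact (integrable_finsetSum _ fun j _ => (Xd_integral h i j hs).1).const_mul _
  rw [key]
  obtain ⟨K1, hK1⟩ := (h.bd1 i).sq
  obtain ⟨K2, hK2⟩ : BdF (fun s b => 2 * NN w (fun z => z i * w z) s b
      * (-(1/2) * ∑ j, NN w (fun z => z j * (z j * (z i * w z))) s b)
    - (NN w (fun z => z i * w z) s b) ^ 2
      * (-(1/2) * ∑ j, NN w (fun z => z j * (z j * w z)) s b)) :=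
    (((BdF.const 2).mul (h.bd1 i)).mul ((BdF.const _).mul (BdF.sum _ fun j => h.bd3 j j i))).sub
      ((h.bd1 i).sq.mul ((BdF.const _).mul (BdF.sum _ fun j => h.bd2 j j)))
  obtain ⟨C, R, hC, hZ⟩ := h.growth
  have hK10 := (abs_nonneg _).trans (hK1 0 0)
  have hK20 := (abs_nonneg _).trans (hK2 0 0)
  have c0 : ∀ s, Continuous (EE w s) := EE_cont h.cc
  have c1 := fun s => NN_cont h (h.cc.coord i) s
  have c2 : ∀ s, Continuous fun b => ∑ j, NN w (fun z => z j * (z j * (z i * w z))) s b :=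
    fun s => continuous_finsetSum _ fun j _ => NN_cont h (((h.cc.coord i).coord j).coord j) s
  have c3 : ∀ s, Continuous fun b => ∑ j, NN w (fun z => z j * (z j * w z)) s b :=
    fun s => continuous_finsetSum _ fun j _ => NN_cont h ((h.cc.coord j).coord j) s
  have c4 := fun s => gam_cont (n := n) s
  refine (hasDerivAt_integral_of_dominated_loc_of_deriv_le (s := Ioo (s₀ / 2) (2 * s₀))
    (bound := fun b => (C * (K2 + K1 * (4 / s₀ ^ 2 + 2 * n / s₀)) * (s₀ / 2) ^ (-(n : ℝ) / 2))
      * ((1 + ‖b‖ ^ 2) * Real.exp (R * ‖b‖) * Real.exp (-(1 / (4 * s₀)) * ‖b‖ ^ 2)))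
    (F' := fun s b => EE w s b * Fd w i s b * gam s b)
    (Ioo_mem_nhds (by linarith) (by linarith)) ?_ ?_ ?_ ?_ ?_ ?_).2
  · refine Eventually.of_forall fun s => Continuous.aestronglyMeasurable ?_
    have := c0 s
    have := c1 s
    have := c4 s
    fun_prop
  · exact bd_integrable h hs (g := fun s b => (NN w (fun z => z i * w z) s b) ^ 2)
      ((c1 s₀).pow 2) (h.bd1 i).sq
  · refine Continuous.aestronglyMeasurable ?_
    have := c0 s₀
    have := c1 s₀
    have := c2 s₀
    have := c3 s₀
    have := c4 s₀
    unfold Fd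
    fun_prop
  · refine Eventually.of_forall fun b s hsm => ?_
    have hs0 : 0 < s := by linarith [hsm.1]
    rw [norm_mul, norm_mul, Real.norm_eq_abs, Real.norm_eq_abs, Real.norm_eq_abs,
      abs_of_pos (h.pos s b), abs_of_pos (gam_pos hs0 b)]
    have hF : |Fd w i s b| ≤ (K2 + K1 * (4 / s₀ ^ 2 + 2 * n / s₀)) * (1 + ‖b‖ ^ 2) := by
      unfold Fd
      refine (abs_add_le _ _).trans ?_
      have e2 := hK2 s b
      have e1 := hK1 s b
      have e3 : |1 / 2 * (‖b‖ ^ 2 / s ^ 2 - n / s)| ≤ (4 / s₀ ^ 2 + 2 * n / s₀) * (1 + ‖b‖ ^ 2) := by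
        rw [abs_mul]
        have g1 : |‖b‖ ^ 2 / s ^ 2 - n / s| ≤ ‖b‖ ^ 2 / s ^ 2 + n / s := by
          refine (abs_sub _ _).trans ?_
          rw [abs_of_nonneg (by positivity), abs_of_nonneg (by positivity)]
        have g2 : ‖b‖ ^ 2 / s ^ 2 ≤ ‖b‖ ^ 2 / (s₀ / 2) ^ 2 := by
          have := hsm.1.le
          gcongr
        have g3 : (n : ℝ) / s ≤ n / (s₀ / 2) := by
          have := hsm.1.le
          gcongr
        have g4 : ‖b‖ ^ 2 / (s₀ / 2) ^ 2 = 4 / s₀ ^ 2 * ‖b‖ ^ 2 := by field_simp; ring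
        have g5 : (n : ℝ) / (s₀ / 2) = 2 * n / s₀ := by field_simp
        have g6 : 0 ≤ 2 * n / s₀ * ‖b‖ ^ 2 := by positivity
        have g7 : 0 ≤ 4 / s₀ ^ 2 := by positivity
        have g8 : 0 ≤ 4 / s₀ ^ 2 * ‖b‖ ^ 2 := by positivity
        have g9 : 0 ≤ 2 * n / s₀ := by positivity
        have g10 : |(1:ℝ) / 2| = 1 / 2 := by norm_num
        rw [g10]
        linarith
      have e4 := mul_le_mul e1 e3 (abs_nonneg _) hK10
      rw [← abs_mul] at e4
      have e5 : 0 ≤ K2 * ‖b‖ ^ 2 := by positivity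
      linarith
    have hg := gam_le hs hsm.1 hsm.2 b
    have hz := hZ s b hs0.le
    have hZ0 := (h.pos s b).le
    have hg0 := (gam_pos hs0 b).le
    calc EE w s b * |Fd w i s b| * gam s b
        ≤ (C * Real.exp (R * ‖b‖)) * ((K2 + K1 * (4 / s₀ ^ 2 + 2 * n / s₀)) * (1 + ‖b‖ ^ 2))
          * ((s₀ / 2) ^ (-(n : ℝ) / 2) * Real.exp (-(1 / (4 * s₀)) * ‖b‖ ^ 2)) := by gcongr
      _ = _ := by ring
  · exact dom_integrable (by positivity) _ _
  · refine Eventually.of_forall fun b s hsm => ?_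
    have hs0 : 0 < s := by linarith [hsm.1]
    have := time_calc (h.pos s b).ne' (EE_time (h.cc.coord i) s b) (EE_time h.cc s b)
      (gam_time hs0 b)
    convert! this using 1
    unfold Fd NN
    simp only [mul_div_assoc, Finset.sum_div]

lemma gam_shift {n : ℕ} {s : ℝ} (hs : 0 < s) (b z : EuclideanSpace ℝ (Fin n)) :
    Real.exp (inner ℝ b z - s * ‖z‖ ^ 2 / 2) * gam s b = gam s (b - s • z) := by
  unfold gam
  rw [norm_sub_sq_real, inner_smul_right, norm_smul, Real.norm_eq_abs, abs_of_pos hs,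
    mul_left_comm, ← Real.exp_add]
  congr 2
  field_simp
  ring

lemma gam_integrable {n : ℕ} {s : ℝ} (hs : 0 < s) : Integrable (gam (n := n) s) := by
  have := (gauss_integrable (n := n) (a := 1 / (2 * s)) (by positivity)).const_mul
    (s ^ (-(n : ℝ) / 2))
  refine this.congr (Eventually.of_forall fun b => ?_)
  simp only [gam]
  congr 2
  ring

lemma gam_integral {n : ℕ} {s : ℝ} (hs : 0 < s) :
    ∫ b, gam (n := n) s b = (2 * π) ^ ((n : ℝ) / 2) := by
  have h1 := GaussianFourier.integral_rexp_neg_mul_sq_norm (V := EuclideanSpace ℝ (Fin n))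
    (b := 1 / (2 * s)) (by positivity)
  unfold gam
  rw [integral_const_mul]
  have e : ∀ b : EuclideanSpace ℝ (Fin n), -‖b‖ ^ 2 / (2 * s) = -(1 / (2 * s)) * ‖b‖ ^ 2 := by
    intro b; ring
  simp only [e]
  rw [h1, finrank_euclideanSpace_fin, show π / (1 / (2 * s)) = s * (2 * π) by field_simp,
    Real.mul_rpow hs.le (by positivity), ← mul_assoc, ← Real.rpow_add hs, neg_div]
  simp

lemma tower {n : ℕ} {ψ : EuclideanSpace ℝ (Fin n) → ℝ} (h : CC ψ) {s : ℝ} (hs : 0 < s) :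
    Integrable (fun b => EE ψ s b * gam s b) ∧
    ∫ b, EE ψ s b * gam s b = (2 * π) ^ ((n : ℝ) / 2) * EE ψ 0 0 := by
  have hint : Integrable (fun q : EuclideanSpace ℝ (Fin n) × EuclideanSpace ℝ (Fin n) =>
      ψ q.2 * gam s (q.1 - s • q.2)) (volume.prod volume) := by
    have hc := h.1
    have hg := gam_cont (n := n) s
    rw [integrable_prod_iff' (Continuous.aestronglyMeasurable (by fun_prop))]
    constructor
    · refine Eventually.of_forall fun z => ?_
      exact ((gam_integrable hs).comp_sub_right (s • z)).const_mul (ψ z)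
    · have : ∀ z : EuclideanSpace ℝ (Fin n), ∫ b, ‖ψ z * gam s (b - s • z)‖
          = ‖ψ z‖ * (2 * π) ^ ((n : ℝ) / 2) := by
        intro z
        simp only [norm_mul]
        rw [integral_const_mul]
        congr 1
        rw [← gam_integral hs, ← integral_sub_right_eq_self (gam s) (s • z)]
        congr 1
        ext b
        exact abs_of_pos (gam_pos hs _)
      simp only [this]
      exact h.integrable.norm.mul_const _
  have e : ∀ b, EE ψ s b * gam s b = ∫ z, ψ z * gam s (b - s • z) := by
    intro b
    unfold EE
    rw [← integral_mul_const]
    congr 1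
    ext z
    rw [mul_assoc, gam_shift hs]
  simp only [e]
  refine ⟨hint.integral_prod_left, ?_⟩
  rw [integral_integral_swap hint]
  simp only [integral_const_mul]
  have : ∀ z : EuclideanSpace ℝ (Fin n), ∫ b, gam s (b - s • z) = (2 * π) ^ ((n : ℝ) / 2) := by
    intro z
    rw [integral_sub_right_eq_self, gam_integral hs]
  simp only [this]
  rw [integral_mul_const, mul_comm]
  simp [EE]

lemma Cv_nonneg {n : ℕ} {w : EuclideanSpace ℝ (Fin n) → ℝ} (h : Wt w) (i : Fin n) (s : ℝ)
    (b : EuclideanSpace ℝ (Fin n)) : 0 ≤ Cv w i i s b := by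
  have hZ := h.pos s b
  have h1 : ∀ m : ℝ, 0 ≤ EE (fun z => z i * (z i * w z)) s b
      - 2 * m * EE (fun z => z i * w z) s b + m ^ 2 * EE w s b := by
    intro m
    have h2 : 0 ≤ ∫ z, (z i - m) ^ 2 * (w z * Real.exp (inner ℝ b z - s * ‖z‖ ^ 2 / 2)) :=
      integral_nonneg fun z => mul_nonneg (sq_nonneg _) (mul_nonneg (h.nn z) (Real.exp_pos _).le)
    unfold EE
    rw [← integral_const_mul, ← integral_const_mul, ← integral_sub, ← integral_add]
    · convert! h2 using 2
      ext z
      ring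
    · exact (((h.cc.coord i).coord i).ee_integrable s b).sub
        (((h.cc.coord i).ee_integrable s b).const_mul _)
    · exact (h.cc.ee_integrable s b).const_mul _
    · exact ((h.cc.coord i).coord i).ee_integrable s b
    · exact ((h.cc.coord i).ee_integrable s b).const_mul _
  have h3 := h1 (EE (fun z => z i * w z) s b / EE w s b)
  unfold Cv NN
  have h4 : EE (fun z => z i * (z i * w z)) s b / EE w s b
      - EE (fun z => z i * w z) s b / EE w s b * (EE (fun z => z i * w z) s b / EE w s b)
      = (EE (fun z => z i * (z i * w z)) s b
      - 2 * (EE (fun z => z i * w z) s b / EE w s b) * EE (fun z => z i * w z) s b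
        + (EE (fun z => z i * w z) s b / EE w s b) ^ 2 * EE w s b) / EE w s b := by
    field_simp
    ring
  rw [h4]
  positivity

lemma G_le {n : ℕ} {w : EuclideanSpace ℝ (Fin n) → ℝ} (h : Wt w) (i : Fin n) {s : ℝ}
    (hs : 0 < s) :
    ∫ b, EE w s b * (NN w (fun z => z i * w z) s b) ^ 2 * gam s b
      ≤ (2 * π) ^ ((n : ℝ) / 2) * EE (fun z => z i * (z i * w z)) 0 0 := by
  obtain ⟨t1, t2⟩ := tower ((h.cc.coord i).coord i) hs
  rw [← t2]
  refine integral_mono (bd_integrable h hs (g := fun s b => (NN w (fun z => z i * w z) s b) ^ 2)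
      ((NN_cont h (h.cc.coord i) s).pow 2) (h.bd1 i).sq) t1 fun b => ?_
  refine mul_le_mul_of_nonneg_right ?_ (gam_pos hs b).le
  have h1 := Cv_nonneg h i s b
  have h2 := h.pos s b
  have h3 : EE (fun z => z i * (z i * w z)) s b = EE w s b * NN w (fun z => z i * (z i * w z)) s b := by
    unfold NN; field_simp
  rw [h3]
  refine mul_le_mul_of_nonneg_left ?_ h2.le
  unfold Cv at h1
  nlinarith

lemma le_G {n : ℕ} {w : EuclideanSpace ℝ (Fin n) → ℝ} (h : Wt w) (i : Fin n) {s : ℝ}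
    (hs : 0 < s) :
    (2 * π) ^ ((n : ℝ) / 2) * (EE w 0 0 * (NN w (fun z => z i * w z) 0 0) ^ 2)
      ≤ ∫ b, EE w s b * (NN w (fun z => z i * w z) s b) ^ 2 * gam s b := by
  obtain ⟨t1, t2⟩ := tower (h.cc.coord i) hs
  obtain ⟨t3, t4⟩ := tower h.cc hs
  set c := NN w (fun z => z i * w z) 0 0 with hc
  have h0 : EE (fun z => z i * w z) 0 0 = EE w 0 0 * c := by
    have := h.pos 0 0
    rw [hc]; unfold NN; field_simp
  have e : (2 * π) ^ ((n : ℝ) / 2) * (EE w 0 0 * c ^ 2)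
      = ∫ b, (2 * c * (EE (fun z => z i * w z) s b * gam s b) - c ^ 2 * (EE w s b * gam s b)) := by
    rw [integral_sub (t1.const_mul _) (t3.const_mul _), integral_const_mul, integral_const_mul,
      t2, t4, h0]
    ring
  rw [e]
  refine integral_mono ((t1.const_mul _).sub (t3.const_mul _))
    (bd_integrable h hs (g := fun s b => (NN w (fun z => z i * w z) s b) ^ 2)
      ((NN_cont h (h.cc.coord i) s).pow 2) (h.bd1 i).sq) fun b => ?_
  have h2 := h.pos s b
  have h3 : EE (fun z => z i * w z) s b = EE w s b * NN w (fun z => z i * w z) s b := by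
    unfold NN; field_simp
  have h4 := mul_nonneg (mul_nonneg h2.le (gam_pos hs b).le)
    (sq_nonneg (NN w (fun z => z i * w z) s b - c))
  simp only [h3]
  nlinarith

lemma int_le {H g : ℝ → ℝ} {T L : ℝ} (hT : 0 < T) (hd : ∀ t ∈ Ioo 0 T, HasDerivAt H (g t) t)
    (hL : ∀ t ∈ Ioo 0 T, ∀ t' ∈ Ioo 0 T, H t - H t' ≤ L) :
    ∫ t in (0:ℝ)..T, g t ≤ L := by
  have hL0 : 0 ≤ L := by
    have := hL (T/2) ⟨by linarith, by linarith⟩ (T/2) ⟨by linarith, by linarith⟩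
    linarith
  by_cases hI : IntervalIntegrable g volume 0 T
  swap
  · rw [intervalIntegral.integral_undef hI]; exact hL0
  rw [intervalIntegral.integral_of_le hT.le, integral_Ioc_eq_integral_Ioo]
  have hI' : IntegrableOn g (Ioo 0 T) := by
    rw [← integrableOn_Ioc_iff_integrableOn_Ioo]
    exact (intervalIntegrable_iff_integrableOn_Ioc_of_le hT.le).1 hI
  have ha : Tendsto (fun k : ℕ => T * (1 / ((k:ℝ) + 1)) / 2) atTop (𝓝 0) := by
    have := (tendsto_one_div_add_atTop_nhds_zero_nat (𝕜 := ℝ)).const_mul T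
    simpa using this.div_const 2
  have hb : Tendsto (fun k : ℕ => T - T * (1 / ((k:ℝ) + 1)) / 2) atTop (𝓝 T) := by
    simpa using ha.const_sub T
  have cov := aecover_Ioo_of_Ioc (μ := (volume : Measure ℝ)) ha hb
  have lim := cov.integral_tendsto_of_countably_generated hI'
  refine le_of_tendsto' lim fun k => ?_
  have hk : 0 < 1 / ((k:ℝ) + 1) ∧ 1 / ((k:ℝ) + 1) ≤ 1 := by
    constructor
    · positivity
    · rw [div_le_one (by positivity)]
      have : (0:ℝ) ≤ k := Nat.cast_nonneg k
      linarith
  set a := T * (1 / ((k:ℝ) + 1)) / 2 with hadef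
  have a0 : 0 < a := by have := hk.1; positivity
  have a1 : a ≤ T / 2 := by
    have := mul_le_mul_of_nonneg_left hk.2 hT.le
    rw [hadef]; linarith
  have hsub : Icc a (T - a) ⊆ Ioo 0 T := fun x hx => ⟨by linarith [hx.1], by linarith [hx.2]⟩
  rw [Measure.restrict_restrict measurableSet_Ioc,
    inter_eq_left.2 (Ioc_subset_Icc_self.trans hsub), ← intervalIntegral.integral_of_le (by linarith),
    intervalIntegral.integral_eq_sub_of_hasDerivAt (f := H)]
  · exact hL _ (hsub ⟨by linarith, le_rfl⟩) _ (hsub ⟨le_rfl, by linarith⟩)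
  · intro x hx
    rw [uIcc_of_le (by linarith)] at hx
    exact hd x (hsub hx)
  · rw [intervalIntegrable_iff_integrableOn_Ioc_of_le (by linarith)]
    exact hI'.mono_set (Ioc_subset_Icc_self.trans hsub)

/-- The key bound in the `(s, b)` variables. -/
lemma key_bound {n : ℕ} {w : EuclideanSpace ℝ (Fin n) → ℝ} (h : Wt w) {t₀ : ℝ} (ht₀ : 0 < t₀) :
    ∫ t in (0:ℝ)..t₀, (1 / (2 * t ^ 2)) * ∑ i, ∫ b,
        EE w (1 / 2 * (1 / t - 1 / t₀)) b * (∑ j, (Cv w j i (1 / 2 * (1 / t - 1 / t₀)) b) ^ 2)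
          * gam (1 / 2 * (1 / t - 1 / t₀)) b
      ≤ (2 * π) ^ ((n : ℝ) / 2) * (EE w 0 0 * ∑ i, Cv w i i 0 0) := by
  have hs : ∀ t ∈ Ioo 0 t₀, 0 < 1 / 2 * (1 / t - 1 / t₀) := by
    intro t ht
    have := one_div_lt_one_div_of_lt ht.1 ht.2
    linarith
  refine int_le (H := fun t => -∑ i, ∫ b, EE w (1 / 2 * (1 / t - 1 / t₀)) b
    * (NN w (fun z => z i * w z) (1 / 2 * (1 / t - 1 / t₀)) b) ^ 2
      * gam (1 / 2 * (1 / t - 1 / t₀)) b) ht₀ ?_ ?_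
  · intro t ht
    have hst : HasDerivAt (fun t : ℝ => 1 / 2 * (1 / t - 1 / t₀)) (-(1 / (2 * t ^ 2))) t := by
      have := (((hasDerivAt_inv ht.1.ne').sub_const (1 / t₀)).const_mul (1/2))
      convert! this using 1
      · ext; simp
      · have := ht.1.ne'
        field_simp
    have := (HasDerivAt.fun_sum (u := Finset.univ) fun i _ =>
      (G_deriv h i (hs t ht)).comp t hst).neg
    convert! this using 1
    rw [Finset.mul_sum, ← Finset.sum_neg_distrib]
    exact Finset.sum_congr rfl fun i _ => by ring
  · intro t ht t' ht'
    have e : ∀ i, EE (fun z => z i * (z i * w z)) 0 0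
        = EE w 0 0 * NN w (fun z => z i * (z i * w z)) 0 0 := by
      intro i
      have := h.pos 0 0
      unfold NN; field_simp
    have u := Finset.sum_le_sum fun i (_ : i ∈ Finset.univ) => G_le h i (hs t' ht')
    have l := Finset.sum_le_sum fun i (_ : i ∈ Finset.univ) => le_G h i (hs t ht)
    have r : (2 * π) ^ ((n : ℝ) / 2) * (EE w 0 0 * ∑ i, Cv w i i 0 0)
        = ∑ i, (2 * π) ^ ((n : ℝ) / 2) * EE (fun z => z i * (z i * w z)) 0 0
          - ∑ i, (2 * π) ^ ((n : ℝ) / 2) * (EE w 0 0 * (NN w (fun z => z i * w z) 0 0) ^ 2) := by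
      rw [← Finset.sum_sub_distrib, Finset.mul_sum, Finset.mul_sum]
      refine Finset.sum_congr rfl fun i _ => ?_
      rw [e]; unfold Cv; ring
    rw [r]
    linarith

lemma u_formula {n : ℕ} (u₀ : EuclideanSpace ℝ (Fin n) → ℝ) (x₀ y : EuclideanSpace ℝ (Fin n))
    {t t₀ : ℝ} (ht : 0 < t) (ht₀ : 0 < t₀) :
    ∫ z, heatK n y z t * u₀ z = (4 * π * t) ^ (-(n : ℝ) / 2) * Real.exp (-‖y - x₀‖ ^ 2 / (4 * t))
      * EE (fun z => u₀ (x₀ + z) * Real.exp (-‖z‖ ^ 2 / (4 * t₀))) (1 / 2 * (1 / t - 1 / t₀))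
        ((1 / (2 * t)) • (y - x₀)) := by
  rw [← integral_add_left_eq_self _ x₀]
  unfold EE heatK
  rw [← integral_const_mul]
  congr 1
  ext z
  have e : Real.exp (-‖y - (x₀ + z)‖ ^ 2 / (4 * t)) = Real.exp (-‖y - x₀‖ ^ 2 / (4 * t))
      * (Real.exp (-‖z‖ ^ 2 / (4 * t₀)) * Real.exp (inner ℝ ((1 / (2 * t)) • (y - x₀)) z
        - 1 / 2 * (1 / t - 1 / t₀) * ‖z‖ ^ 2 / 2)) := by
    rw [← Real.exp_add, ← Real.exp_add, ← sub_sub, norm_sub_sq_real, real_inner_smul_left]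
    congr 1
    field_simp
    ring
  rw [e]
  ring

lemma wt_of {n : ℕ} {u₀ : EuclideanSpace ℝ (Fin n) → ℝ} (hc : Continuous u₀)
    (hsupp : HasCompactSupport u₀) (hnn : ∀ z, 0 ≤ u₀ z) (hne : ∃ z, u₀ z ≠ 0)
    (x₀ : EuclideanSpace ℝ (Fin n)) (t₀ : ℝ) :
    Wt (fun z => u₀ (x₀ + z) * Real.exp (-‖z‖ ^ 2 / (4 * t₀))) := by
  refine ⟨CC.mul_right ⟨by fun_prop, ?_⟩ (by fun_prop), fun z => mul_nonneg (hnn _) (Real.exp_pos _).le, ?_⟩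
  · exact hsupp.comp_homeomorph (Homeomorph.addLeft x₀)
  · obtain ⟨z, hz⟩ := hne
    exact ⟨z - x₀, mul_ne_zero (by simpa using hz) (Real.exp_pos _).ne'⟩

lemma pdv_of {n : ℕ} {f : EuclideanSpace ℝ (Fin n) → ℝ} {f' : EuclideanSpace ℝ (Fin n) →L[ℝ] ℝ}
    {x : EuclideanSpace ℝ (Fin n)} (h : HasFDerivAt f f' x) (j : Fin n) :
    pdv j f x = f' (EuclideanSpace.single j 1) := by
  unfold pdv; rw [h.fderiv]

lemma aff_deriv {n : ℕ} (x₀ : EuclideanSpace ℝ (Fin n)) (c : ℝ) (z : EuclideanSpace ℝ (Fin n)) :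
    HasFDerivAt (fun z => c • (z - x₀)) (c • ContinuousLinearMap.id ℝ (EuclideanSpace ℝ (Fin n))) z :=
  ((hasFDerivAt_id z).sub_const x₀).const_smul c

lemma pdv_log {n : ℕ} {w : EuclideanSpace ℝ (Fin n) → ℝ} (h : Wt w) (s A t : ℝ)
    (x₀ : EuclideanSpace ℝ (Fin n)) (j : Fin n) (z : EuclideanSpace ℝ (Fin n)) :
    pdv j (fun z => A + -‖z - x₀‖ ^ 2 / (4 * t) + Real.log (EE w s ((1 / (2 * t)) • (z - x₀)))) z
      = -(z j - x₀ j) / (2 * t)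
        + 1 / (2 * t) * NN w (fun z => z j * w z) s ((1 / (2 * t)) • (z - x₀)) := by
  have h1 := (EE_hasFDerivAt h.cc s ((1 / (2 * t)) • (z - x₀))).comp z (aff_deriv x₀ (1 / (2 * t)) z)
  have h2 := h1.log (h.pos _ _).ne'
  have h30 : HasFDerivAt (fun z : EuclideanSpace ℝ (Fin n) => z - x₀)
      (ContinuousLinearMap.id ℝ (EuclideanSpace ℝ (Fin n))) z := (hasFDerivAt_id z).sub_const x₀
  have h3 := h30.norm_sq.neg.const_mul (1 / (4 * t))
  have h31 := h3.const_add A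
  have h32 := h31.add h2
  have h4 := h32.congr_of_eventuallyEq (f₁ := fun z => A + -‖z - x₀‖ ^ 2 / (4 * t)
      + Real.log (EE w s ((1 / (2 * t)) • (z - x₀)))) (Eventually.of_forall fun z => by
    simp [div_eq_mul_inv]
    ring)
  rw [pdv_of h4]
  have h5 := EE_fderiv_apply h.cc s ((1 / (2 * t)) • (z - x₀)) j
  simp only [ContinuousLinearMap.add_apply, ContinuousLinearMap.smul_apply,
    ContinuousLinearMap.comp_apply, ContinuousLinearMap.neg_apply, ContinuousLinearMap.id_apply,
    map_smul, h5, innerSL_apply_apply, EuclideanSpace.inner_single_right, Function.comp]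
  simp [NN]
  ring

lemma pdv2 {n : ℕ} {w : EuclideanSpace ℝ (Fin n) → ℝ} (h : Wt w) (s t : ℝ)
    (x₀ : EuclideanSpace ℝ (Fin n)) (i j : Fin n) (z : EuclideanSpace ℝ (Fin n)) :
    pdv i (fun z => -(z j - x₀ j) / (2 * t)
        + 1 / (2 * t) * NN w (fun z => z j * w z) s ((1 / (2 * t)) • (z - x₀))) z
      = -(1 / (2 * t)) * (if i = j then 1 else 0)
        + 1 / (4 * t ^ 2) * Cv w i j s ((1 / (2 * t)) • (z - x₀)) := by
  have hp := (EE_hasFDerivAt (h.cc.coord j) s ((1 / (2 * t)) • (z - x₀))).comp z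
    (aff_deriv x₀ (1 / (2 * t)) z)
  have hz := (EE_hasFDerivAt h.cc s ((1 / (2 * t)) • (z - x₀))).comp z
    (aff_deriv x₀ (1 / (2 * t)) z)
  have hZ := h.pos s ((1 / (2 * t)) • (z - x₀))
  have h2 := (hp.mul ((hasDerivAt_inv hZ.ne').comp_hasFDerivAt z hz)).const_mul (1 / (2 * t))
  have h30 : HasFDerivAt (fun z : EuclideanSpace ℝ (Fin n) => z j - x₀ j)
      (EuclideanSpace.proj j : EuclideanSpace ℝ (Fin n) →L[ℝ] ℝ) z :=
    ((EuclideanSpace.proj j : EuclideanSpace ℝ (Fin n) →L[ℝ] ℝ).hasFDerivAt (x := z)).sub_const (x₀ j)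
  have h3 := h30.neg.const_mul (1 / (2 * t))
  have h32 := h3.add h2
  have h4 := h32.congr_of_eventuallyEq (f₁ := fun z => -(z j - x₀ j) / (2 * t)
        + 1 / (2 * t) * NN w (fun z => z j * w z) s ((1 / (2 * t)) • (z - x₀)))
    (Eventually.of_forall fun z => by
    simp [div_eq_mul_inv, NN]
    ring)
  rw [pdv_of h4]
  have h5 := EE_fderiv_apply h.cc s ((1 / (2 * t)) • (z - x₀)) i
  have h6 := EE_fderiv_apply (h.cc.coord j) s ((1 / (2 * t)) • (z - x₀)) i
  simp only [ContinuousLinearMap.add_apply, ContinuousLinearMap.smul_apply,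
    ContinuousLinearMap.comp_apply, ContinuousLinearMap.neg_apply, ContinuousLinearMap.id_apply,
    ContinuousLinearMap.sub_apply,
    map_smul, h5, h6, Function.comp]
  have h7 : (EuclideanSpace.proj j : EuclideanSpace ℝ (Fin n) →L[ℝ] ℝ)
      (EuclideanSpace.single i (1:ℝ)) = if i = j then 1 else 0 := by
    simp [Pi.single_apply, eq_comm]
  rw [h7]
  unfold Cv NN
  simp only [smul_eq_mul]
  by_cases ht : t = 0
  · subst ht; simp
  field_simp
  ring

lemma hess_log {n : ℕ} {w : EuclideanSpace ℝ (Fin n) → ℝ} (h : Wt w) (s t c : ℝ) (hc : 0 < c)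
    (x₀ : EuclideanSpace ℝ (Fin n)) (v : EuclideanSpace ℝ (Fin n) → ℝ)
    (hv : ∀ y, v y = c * Real.exp (-‖y - x₀‖ ^ 2 / (4 * t)) * EE w s ((1 / (2 * t)) • (y - x₀)))
    (i j : Fin n) (y : EuclideanSpace ℝ (Fin n)) :
    hess i j (fun z => Real.log (v z)) y = -(1 / (2 * t)) * (if i = j then 1 else 0)
        + 1 / (4 * t ^ 2) * Cv w i j s ((1 / (2 * t)) • (y - x₀)) := by
  have e : (fun z => Real.log (v z)) = fun z => Real.log c + -‖z - x₀‖ ^ 2 / (4 * t)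
      + Real.log (EE w s ((1 / (2 * t)) • (z - x₀))) := by
    ext z
    rw [hv, Real.log_mul (by positivity) (h.pos _ _).ne', Real.log_mul hc.ne' (Real.exp_pos _).ne',
      Real.log_exp]
  unfold hess
  rw [e]
  have e2 : pdv j (fun z => Real.log c + -‖z - x₀‖ ^ 2 / (4 * t)
      + Real.log (EE w s ((1 / (2 * t)) • (z - x₀)))) = fun z => -(z j - x₀ j) / (2 * t)
        + 1 / (2 * t) * NN w (fun z => z j * w z) s ((1 / (2 * t)) • (z - x₀)) :=
    funext fun z => pdv_log h s _ t x₀ j z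
  rw [e2, pdv2 h]

lemma const_calc (n : ℕ) {t t₀ : ℝ} (ht : 0 < t) (htt : t < t₀) :
    (4 * π * t) ^ (-(n : ℝ) / 2) * (4 * π * (t₀ - t)) ^ (-(n : ℝ) / 2) * (2 * t) ^ n
      * (2 * π) ^ ((n : ℝ) / 2)
      = (4 * π * t₀) ^ (-(n : ℝ) / 2) * (1 / 2 * (1 / t - 1 / t₀)) ^ (-(n : ℝ) / 2) := by
  have h0 : 0 < t₀ - t := by linarith
  have h1 : 0 < t₀ := by linarith
  have hs : 0 < 1 / 2 * (1 / t - 1 / t₀) := by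
    have := one_div_lt_one_div_of_lt ht htt
    linarith
  have e1 : (2 * t) ^ n = ((4 * t ^ 2)⁻¹) ^ (-(n : ℝ) / 2) := by
    rw [neg_div, Real.rpow_neg (by positivity), Real.inv_rpow (by positivity), inv_inv,
      show 4 * t ^ 2 = (2 * t) ^ (2:ℝ) by norm_cast; ring, ← Real.rpow_mul (by positivity),
      mul_div_cancel₀ _ two_ne_zero, Real.rpow_natCast]
  have e2 : (2 * π) ^ ((n : ℝ) / 2) = ((2 * π)⁻¹) ^ (-(n : ℝ) / 2) := by
    rw [neg_div, Real.rpow_neg (by positivity), Real.inv_rpow (by positivity), inv_inv]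
  rw [e1, e2, ← Real.mul_rpow (by positivity) (by positivity),
    ← Real.mul_rpow (by positivity) (by positivity), ← Real.mul_rpow (by positivity) (by positivity),
    ← Real.mul_rpow (by positivity) hs.le]
  congr 1
  field_simp

/-- Flat-space inequality (20) of Proposition 7 of the paper:
`u(Δ log u + n/(2t₀)) (x₀,t₀) ≥ (2/t₀²) ∫₀^{t₀} t² ∫ ‖∇² log u + I/(2t)‖²_F u Ĥ dy dt ≥ 0`. -/
theorem stmt9 (n : ℕ) (hn : 1 ≤ n)
    (u₀ : EuclideanSpace ℝ (Fin n) → ℝ) (hc : Continuous u₀)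
    (hsupp : HasCompactSupport u₀) (hnn : ∀ z, 0 ≤ u₀ z) (hne : ∃ z, u₀ z ≠ 0)
    (u : EuclideanSpace ℝ (Fin n) → ℝ → ℝ)
    (hu : ∀ y t, u y t = ∫ z, heatK n y z t * u₀ z)
    (x₀ : EuclideanSpace ℝ (Fin n)) (t₀ : ℝ) (ht₀ : 0 < t₀)
    (hatH : EuclideanSpace ℝ (Fin n) → ℝ → ℝ)
    (hhatH : ∀ y t, hatH y t
      = (4 * π * (t₀ - t)) ^ (-(n : ℝ) / 2)
          * Real.exp (-‖x₀ - y‖ ^ 2 / (4 * (t₀ - t)))) :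
    ((2 / t₀ ^ 2) * ∫ t in (0 : ℝ)..t₀, t ^ 2 * ∫ y,
        (∑ i, ∑ j, (hess i j (fun z => Real.log (u z t)) y
            + (1 / (2 * t)) * (if i = j then 1 else 0)) ^ 2)
          * u y t * hatH y t)
      ≤ u x₀ t₀ * lap (fun z => Real.log (u z t₀)) x₀ + (n / (2 * t₀)) * u x₀ t₀
    ∧ 0 ≤ u x₀ t₀ * lap (fun z => Real.log (u z t₀)) x₀
          + (n / (2 * t₀)) * u x₀ t₀ := by

  set w : EuclideanSpace ℝ (Fin n) → ℝ :=
    fun z => u₀ (x₀ + z) * Real.exp (-‖z‖ ^ 2 / (4 * t₀)) with hw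
  have h : Wt w := wt_of hc hsupp hnn hne x₀ t₀
  have huf : ∀ t, 0 < t → ∀ y, u y t
      = (4 * π * t) ^ (-(n : ℝ) / 2) * Real.exp (-‖y - x₀‖ ^ 2 / (4 * t))
        * EE w (1 / 2 * (1 / t - 1 / t₀)) ((1 / (2 * t)) • (y - x₀)) := by
    intro t ht y
    rw [hu, u_formula u₀ x₀ y ht ht₀]
  have hh : ∀ t, 0 < t → ∀ i j y, hess i j (fun z => Real.log (u z t)) y
      = -(1 / (2 * t)) * (if i = j then 1 else 0)
        + 1 / (4 * t ^ 2) * Cv w i j (1 / 2 * (1 / t - 1 / t₀)) ((1 / (2 * t)) • (y - x₀)) := by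
    intro t ht i j y
    exact hess_log h _ t _ (by positivity) x₀ (fun z => u z t) (huf t ht) i j y
  have hs0 : (1:ℝ) / 2 * (1 / t₀ - 1 / t₀) = 0 := by ring
  have hR : u x₀ t₀ * lap (fun z => Real.log (u z t₀)) x₀ + (n / (2 * t₀)) * u x₀ t₀
      = (4 * π * t₀) ^ (-(n : ℝ) / 2) * (1 / (4 * t₀ ^ 2)) * (EE w 0 0 * ∑ i, Cv w i i 0 0) := by
    unfold lap
    simp only [hh t₀ ht₀]
    rw [huf t₀ ht₀ x₀]
    simp only [hs0]
    simp only [sub_self, smul_zero, if_true]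
    simp only [Finset.sum_add_distrib, ← Finset.mul_sum]
    simp
    ring
  have hpos : 0 ≤ EE w 0 0 * ∑ i, Cv w i i 0 0 :=
    mul_nonneg (h.pos _ _).le (Finset.sum_nonneg fun i _ => Cv_nonneg h i 0 0)
  rw [hR]
  refine ⟨?_, by positivity⟩
  have hI : ∀ t ∈ Ioo 0 t₀, t ^ 2 * ∫ y,
        (∑ i, ∑ j, (hess i j (fun z => Real.log (u z t)) y
            + (1 / (2 * t)) * (if i = j then 1 else 0)) ^ 2)
          * u y t * hatH y t
      = ((4 * π * t₀) ^ (-(n : ℝ) / 2) * ((2 * π) ^ ((n : ℝ) / 2))⁻¹ / 8)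
        * ((1 / (2 * t ^ 2)) * ∑ i, ∫ b,
        EE w (1 / 2 * (1 / t - 1 / t₀)) b * (∑ j, (Cv w j i (1 / 2 * (1 / t - 1 / t₀)) b) ^ 2)
          * gam (1 / 2 * (1 / t - 1 / t₀)) b) := by
    intro t ht
    have ht0 : 0 < t := ht.1
    have hτ : 0 < t₀ - t := by linarith [ht.2]
    have hs : 0 < 1 / 2 * (1 / t - 1 / t₀) := by
      have := one_div_lt_one_div_of_lt ht.1 ht.2
      linarith
    set s := 1 / 2 * (1 / t - 1 / t₀) with hsdef
    have e1 : ∀ y, (∑ i, ∑ j, (hess i j (fun z => Real.log (u z t)) y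
            + (1 / (2 * t)) * (if i = j then 1 else 0)) ^ 2)
          * u y t * hatH y t
        = (fun b => ((4 * π * t) ^ (-(n : ℝ) / 2) * (4 * π * (t₀ - t)) ^ (-(n : ℝ) / 2)
            * (s ^ (-(n : ℝ) / 2))⁻¹ * (1 / (16 * t ^ 4)))
          * ∑ i, EE w s b * (∑ j, (Cv w j i s b) ^ 2) * gam s b) ((2 * t)⁻¹ • (y - x₀)) := by
      intro y
      have f1 : ∑ i, ∑ j, (hess i j (fun z => Real.log (u z t)) y
            + (1 / (2 * t)) * (if i = j then 1 else 0)) ^ 2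
          = (1 / (16 * t ^ 4)) * ∑ i, ∑ j, (Cv w j i s ((2 * t)⁻¹ • (y - x₀))) ^ 2 := by
        rw [Finset.sum_comm, Finset.mul_sum]
        refine Finset.sum_congr rfl fun i _ => ?_
        rw [Finset.mul_sum]
        refine Finset.sum_congr rfl fun j _ => ?_
        rw [hh t ht0, ← hsdef, one_div (2 * t)]
        field_simp
        ring
      have f2 : ‖x₀ - y‖ = ‖y - x₀‖ := norm_sub_rev _ _
      have f3 : Real.exp (-‖y - x₀‖ ^ 2 / (4 * t)) * Real.exp (-‖y - x₀‖ ^ 2 / (4 * (t₀ - t)))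
          = (s ^ (-(n : ℝ) / 2))⁻¹ * gam s ((2 * t)⁻¹ • (y - x₀)) := by
        unfold gam
        rw [inv_mul_cancel_left₀ (by positivity), ← Real.exp_add, norm_smul, Real.norm_eq_abs,
          abs_of_pos (by positivity)]
        congr 1
        have f4 : s = (t₀ - t) / (2 * t * t₀) := by rw [hsdef]; field_simp
        rw [f4]
        field_simp
        ring
      rw [f1, huf t ht0, hhatH, f2, ← hsdef, one_div (2 * t)]
      simp only [← Finset.sum_mul, ← Finset.mul_sum]
      calc _ = (1 / (16 * t ^ 4)) * (∑ i, ∑ j, (Cv w j i s ((2 * t)⁻¹ • (y - x₀))) ^ 2)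
            * (4 * π * t) ^ (-(n : ℝ) / 2) * (4 * π * (t₀ - t)) ^ (-(n : ℝ) / 2)
            * EE w s ((2 * t)⁻¹ • (y - x₀))
            * (Real.exp (-‖y - x₀‖ ^ 2 / (4 * t)) * Real.exp (-‖y - x₀‖ ^ 2 / (4 * (t₀ - t)))) := by
              ring
        _ = _ := by rw [f3]; ring
    simp only [e1]
    rw [integral_sub_right_eq_self (fun y => (fun b => ((4 * π * t) ^ (-(n : ℝ) / 2)
            * (4 * π * (t₀ - t)) ^ (-(n : ℝ) / 2)
            * (s ^ (-(n : ℝ) / 2))⁻¹ * (1 / (16 * t ^ 4)))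
          * ∑ i, EE w s b * (∑ j, (Cv w j i s b) ^ 2) * gam s b) ((2 * t)⁻¹ • y)) x₀,
      Measure.integral_comp_inv_smul_of_nonneg volume (fun b => ((4 * π * t) ^ (-(n : ℝ) / 2)
            * (4 * π * (t₀ - t)) ^ (-(n : ℝ) / 2)
            * (s ^ (-(n : ℝ) / 2))⁻¹ * (1 / (16 * t ^ 4)))
          * ∑ i, EE w s b * (∑ j, (Cv w j i s b) ^ 2) * gam s b) (R := 2 * t) (by positivity), integral_const_mul,
      integral_finsetSum, finrank_euclideanSpace_fin, smul_eq_mul]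
    · have hC := const_calc n ht0 ht.2
      rw [← hsdef] at hC
      have hC2 : (4 * π * t) ^ (-(n : ℝ) / 2) * (4 * π * (t₀ - t)) ^ (-(n : ℝ) / 2)
            * (s ^ (-(n : ℝ) / 2))⁻¹ * (2 * t) ^ n
          = (4 * π * t₀) ^ (-(n : ℝ) / 2) * ((2 * π) ^ ((n : ℝ) / 2))⁻¹ := by
        have p1 : 0 < s ^ (-(n : ℝ) / 2) := by positivity
        have p2 : 0 < (2 * π) ^ ((n : ℝ) / 2) := by positivity
        rw [eq_mul_inv_iff_mul_eq₀ p2.ne', ← mul_right_cancel_iff_of_pos p1, ← hC]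
        field_simp
      rw [← hC2]
      field_simp
      ring
    · intro i _
      refine bd_integrable h hs (g := fun s b => ∑ j, (Cv w j i s b) ^ 2) ?_
        (BdF.sum _ fun j => (Cv_bd h j i).sq)
      exact continuous_finsetSum _ fun j _ => (Cv_cont h j i s).pow 2
  rw [intervalIntegral.integral_of_le ht₀.le, integral_Ioc_eq_integral_Ioo,
    setIntegral_congr_fun measurableSet_Ioo hI, ← integral_Ioc_eq_integral_Ioo,
    ← intervalIntegral.integral_of_le ht₀.le, intervalIntegral.integral_const_mul]
  have kb := key_bound h ht₀
  have p2 : 0 < (2 * π) ^ ((n : ℝ) / 2) := by positivity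
  have p3 : 0 ≤ 2 / t₀ ^ 2 * ((4 * π * t₀) ^ (-(n : ℝ) / 2) * ((2 * π) ^ ((n : ℝ) / 2))⁻¹ / 8) := by
    positivity
  have := mul_le_mul_of_nonneg_left kb p3
  rw [mul_assoc] at this
  refine this.trans (le_of_eq ?_)
  field_simp
  norm_num
end

section
/- Let u(y,t) = ∫_{ℝⁿ} K(y,z,t) u₀(z) dz, where K is the Euclidean heat kernel on ℝⁿ and u₀ : ℝⁿ → ℝ is continuous, compactly supported, nonnegative, and not identically zero. Define f(y,t) = -log u(y,t) - (n/2) log(4πt), so u = (4πt)^{-n/2} e^{-f}, and set W = t( 2Δf - ‖∇f‖² ) + f - n. Fix x₀ ∈ ℝⁿ and t₀ > 0, write τ = t₀ - t, and let Ĥ(y,t) = (4πτ)^{-n/2} exp(-‖x₀-y‖²/(4τ)) for 0 < t < t₀. Then the function t ↦ ∫_{ℝⁿ} (-W(y,t)) u(y,t) Ĥ(y,t) dy is differentiable on (0,t₀) and d/dt ∫_{ℝⁿ} (-W) u Ĥ dy = 2t ∫_{ℝⁿ} ‖ ∇²f - (1/(2t)) I ‖²_F u Ĥ dy ≥ 0.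 -/
open Real MeasureTheory Filter Set

namespace EntAux

abbrev EE (n : ℕ) := EuclideanSpace ℝ (Fin n)

noncomputable abbrev ee {n : ℕ} (k : Fin n) : EE n := EuclideanSpace.single k (1 : ℝ)

/-- continuous in space, at most exponential growth, locally uniformly in time -/
structure Good {n : ℕ} (h : EE n → ℝ → ℝ) : Prop where
  cont : ∀ s, Continuous (fun x => h x s)
  bd : ∀ M : ℝ, ∃ C : ℝ, 0 ≤ C ∧ ∀ x s, |s| ≤ M → |h x s| ≤ C * Real.exp (C * ‖x‖)

variable {n : ℕ}

lemma Good.const (c : ℝ) : Good (fun (_ : EE n) _ => c) := by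
  refine ⟨fun s => continuous_const, fun M => ⟨|c|, abs_nonneg _, fun x s _ => ?_⟩⟩
  have : 1 ≤ Real.exp (|c| * ‖x‖) := Real.one_le_exp (by positivity)
  nlinarith [abs_nonneg c]

lemma Good.time : Good (fun (_ : EE n) s => s) := by
  refine ⟨fun s => continuous_const, fun M => ⟨|M|, abs_nonneg _, fun x s hs => ?_⟩⟩
  have : 1 ≤ Real.exp (|M| * ‖x‖) := Real.one_le_exp (by positivity)
  nlinarith [abs_nonneg M, le_abs_self M]

lemma Good.norm : Good (fun (x : EE n) _ => ‖x‖) := by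
  refine ⟨fun s => by fun_prop, fun M => ⟨1, zero_le_one, fun x s hs => ?_⟩⟩
  rw [abs_of_nonneg (norm_nonneg _)]
  have := Real.add_one_le_exp ‖x‖
  simp only [one_mul]; linarith

lemma Good.of_le {h g : EE n → ℝ → ℝ} (hg : Good g) (hc : ∀ s, Continuous (fun x => h x s))
    (hle : ∀ x s, |h x s| ≤ |g x s|) : Good h :=
  ⟨hc, fun M => (hg.bd M).imp fun _ hC => ⟨hC.1, fun x s hs => (hle x s).trans (hC.2 x s hs)⟩⟩

lemma Good.coord (k : Fin n) : Good (fun (x : EE n) _ => x k) :=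
  Good.norm.of_le (fun s => by fun_prop) (fun x s => by
    rw [abs_of_nonneg (norm_nonneg x)]; exact PiLp.norm_apply_le x k)

lemma Good.add {h g : EE n → ℝ → ℝ} (hh : Good h) (hg : Good g) :
    Good (fun x s => h x s + g x s) := by
  refine ⟨fun s => (hh.cont s).add (hg.cont s), fun M => ?_⟩
  obtain ⟨C, hC, h1⟩ := hh.bd M
  obtain ⟨D, hD, h2⟩ := hg.bd M
  refine ⟨C + D, by positivity, fun x s hs => ?_⟩
  have e1 : Real.exp (C * ‖x‖) ≤ Real.exp ((C + D) * ‖x‖) := by gcongr; linarith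
  have e2 : Real.exp (D * ‖x‖) ≤ Real.exp ((C + D) * ‖x‖) := by gcongr; linarith
  calc |h x s + g x s| ≤ |h x s| + |g x s| := abs_add_le _ _
    _ ≤ C * Real.exp (C * ‖x‖) + D * Real.exp (D * ‖x‖) := add_le_add (h1 x s hs) (h2 x s hs)
    _ ≤ C * Real.exp ((C + D) * ‖x‖) + D * Real.exp ((C + D) * ‖x‖) := by gcongr
    _ = _ := by ring

lemma Good.mul {h g : EE n → ℝ → ℝ} (hh : Good h) (hg : Good g) :
    Good (fun x s => h x s * g x s) := by
  refine ⟨fun s => (hh.cont s).mul (hg.cont s), fun M => ?_⟩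
  obtain ⟨C, hC, h1⟩ := hh.bd M
  obtain ⟨D, hD, h2⟩ := hg.bd M
  refine ⟨C * D + C + D, by positivity, fun x s hs => ?_⟩
  calc |h x s * g x s| = |h x s| * |g x s| := abs_mul _ _
    _ ≤ (C * Real.exp (C * ‖x‖)) * (D * Real.exp (D * ‖x‖)) :=
        mul_le_mul (h1 x s hs) (h2 x s hs) (abs_nonneg _) (by positivity)
    _ = (C * D) * Real.exp ((C + D) * ‖x‖) := by rw [add_mul, Real.exp_add]; ring
    _ ≤ (C * D + C + D) * Real.exp ((C * D + C + D) * ‖x‖) := by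
        gcongr ?_ * Real.exp (?_ * _)
        · linarith
        · nlinarith [mul_nonneg hC hD]

lemma Good.neg {h : EE n → ℝ → ℝ} (hh : Good h) : Good (fun x s => - h x s) :=
  hh.of_le (fun s => (hh.cont s).neg) (fun x s => by rw [abs_neg])

lemma Good.sum {ι : Type*} (S : Finset ι) {h : ι → EE n → ℝ → ℝ} (hh : ∀ i, Good (h i)) :
    Good (fun x s => ∑ i ∈ S, h i x s) := by
  classical
  induction S using Finset.induction_on with
  | empty => simpa using Good.const (n := n) 0
  | insert a S ha ih =>
    simp only [Finset.sum_insert ha]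
    exact (hh a).add ih

lemma Good.log {h : EE n → ℝ → ℝ} (hh : Good h) (hi : Good (fun x s => (h x s)⁻¹))
    (hp : ∀ x s, 0 < h x s) : Good (fun x s => Real.log (h x s)) := by
  refine (hh.add hi).of_le (fun s => (hh.cont s).log fun x => (hp x s).ne') fun x s => ?_
  have h0 := hp x s
  have h1 := Real.log_le_sub_one_of_pos h0
  have h2 := Real.one_sub_inv_le_log_of_pos h0
  have h3 : 0 < (h x s)⁻¹ := by positivity
  rw [abs_of_pos (by positivity : 0 < h x s + (h x s)⁻¹), abs_le]
  constructor <;> linarith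

/-- `h` with its spatial gradient `g` and `b = ∂ₛ h + Δ h`. -/
structure Nice (h : EE n → ℝ → ℝ) (g : Fin n → EE n → ℝ → ℝ) (b : EE n → ℝ → ℝ) : Prop where
  good : Good h
  goodg : ∀ k, Good (g k)
  dg : ∀ k x s, HasLineDerivAt ℝ (fun y => h y s) (g k x s) x (ee k)
  ex : ∃ (hh : Fin n → EE n → ℝ → ℝ) (hs : EE n → ℝ → ℝ),
    (∀ k, Good (hh k)) ∧ Good hs ∧
    (∀ k x s, HasLineDerivAt ℝ (fun y => g k y s) (hh k x s) x (ee k)) ∧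
    (∀ x s, HasDerivAt (fun r => h x r) (hs x s) s) ∧
    (∀ x s, b x s = hs x s + ∑ k, hh k x s)

lemma hld_mul {f g : EE n → ℝ} {f' g' : ℝ} {x v : EE n} (hf : HasLineDerivAt ℝ f f' x v)
    (hg : HasLineDerivAt ℝ g g' x v) :
    HasLineDerivAt ℝ (fun y => f y * g y) (f' * g x + f x * g') x v := by
  have := HasDerivAt.fun_mul hf hg
  exact this.congr_deriv (by simp)

lemma hld_inv {f : EE n → ℝ} {f' : ℝ} {x v : EE n} (hf : HasLineDerivAt ℝ f f' x v)
    (h0 : f x ≠ 0) :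
    HasLineDerivAt ℝ (fun y => (f y)⁻¹) (- f' * ((f x)⁻¹ * (f x)⁻¹)) x v := by
  have := HasDerivAt.fun_inv hf (by simpa using h0)
  exact this.congr_deriv (by simp; field_simp)

lemma hld_log {f : EE n → ℝ} {f' : ℝ} {x v : EE n} (hf : HasLineDerivAt ℝ f f' x v)
    (h0 : f x ≠ 0) :
    HasLineDerivAt ℝ (fun y => Real.log (f y)) (f' * (f x)⁻¹) x v := by
  have := HasDerivAt.log hf (by simpa using h0)
  exact this.congr_deriv (by simp; field_simp)

lemma Nice.add {h g b h' g' b'} (H : Nice (n := n) h g b) (H' : Nice h' g' b') :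
    Nice (fun x s => h x s + h' x s) (fun k x s => g k x s + g' k x s)
      (fun x s => b x s + b' x s) := by
  obtain ⟨hh, hs, a1, a2, a3, a4, a5⟩ := H.ex
  obtain ⟨hh', hs', a1', a2', a3', a4', a5'⟩ := H'.ex
  refine ⟨H.good.add H'.good, fun k => (H.goodg k).add (H'.goodg k),
    fun k x s => HasDerivAt.add (H.dg k x s) (H'.dg k x s),
    fun k x s => hh k x s + hh' k x s, fun x s => hs x s + hs' x s,
    fun k => (a1 k).add (a1' k), a2.add a2',
    fun k x s => HasDerivAt.add (a3 k x s) (a3' k x s),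
    fun x s => (a4 x s).add (a4' x s), fun x s => ?_⟩
  rw [a5, a5', Finset.sum_add_distrib]; ring

lemma Nice.mul {h g b h' g' b'} (H : Nice (n := n) h g b) (H' : Nice h' g' b') :
    Nice (fun x s => h x s * h' x s) (fun k x s => g k x s * h' x s + h x s * g' k x s)
      (fun x s => b x s * h' x s + h x s * b' x s + 2 * ∑ k, g k x s * g' k x s) := by
  obtain ⟨hh, hs, a1, a2, a3, a4, a5⟩ := H.ex
  obtain ⟨hh', hs', a1', a2', a3', a4', a5'⟩ := H'.ex
  refine ⟨H.good.mul H'.good, fun k => ((H.goodg k).mul H'.good).add (H.good.mul (H'.goodg k)),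
    fun k x s => hld_mul (H.dg k x s) (H'.dg k x s),
    fun k x s => (hh k x s * h' x s + g k x s * g' k x s) +
      (g k x s * g' k x s + h x s * hh' k x s), fun x s => hs x s * h' x s + h x s * hs' x s,
    fun k => (((a1 k).mul H'.good).add ((H.goodg k).mul (H'.goodg k))).add
      (((H.goodg k).mul (H'.goodg k)).add (H.good.mul (a1' k))),
    (a2.mul H'.good).add (H.good.mul a2'),
    fun k x s => HasDerivAt.add (hld_mul (a3 k x s) (H'.dg k x s))
      (hld_mul (H.dg k x s) (a3' k x s)),
    fun x s => (a4 x s).mul (a4' x s), fun x s => ?_⟩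
  rw [a5, a5']
  simp only [Finset.sum_add_distrib, ← Finset.sum_mul, ← Finset.mul_sum]; ring

lemma Nice.const (c : ℝ) : Nice (fun (_ : EE n) _ => c) (fun _ _ _ => 0) (fun _ _ => 0) :=
  ⟨Good.const c, fun _ => Good.const 0, fun _ _ _ => hasDerivAt_const (0:ℝ) c, fun _ _ _ => 0, fun _ _ => 0, fun _ => Good.const 0, Good.const 0,
    fun _ _ _ => hasDerivAt_const (0:ℝ) (0:ℝ),
    fun x s => hasDerivAt_const _ _, fun x s => by simp⟩

lemma Nice.time : Nice (fun (_ : EE n) s => s) (fun _ _ _ => 0) (fun _ _ => 1) :=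
  ⟨Good.time, fun _ => Good.const 0, fun _ _ s => hasDerivAt_const (0:ℝ) s, fun _ _ _ => 0, fun _ _ => 1, fun _ => Good.const 0, Good.const 1,
    fun _ _ _ => hasDerivAt_const (0:ℝ) (0:ℝ),
    fun x s => hasDerivAt_id' _, fun x s => by simp⟩

lemma Nice.coord (j : Fin n) : Nice (fun (x : EE n) _ => x j)
    (fun k _ _ => if j = k then 1 else 0) (fun _ _ => 0) :=
  ⟨Good.coord j, fun _ => Good.const _, fun k x s => by
      have := ((hasDerivAt_id' (0:ℝ)).mul_const ((ee k : EE n) j)).const_add (x j)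
      simpa [HasLineDerivAt, Pi.single_apply] using this,
    fun _ _ _ => 0, fun _ _ => 0, fun _ => Good.const 0, Good.const 0,
    fun k _ _ => hasDerivAt_const (0:ℝ) (if j = k then (1:ℝ) else 0),
    fun x s => hasDerivAt_const _ _, fun x s => by simp⟩

lemma Nice.sum {ι : Type*} (S : Finset ι) {h : ι → EE n → ℝ → ℝ}
    {g : ι → Fin n → EE n → ℝ → ℝ} {b : ι → EE n → ℝ → ℝ}
    (H : ∀ i, Nice (h i) (g i) (b i)) :
    Nice (fun x s => ∑ i ∈ S, h i x s) (fun k x s => ∑ i ∈ S, g i k x s)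
      (fun x s => ∑ i ∈ S, b i x s) := by
  classical
  induction S using Finset.induction_on with
  | empty => simpa using Nice.const (n := n) 0
  | insert a S ha ih =>
    simp only [Finset.sum_insert ha]
    exact (H a).add ih

lemma Nice.inv {h g b} (H : Nice (n := n) h g b) (hi : Good (fun x s => (h x s)⁻¹))
    (hp : ∀ x s, 0 < h x s) :
    Nice (fun x s => (h x s)⁻¹) (fun k x s => - g k x s * ((h x s)⁻¹ * (h x s)⁻¹))
      (fun x s => - b x s * ((h x s)⁻¹ * (h x s)⁻¹) + 2 * (∑ k, g k x s ^ 2) * (h x s)⁻¹ ^ 3) := by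
  obtain ⟨hh, hs, a1, a2, a3, a4, a5⟩ := H.ex
  have hli := fun k x s => hld_inv (H.dg k x s) (hp x s).ne'
  refine ⟨hi, fun k => (H.goodg k).neg.mul (hi.mul hi), hli,
    fun k x s => - hh k x s * ((h x s)⁻¹ * (h x s)⁻¹) + -g k x s *
      ((- g k x s * ((h x s)⁻¹ * (h x s)⁻¹)) * (h x s)⁻¹ +
        (h x s)⁻¹ * (- g k x s * ((h x s)⁻¹ * (h x s)⁻¹))),
    fun x s => - hs x s * ((h x s)⁻¹ * (h x s)⁻¹),
    fun k => ?_, a2.neg.mul (hi.mul hi),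
    fun k x s => hld_mul (HasDerivAt.neg (a3 k x s)) (hld_mul (hli k x s) (hli k x s)),
    fun x s => ?_, fun x s => ?_⟩
  · have := (H.goodg k).neg.mul (hi.mul hi)
    exact ((a1 k).neg.mul (hi.mul hi)).add ((H.goodg k).neg.mul ((this.mul hi).add (hi.mul this)))
  · have := (a4 x s).fun_inv (hp x s).ne'
    have h0 := (hp x s).ne'
    exact this.congr_deriv (by field_simp)
  · rw [a5, Finset.sum_add_distrib, Finset.mul_sum, Finset.sum_mul, neg_add, add_mul, add_assoc,
      ← Finset.sum_neg_distrib, Finset.sum_mul]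
    congr 2
    apply Finset.sum_congr rfl; intros; ring

lemma Nice.log {h g b} (H : Nice (n := n) h g b) (hi : Good (fun x s => (h x s)⁻¹))
    (hp : ∀ x s, 0 < h x s) :
    Nice (fun x s => Real.log (h x s)) (fun k x s => g k x s * (h x s)⁻¹)
      (fun x s => b x s * (h x s)⁻¹ - (∑ k, g k x s ^ 2) * (h x s)⁻¹ ^ 2) := by
  obtain ⟨hh, hs, a1, a2, a3, a4, a5⟩ := H.ex
  have hli := fun k x s => hld_inv (H.dg k x s) (hp x s).ne'
  refine ⟨H.good.log hi hp, fun k => (H.goodg k).mul hi,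
    fun k x s => hld_log (H.dg k x s) (hp x s).ne',
    fun k x s => hh k x s * (h x s)⁻¹ + g k x s * (- g k x s * ((h x s)⁻¹ * (h x s)⁻¹)),
    fun x s => hs x s * (h x s)⁻¹,
    fun k => ((a1 k).mul hi).add ((H.goodg k).mul ((H.goodg k).neg.mul (hi.mul hi))), a2.mul hi,
    fun k x s => hld_mul (a3 k x s) (hli k x s),
    fun x s => ?_, fun x s => ?_⟩
  · have := (a4 x s).log (hp x s).ne'
    exact this.congr_deriv (by field_simp)
  · rw [a5, Finset.sum_add_distrib, Finset.sum_mul, sub_eq_add_neg, add_mul, add_assoc,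
      Finset.sum_mul, ← Finset.sum_neg_distrib]
    congr 2
    apply Finset.sum_congr rfl; intros; ring

lemma Good.expn {C : ℝ} (hC : 0 ≤ C) : Good (fun (x : EE n) _ => C * Real.exp (C * ‖x‖)) :=
  ⟨fun s => by fun_prop, fun M => ⟨C, hC, fun x s _ => by rw [abs_of_nonneg (by positivity)]⟩⟩

lemma Good.dist (x₀ : EE n) : Good (fun (x : EE n) _ => ‖x - x₀‖) :=
  (Good.norm.add (Good.const ‖x₀‖)).of_le (fun s => by fun_prop) (fun x s => by
    rw [abs_of_nonneg (norm_nonneg _), abs_of_nonneg (by positivity)]; exact norm_sub_le _ _)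

lemma integrable_gauss (x₀ : EE n) {c : ℝ} (hc : 0 < c) :
    Integrable (fun x : EE n => Real.exp (-c * ‖x - x₀‖ ^ 2)) := by
  have h1 : Integrable (fun x : EE n => Real.exp (-c * ‖x‖ ^ 2)) := by
    have := (GaussianFourier.integrable_cexp_neg_mul_sq_norm_add (V := EE n) (b := (c : ℂ))
      (by simpa using hc) 0 0).norm
    refine this.congr (Eventually.of_forall fun x => ?_)
    simp only [Complex.norm_exp]
    congr 1
    simp [← Complex.ofReal_pow]
  exact h1.comp_sub_right x₀

lemma Good.integrable {h : EE n → ℝ → ℝ} (hh : Good h) (s : ℝ) (x₀ : EE n) {c : ℝ} (hc : 0 < c) :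
    Integrable (fun x => h x s * Real.exp (-c * ‖x - x₀‖ ^ 2)) := by
  obtain ⟨C, hC, hb⟩ := hh.bd |s|
  have hi := (integrable_gauss x₀ (c := c / 2) (by positivity)).const_mul
    (C * Real.exp (C * ‖x₀‖ + C ^ 2 / (2 * c)))
  refine hi.mono' ((hh.cont s).mul (by fun_prop)).aestronglyMeasurable
    (Eventually.of_forall fun x => ?_)
  rw [norm_mul, Real.norm_eq_abs, Real.norm_eq_abs, Real.abs_exp]
  calc |h x s| * Real.exp (-c * ‖x - x₀‖ ^ 2)
      ≤ C * Real.exp (C * ‖x‖) * Real.exp (-c * ‖x - x₀‖ ^ 2) := by gcongr; exact hb x s le_rfl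
    _ = C * Real.exp (C * ‖x‖ + -c * ‖x - x₀‖ ^ 2) := by rw [Real.exp_add]; ring
    _ ≤ C * Real.exp ((C * ‖x₀‖ + C ^ 2 / (2 * c)) + -(c / 2) * ‖x - x₀‖ ^ 2) := by
        gcongr C * Real.exp ?_
        have h1 : ‖x‖ ≤ ‖x - x₀‖ + ‖x₀‖ := norm_le_norm_sub_add x x₀
        have h2 : C * ‖x‖ ≤ C * (‖x - x₀‖ + ‖x₀‖) := by gcongr
        have h3 : C ^ 2 / (2 * c) + (c / 2) * ‖x - x₀‖ ^ 2 - C * ‖x - x₀‖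
            = (c * ‖x - x₀‖ - C) ^ 2 / (2 * c) := by field_simp; ring
        have h4 : 0 ≤ (c * ‖x - x₀‖ - C) ^ 2 / (2 * c) := by positivity
        linarith
    _ = _ := by rw [Real.exp_add]; ring

lemma Good.integrableK {h : EE n → ℝ → ℝ} (hh : Good h) (s : ℝ) (x₀ : EE n) {r : ℝ} (hr : 0 < r) :
    Integrable (fun x => h x s * heatK n x x₀ r) := by
  have := (hh.integrable s x₀ (c := 1 / (4 * r)) (by positivity)).const_mul
    ((4 * π * r) ^ (-(n : ℝ) / 2))
  refine this.congr (Eventually.of_forall fun x => ?_)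
  simp only [heatK]
  rw [show -‖x - x₀‖ ^ 2 / (4 * r) = -(1 / (4 * r)) * ‖x - x₀‖ ^ 2 by ring]; ring

lemma heatK_cont (x₀ : EE n) (r : ℝ) : Continuous (fun x => heatK n x x₀ r) := by
  unfold heatK; fun_prop

lemma heatK_pos (x x₀ : EE n) {r : ℝ} (hr : 0 < r) : 0 < heatK n x x₀ r := by
  unfold heatK; positivity

lemma heatK_time (x x₀ : EE n) {r : ℝ} (hr : 0 < r) :
    HasDerivAt (fun r => heatK n x x₀ r)
      ((‖x - x₀‖ ^ 2 / (4 * r ^ 2) - n / (2 * r)) * heatK n x x₀ r) r := by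
  have h1 : HasDerivAt (fun r : ℝ => 4 * π * r) (4 * π) r := by
    simpa using (hasDerivAt_id' r).const_mul (4 * π)
  have h2 := h1.rpow_const (p := -(n : ℝ) / 2) (Or.inl (by positivity))
  have h3 : HasDerivAt (fun r : ℝ => -‖x - x₀‖ ^ 2 / (4 * r)) (‖x - x₀‖ ^ 2 / (4 * r ^ 2)) r := by
    have := ((hasDerivAt_id' r).const_mul 4).fun_inv (by positivity) |>.const_mul (-‖x - x₀‖ ^ 2)
    simp only [← div_eq_mul_inv] at this
    exact this.congr_deriv (by field_simp)
  refine (h2.fun_mul h3.exp).congr_deriv ?_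
  rw [Real.rpow_sub_one (by positivity)]
  simp only [heatK]
  have := Real.pi_pos
  field_simp
  ring

lemma heatK_line (x x₀ : EE n) (r : ℝ) (k : Fin n) :
    HasLineDerivAt ℝ (fun x => heatK n x x₀ r)
      (-(x k - x₀ k) / (2 * r) * heatK n x x₀ r) x (ee k) := by
  have h1 : ∀ t : ℝ, ‖x + t • (ee k : EE n) - x₀‖ ^ 2
      = ‖x - x₀‖ ^ 2 + 2 * t * (x k - x₀ k) + t ^ 2 := by
    intro t
    rw [show x + t • (ee k : EE n) - x₀ = (x - x₀) + t • (ee k : EE n) by abel, norm_add_sq_real]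
    simp [inner_smul_right, EuclideanSpace.inner_single_right, norm_smul]
    ring
  have h2 : HasDerivAt (fun t : ℝ => ‖x - x₀‖ ^ 2 + 2 * t * (x k - x₀ k) + t ^ 2)
      (2 * (x k - x₀ k)) 0 := by
    have := ((((hasDerivAt_id' (0:ℝ)).const_mul 2).mul_const (x k - x₀ k)).const_add
      (‖x - x₀‖ ^ 2)).fun_add (hasDerivAt_pow 2 (0:ℝ))
    exact this.congr_deriv (by simp)
  have h3 := ((h2.neg.div_const (4 * r)).exp).const_mul ((4 * π * r) ^ (-(n : ℝ) / 2))
  unfold HasLineDerivAt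
  simp only [heatK, h1]
  refine h3.congr_deriv ?_
  simp
  ring

lemma parts {g g' : EE n → ℝ → ℝ} {q q' : EE n → ℝ → ℝ} (hg : Good g) (hg' : Good g') (hq : Good q)
    (hq' : Good q')
    (s r : ℝ) (hr : 0 < r) (x₀ : EE n) (k : Fin n)
    (hd : ∀ x, HasLineDerivAt ℝ (fun y => g y s) (g' x s) x (ee k))
    (hdq : ∀ x, HasLineDerivAt ℝ (fun y => q y s * heatK n y x₀ r) (q' x s * heatK n x x₀ r) x
      (ee k)) :
    ∫ x, g x s * (q' x s * heatK n x x₀ r) = - ∫ x, g' x s * (q x s * heatK n x x₀ r) := by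
  refine integral_bilinear_hasLineDerivAt_right_eq_neg_left_of_integrable (v := ee k)
    (B := ContinuousLinearMap.mul ℝ ℝ) ?_ ?_ ?_ (fun x _ => hd x) (fun x _ => hdq x)
  · simpa [mul_assoc] using (hg'.mul hq).integrableK s x₀ hr
  · simpa [mul_assoc] using (hg.mul hq').integrableK s x₀ hr
  · simpa [mul_assoc] using (hg.mul hq).integrableK s x₀ hr

lemma Nice.hasDerivAt {h g b} (H : Nice (n := n) h g b) (s₀ : ℝ) (x₀ : EE n) {r : ℝ} (hr : 0 < r) :
    HasDerivAt (fun r => ∫ x, h x (s₀ + r) * heatK n x x₀ r)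
      (∫ x, b x (s₀ + r) * heatK n x x₀ r) r := by
  obtain ⟨hh, hs, a1, a2, a3, a4, a5⟩ := H.ex
  obtain ⟨C₁, hC₁, hb₁⟩ := H.good.bd (|s₀| + 2 * r)
  obtain ⟨C₂, hC₂, hb₂⟩ := a2.bd (|s₀| + 2 * r)
  have hcoef : Good (fun (x : EE n) _ => ‖x - x₀‖ ^ 2 / (4 * r ^ 2) - n / (2 * r)) := by
    have := (((Good.dist x₀).mul (Good.dist x₀)).mul (Good.const (1 / (4 * r ^ 2)))).add
      (Good.const (-(n / (2 * r))))
    convert this using 3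
    ring
  have hQ : Good (fun (x : EE n) (_ : ℝ) => C₂ * Real.exp (C₂ * ‖x‖) + C₁ * Real.exp (C₁ * ‖x‖) *
      (‖x - x₀‖ * ‖x - x₀‖ * (1 / r ^ 2) + n / r)) :=
    (Good.expn hC₂).add ((Good.expn hC₁).mul ((((Good.dist x₀).mul (Good.dist x₀)).mul
      (Good.const _)).add (Good.const _)))
  have key := hasDerivAt_integral_of_dominated_loc_of_deriv_le (μ := (volume : Measure (EE n)))
    (F := fun r x => h x (s₀ + r) * heatK n x x₀ r)
    (F' := fun r x => hs x (s₀ + r) * heatK n x x₀ r + h x (s₀ + r) *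
      ((‖x - x₀‖ ^ 2 / (4 * r ^ 2) - n / (2 * r)) * heatK n x x₀ r))
    (bound := fun x => (2 * π * r) ^ (-(n : ℝ) / 2) * ((C₂ * Real.exp (C₂ * ‖x‖) +
      C₁ * Real.exp (C₁ * ‖x‖) *
      (‖x - x₀‖ * ‖x - x₀‖ * (1 / r ^ 2) + n / r)) * Real.exp (-(1 / (8 * r)) * ‖x - x₀‖ ^ 2)))
    (s := Ioo (r / 2) (2 * r)) (x₀ := r) (Ioo_mem_nhds (by linarith) (by linarith))
    (Eventually.of_forall fun r => ((H.good.cont _).mul (heatK_cont _ _)).aestronglyMeasurable)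
    (H.good.integrableK _ _ hr)
    (((a2.cont _).mul (heatK_cont _ _)).add ((H.good.cont _).mul ((hcoef.cont 0).mul
      (heatK_cont _ _)))).aestronglyMeasurable
    (Eventually.of_forall fun x r' hr' => ?_)
    ((hQ.integrable 0 x₀ (by positivity)).const_mul _)
    (Eventually.of_forall fun x r' hr' => ?_)
  · refine key.2.congr_deriv ?_
    have i1 : Integrable (fun x => hs x (s₀ + r) * heatK n x x₀ r) := a2.integrableK _ _ hr
    have i2 : ∀ k, Integrable (fun x => hh k x (s₀ + r) * heatK n x x₀ r) :=
      fun k => (a1 k).integrableK _ _ hr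
    have i3 : ∀ k, Integrable (fun x => h x (s₀ + r) *
        (((x k - x₀ k) ^ 2 / (4 * r ^ 2) - 1 / (2 * r)) * heatK n x x₀ r)) := by
      intro k
      have hq : Good (fun (x : EE n) (_ : ℝ) => (x k + -x₀ k)) :=
        (Good.coord k).add (Good.const _)
      have := (H.good.mul (((hq.mul hq).mul (Good.const (1 / (4 * r ^ 2)))).add
        (Good.const (-(1 / (2 * r)))))).integrableK (s₀ + r) x₀ hr
      refine this.congr (Eventually.of_forall fun x => ?_)
      simp only
      ring
    have i4 : ∀ k, ∫ x, h x (s₀ + r) *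
        (((x k - x₀ k) ^ 2 / (4 * r ^ 2) - 1 / (2 * r)) * heatK n x x₀ r)
        = ∫ x, hh k x (s₀ + r) * heatK n x x₀ r := by
      intro k
      have hq : Good (fun (x : EE n) (_ : ℝ) => (x k + -x₀ k) * (-(1 / (2 * r)))) :=
        ((Good.coord k).add (Good.const _)).mul (Good.const _)
      have hq' : Good (fun (x : EE n) (_ : ℝ) => (x k + -x₀ k) * (-(1 / (2 * r))) *
          ((x k + -x₀ k) * (-(1 / (2 * r)))) + (-(1 / (2 * r)))) :=
        (hq.mul hq).add (Good.const _)
      have p1 := parts H.good (H.goodg k) hq hq' (s₀ + r) r hr x₀ k (fun x => H.dg k x _) ?_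
      · have p2 := parts (H.goodg k) (a1 k) (Good.const 1) hq (s₀ + r) r hr x₀ k
          (fun x => a3 k x _) ?_
        · simp only [one_mul] at p2
          rw [p2, neg_neg] at p1
          rw [← p1]
          congr 1; ext x; ring
        · intro x
          simp only [one_mul]
          exact (heatK_line x x₀ r k).congr_deriv (by ring)
      · intro x
        have l1 : HasLineDerivAt ℝ (fun x : EE n => (x k + -x₀ k) * (-(1 / (2 * r))))
            (-(1 / (2 * r))) x (ee k) := by
          have := (((Nice.coord k).dg k x 0).add_const (-x₀ k)).mul_const (-(1 / (2 * r)))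
          exact this.congr_deriv (by simp)
        exact (hld_mul l1 (heatK_line x x₀ r k)).congr_deriv (by ring)
    calc _ = ∫ x, (hs x (s₀ + r) * heatK n x x₀ r + ∑ k, h x (s₀ + r) *
        (((x k - x₀ k) ^ 2 / (4 * r ^ 2) - 1 / (2 * r)) * heatK n x x₀ r)) := by
          congr 1; ext x
          congr 1
          rw [← Finset.mul_sum, ← Finset.sum_mul, Finset.sum_sub_distrib, ← Finset.sum_div,
            EuclideanSpace.norm_sq_eq]
          simp
          left; left; ring
      _ = ∫ x, (hs x (s₀ + r) * heatK n x x₀ r + ∑ k, hh k x (s₀ + r) * heatK n x x₀ r) := by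
          rw [integral_add i1 (integrable_finsetSum _ fun k _ => i3 k),
            integral_add i1 (integrable_finsetSum _ fun k _ => i2 k),
            integral_finsetSum _ fun k _ => i3 k, integral_finsetSum _ fun k _ => i2 k]
          simp only [i4]
      _ = _ := by
          congr 1; ext x
          rw [a5, add_mul, Finset.sum_mul]
  · have hr0 : 0 < r' := by linarith [hr'.1]
    have hsM : |s₀ + r'| ≤ |s₀| + 2 * r := by
      refine (abs_add_le _ _).trans ?_
      rw [abs_of_pos hr0]; linarith [hr'.2]
    have b1 := hb₁ x _ hsM
    have b2 := hb₂ x _ hsM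
    have bK : heatK n x x₀ r' ≤ (2 * π * r) ^ (-(n : ℝ) / 2) *
        Real.exp (-(1 / (8 * r)) * ‖x - x₀‖ ^ 2) := by
      unfold heatK
      have e1 : (4 * π * r') ^ (-(n : ℝ) / 2) ≤ (2 * π * r) ^ (-(n : ℝ) / 2) := by
        apply Real.rpow_le_rpow_of_nonpos (by positivity)
        · nlinarith [hr'.1, Real.pi_pos]
        · have : (0:ℝ) ≤ n := by positivity
          linarith
      have e2 : -‖x - x₀‖ ^ 2 / (4 * r') ≤ -(1 / (8 * r)) * ‖x - x₀‖ ^ 2 := by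
        have : 1 / (8 * r) ≤ 1 / (4 * r') := by
          apply one_div_le_one_div_of_le (by positivity); linarith [hr'.2]
        have := mul_le_mul_of_nonneg_right this (sq_nonneg ‖x - x₀‖)
        rw [show -‖x - x₀‖ ^ 2 / (4 * r') = -(1 / (4 * r') * ‖x - x₀‖ ^ 2) by ring]
        linarith
      gcongr
    have bc : |‖x - x₀‖ ^ 2 / (4 * r' ^ 2) - n / (2 * r')| ≤
        ‖x - x₀‖ * ‖x - x₀‖ * (1 / r ^ 2) + n / r := by
      have e1 : ‖x - x₀‖ ^ 2 / (4 * r' ^ 2) ≤ ‖x - x₀‖ * ‖x - x₀‖ * (1 / r ^ 2) := by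
        rw [mul_one_div, ← sq]
        apply div_le_div_of_nonneg_left (by positivity) (by positivity)
        nlinarith [hr'.1]
      have e2 : n / (2 * r') ≤ n / r := by
        apply div_le_div_of_nonneg_left (by positivity) (by positivity)
        linarith [hr'.1]
      have e3 : 0 ≤ ‖x - x₀‖ ^ 2 / (4 * r' ^ 2) := by positivity
      have e4 : 0 ≤ n / (2 * r') := by positivity
      rw [abs_le]; constructor <;> linarith
    have hK := heatK_pos x x₀ hr0
    rw [Real.norm_eq_abs]
    calc _ = |(hs x (s₀ + r') + h x (s₀ + r') *
        (‖x - x₀‖ ^ 2 / (4 * r' ^ 2) - n / (2 * r')))| * heatK n x x₀ r' := by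
          rw [← abs_of_pos hK, ← abs_mul, abs_of_pos hK]; congr 1; ring
      _ ≤ (|hs x (s₀ + r')| + |h x (s₀ + r')| *
        |‖x - x₀‖ ^ 2 / (4 * r' ^ 2) - n / (2 * r')|) * heatK n x x₀ r' := by
          gcongr
          rw [← abs_mul]; exact abs_add_le _ _
      _ ≤ (C₂ * Real.exp (C₂ * ‖x‖) + C₁ * Real.exp (C₁ * ‖x‖) *
        (‖x - x₀‖ * ‖x - x₀‖ * (1 / r ^ 2) + n / r)) * ((2 * π * r) ^ (-(n : ℝ) / 2) *
        Real.exp (-(1 / (8 * r)) * ‖x - x₀‖ ^ 2)) := by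
          gcongr
      _ = _ := by ring
  · have hr0 : 0 < r' := by linarith [hr'.1]
    have := (a4 x (s₀ + r')).comp_const_add s₀ r'
    exact this.fun_mul (heatK_time x x₀ hr0)

noncomputable def LT (v : EE n → ℝ) (x : EE n) (s : ℝ) : ℝ :=
  ∫ z, Real.exp (inner ℝ z x - s * ‖z‖ ^ 2) * v z

def Xm (k : Fin n) (v : EE n → ℝ) : EE n → ℝ := fun z => z k * v z

structure Cc (v : EE n → ℝ) : Prop where
  c : Continuous v
  s : HasCompactSupport v

lemma Cc.Xm {v : EE n → ℝ} (hv : Cc v) (k : Fin n) : Cc (Xm k v) :=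
  ⟨by have := hv.c; unfold EntAux.Xm; fun_prop, hv.s.mul_left⟩

lemma Xm_comm (j k : Fin n) (v : EE n → ℝ) : Xm j (Xm k v) = Xm k (Xm j v) := by
  ext z; simp only [Xm]; ring

lemma Cc.int {v : EE n → ℝ} (hv : Cc v) : Integrable v := hv.c.integrable_of_hasCompactSupport hv.s

lemma Cc.rad {v : EE n → ℝ} (hv : Cc v) : ∃ R : ℝ, 0 ≤ R ∧ ∀ z, v z ≠ 0 → ‖z‖ ≤ R := by
  obtain ⟨R, hR⟩ := hv.s.isCompact.isBounded.exists_norm_le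
  refine ⟨|R|, abs_nonneg _, fun z hz => (hR z (subset_tsupport _ hz)).trans (le_abs_self R)⟩

lemma expo_bd {z x : EE n} {s M R B : ℝ} (hz : ‖z‖ ≤ R) (hs : |s| ≤ M) (hx : ‖x‖ ≤ B) :
    |inner ℝ z x - s * ‖z‖ ^ 2| ≤ R * B + M * R ^ 2 := by
  have h1 : |inner ℝ z x| ≤ R * B := (abs_real_inner_le_norm z x).trans
    (mul_le_mul hz hx (norm_nonneg _) ((norm_nonneg _).trans hz))
  have h2 : |s * ‖z‖ ^ 2| ≤ M * R ^ 2 := by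
    rw [abs_mul, abs_of_nonneg (sq_nonneg ‖z‖)]
    have := norm_nonneg z
    exact mul_le_mul hs (by gcongr) (by positivity) ((abs_nonneg _).trans hs)
  exact (abs_sub _ _).trans (add_le_add h1 h2)

lemma kern_bd {v : EE n → ℝ} {R : ℝ} (hR : ∀ z, v z ≠ 0 → ‖z‖ ≤ R) {z x : EE n} {s M B : ℝ}
    (hs : |s| ≤ M) (hx : ‖x‖ ≤ B) :
    |Real.exp (inner ℝ z x - s * ‖z‖ ^ 2) * v z| ≤ Real.exp (R * B + M * R ^ 2) * |v z| := by
  by_cases h : v z = 0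
  · simp [h]
  · rw [abs_mul, Real.abs_exp]
    gcongr
    exact (le_abs_self _).trans (expo_bd (hR z h) hs hx)

lemma kern_cont {v : EE n → ℝ} (hv : Cc v) (x : EE n) (s : ℝ) :
    Continuous (fun z => Real.exp (inner ℝ z x - s * ‖z‖ ^ 2) * v z) := by
  have := hv.c
  fun_prop

lemma kern_int {v : EE n → ℝ} (hv : Cc v) (x : EE n) (s : ℝ) :
    Integrable (fun z => Real.exp (inner ℝ z x - s * ‖z‖ ^ 2) * v z) :=
  (kern_cont hv x s).integrable_of_hasCompactSupport hv.s.mul_left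

lemma LT_bd {v : EE n → ℝ} (hv : Cc v) (M : ℝ) :
    ∃ C : ℝ, 0 ≤ C ∧ ∀ x s, |s| ≤ M → |LT v x s| ≤ C * Real.exp (C * ‖x‖) := by
  obtain ⟨R, hR0, hR⟩ := hv.rad
  have hI : 0 ≤ ∫ z, |v z| := integral_nonneg fun z => abs_nonneg _
  refine ⟨R + Real.exp (M * R ^ 2) * ∫ z, |v z|, by positivity, fun x s hs => ?_⟩
  have h1 : |LT v x s| ≤ Real.exp (R * ‖x‖ + M * R ^ 2) * ∫ z, |v z| := by
    rw [← integral_const_mul]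
    refine (norm_integral_le_integral_norm _).trans (integral_mono (kern_int hv x s).norm
      (hv.int.abs.const_mul _) fun z => kern_bd hR hs le_rfl)
  refine h1.trans ?_
  rw [Real.exp_add, mul_assoc, mul_comm]
  gcongr
  · linarith
  · have : 0 ≤ Real.exp (M * R ^ 2) * ∫ z, |v z| := by positivity
    linarith

lemma LT_fderiv {v : EE n → ℝ} (hv : Cc v) (x : EE n) (s : ℝ) :
    ∃ A : EE n →L[ℝ] ℝ, HasFDerivAt (fun y => LT v y s) A x ∧ ∀ k, A (ee k) = LT (Xm k v) x s := by
  obtain ⟨R, hR0, hR⟩ := hv.rad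
  have hv1 := hv.c
  have hc : Continuous (fun z : EE n => (v z) • (Real.exp (inner ℝ z x - s * ‖z‖ ^ 2) •
      innerSL ℝ z)) := by fun_prop
  have hint : Integrable (fun z : EE n => (v z) • (Real.exp (inner ℝ z x - s * ‖z‖ ^ 2) •
      innerSL ℝ z)) := hc.integrable_of_hasCompactSupport hv.s.smul_right
  refine ⟨∫ z, (v z) • (Real.exp (inner ℝ z x - s * ‖z‖ ^ 2) • innerSL ℝ z), ?_, fun k => ?_⟩
  · refine hasFDerivAt_integral_of_dominated_of_fderiv_le (𝕜 := ℝ)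
      (F' := fun x z => (v z) • (Real.exp (inner ℝ z x - s * ‖z‖ ^ 2) • innerSL ℝ z))
      (bound := fun z => Real.exp (R * (‖x‖ + 1) + |s| * R ^ 2) * |v z| * R)
      (Metric.ball_mem_nhds x one_pos)
      (Eventually.of_forall fun y => (kern_cont hv y s).aestronglyMeasurable) (kern_int hv x s)
      hc.aestronglyMeasurable (Eventually.of_forall fun z y hy => ?_)
      ((hv.int.abs.const_mul _).mul_const R) (Eventually.of_forall fun z y hy => ?_)
    · have hy' : ‖y‖ ≤ ‖x‖ + 1 := by
        have := norm_le_norm_sub_add y x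
        rw [mem_ball_iff_norm] at hy; linarith
      by_cases h : v z = 0
      · simp [h]
      · have := kern_bd hR (z := z) (s := s) le_rfl hy'
        rw [norm_smul, norm_smul, innerSL_apply_norm, Real.norm_eq_abs, Real.norm_eq_abs,
          ← mul_assoc, ← abs_mul, mul_comm (v z)]
        exact mul_le_mul this (hR z h) (norm_nonneg _) (by positivity)
    · exact (((innerSL ℝ z).hasFDerivAt (x := y)).sub_const (s * ‖z‖ ^ 2)).exp.mul_const (v z)
  · rw [ContinuousLinearMap.integral_apply hint]
    simp only [LT, Xm]
    congr 1; ext z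
    simp [EuclideanSpace.inner_single_right]
    ring

lemma LT_line {v : EE n → ℝ} (hv : Cc v) (x : EE n) (s : ℝ) (k : Fin n) :
    HasLineDerivAt ℝ (fun y => LT v y s) (LT (Xm k v) x s) x (ee k) := by
  obtain ⟨A, h1, h2⟩ := LT_fderiv hv x s
  rw [← h2]
  exact h1.hasLineDerivAt _

lemma LT_diff {v : EE n → ℝ} (hv : Cc v) (s : ℝ) : Differentiable ℝ (fun y => LT v y s) := by
  intro x
  obtain ⟨A, h1, h2⟩ := LT_fderiv hv x s
  exact h1.differentiableAt

lemma LT_good {v : EE n → ℝ} (hv : Cc v) : Good (LT v) :=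
  ⟨fun s => (LT_diff hv s).continuous, LT_bd hv⟩

lemma LT_time {v : EE n → ℝ} (hv : Cc v) (x : EE n) (s : ℝ) :
    HasDerivAt (fun s => LT v x s) (- ∑ k, LT (Xm k (Xm k v)) x s) s := by
  obtain ⟨R, hR0, hR⟩ := hv.rad
  have hv1 := hv.c
  have key := (hasDerivAt_integral_of_dominated_loc_of_deriv_le (μ := (volume : Measure (EE n)))
      (F := fun s z => Real.exp (inner ℝ z x - s * ‖z‖ ^ 2) * v z)
      (F' := fun s z => Real.exp (inner ℝ z x - s * ‖z‖ ^ 2) * (-‖z‖ ^ 2) * v z)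
      (bound := fun z => Real.exp (R * ‖x‖ + (|s| + 1) * R ^ 2) * |v z| * R ^ 2)
      (Metric.ball_mem_nhds s one_pos)
      (Eventually.of_forall fun y => (kern_cont hv x y).aestronglyMeasurable) (kern_int hv x s)
      (Continuous.aestronglyMeasurable (by fun_prop)) (Eventually.of_forall fun z y hy => ?_)
      ((hv.int.abs.const_mul _).mul_const _) (Eventually.of_forall fun z y hy => ?_)).2
  · refine key.congr_deriv ?_
    simp only [LT]
    rw [← integral_finsetSum _ fun k _ => kern_int ((hv.Xm k).Xm k) x s, ← integral_neg]
    congr 1; ext z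
    generalize Real.exp _ = E
    rw [EuclideanSpace.norm_sq_eq]
    simp only [Xm, Real.norm_eq_abs, sq_abs, mul_neg, neg_mul, Finset.mul_sum, Finset.sum_mul]
    congr 1
    exact Finset.sum_congr rfl fun k _ => by ring
  · have hy' : |y| ≤ |s| + 1 := by
      have := norm_le_norm_sub_add y s
      rw [mem_ball_iff_norm] at hy
      simp only [Real.norm_eq_abs] at *; linarith
    by_cases h : v z = 0
    · simp [h]
    · have := kern_bd hR (z := z) (x := x) hy' le_rfl
      rw [show Real.exp (inner ℝ z x - y * ‖z‖ ^ 2) * (-‖z‖ ^ 2) * v z =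
        (Real.exp (inner ℝ z x - y * ‖z‖ ^ 2) * v z) * (-‖z‖ ^ 2) by ring, norm_mul]
      refine mul_le_mul this ?_ (norm_nonneg _) (by positivity)
      rw [norm_neg, norm_pow, norm_norm]
      have := hR z h
      gcongr
  · have h1 : HasDerivAt (fun s : ℝ => inner ℝ z x - s * ‖z‖ ^ 2) (-‖z‖ ^ 2) y := by
      simpa using ((hasDerivAt_id' y).mul_const (‖z‖ ^ 2)).const_sub (inner ℝ z x)
    exact h1.exp.mul_const (v z)

lemma LT_nice {v : EE n → ℝ} (hv : Cc v) :
    Nice (LT v) (fun k => LT (Xm k v)) (fun _ _ => 0) :=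
  ⟨LT_good hv, fun k => LT_good (hv.Xm k), fun k x s => LT_line hv x s k,
    fun k => LT (Xm k (Xm k v)), fun x s => - ∑ k, LT (Xm k (Xm k v)) x s,
    fun k => LT_good ((hv.Xm k).Xm k), (Good.sum _ fun k => LT_good ((hv.Xm k).Xm k)).neg,
    fun k x s => LT_line (hv.Xm k) x s k, fun x s => LT_time hv x s, fun x s => by simp⟩

lemma LT_lower {v : EE n → ℝ} (hv : Cc v) (h0 : ∀ z, 0 ≤ v z) :
    ∃ R : ℝ, 0 ≤ R ∧ ∀ x s M, |s| ≤ M →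
      Real.exp (-(R * ‖x‖ + M * R ^ 2)) * ∫ z, v z ≤ LT v x s := by
  obtain ⟨R, hR0, hR⟩ := hv.rad
  refine ⟨R, hR0, fun x s M hs => ?_⟩
  rw [← integral_const_mul]
  refine integral_mono (hv.int.const_mul _) (kern_int hv x s) fun z => ?_
  by_cases h : v z = 0
  · simp [h]
  · have := (abs_le.1 (expo_bd (hR z h) hs (le_refl ‖x‖))).1
    exact mul_le_mul_of_nonneg_right (Real.exp_le_exp.2 this) (h0 z)

lemma LT_pos {v : EE n → ℝ} (hv : Cc v) (h0 : ∀ z, 0 ≤ v z) (hne : ∃ z, v z ≠ 0)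
    (x : EE n) (s : ℝ) : 0 < LT v x s := by
  obtain ⟨z, hz⟩ := hne
  have hI := hv.c.integral_pos_of_hasCompactSupport_nonneg_nonzero (μ := volume) hv.s h0 hz
  obtain ⟨R, hR0, h⟩ := LT_lower hv h0
  exact lt_of_lt_of_le (by positivity) (h x s _ le_rfl)

lemma LT_inv {v : EE n → ℝ} (hv : Cc v) (h0 : ∀ z, 0 ≤ v z) (hne : ∃ z, v z ≠ 0) :
    Good (fun x s => (LT v x s)⁻¹) := by
  have hp := LT_pos hv h0 hne
  refine ⟨fun s => ((LT_good hv).cont s).inv₀ fun x => (hp x s).ne', fun M => ?_⟩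
  obtain ⟨z, hz⟩ := hne
  have hI := hv.c.integral_pos_of_hasCompactSupport_nonneg_nonzero (μ := volume) hv.s h0 hz
  obtain ⟨R, hR0, h⟩ := LT_lower hv h0
  refine ⟨R + Real.exp (M * R ^ 2) * (∫ z, v z)⁻¹, by positivity, fun x s hs => ?_⟩
  have hi : 0 ≤ Real.exp (M * R ^ 2) * (∫ z, v z)⁻¹ := by positivity
  rw [abs_of_pos (inv_pos.2 (hp x s))]
  calc (LT v x s)⁻¹ ≤ (Real.exp (-(R * ‖x‖ + M * R ^ 2)) * ∫ z, v z)⁻¹ :=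
        inv_anti₀ (by positivity) (h x s M hs)
    _ = (Real.exp (M * R ^ 2) * (∫ z, v z)⁻¹) * Real.exp (R * ‖x‖) := by
        rw [Real.exp_neg, mul_inv, inv_inv, Real.exp_add]; ring
    _ ≤ _ := by
        gcongr
        · linarith
        · linarith

lemma Nice.congr {h g b h' b'} (H : Nice (n := n) h g b) (e1 : ∀ x s, h' x s = h x s)
    (e2 : ∀ x s, b' x s = b x s) : Nice h' g b' := by
  have : h' = h := by ext x s; exact e1 x s
  have : b' = b := by ext x s; exact e2 x s
  subst_vars; exact H

noncomputable def PP (v : EE n → ℝ) (x : EE n) (s : ℝ) : ℝ :=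
  2 * s * (∑ k, LT (Xm k (Xm k v)) x s) - (∑ j, x j * LT (Xm j v) x s)
    + LT v x s * Real.log (LT v x s)
    - s * ∑ j, (LT (Xm j v) x s) ^ 2 * (LT v x s)⁻¹

noncomputable def cov (v : EE n → ℝ) (i j : Fin n) (x : EE n) (s : ℝ) : ℝ :=
  LT (Xm i (Xm j v)) x s * (LT v x s)⁻¹
    - LT (Xm i v) x s * LT (Xm j v) x s * (LT v x s)⁻¹ ^ 2

noncomputable def BP (v : EE n → ℝ) (x : EE n) (s : ℝ) : ℝ :=
  -(2 * s) * ((∑ i, ∑ j, cov v i j x s ^ 2) * LT v x s)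

lemma PP_nice {v : EE n → ℝ} (hv : Cc v) (h0 : ∀ z, 0 ≤ v z) (hne : ∃ z, v z ≠ 0) :
    ∃ g, Nice (PP v) g (BP v) := by
  have hp := LT_pos hv h0 hne
  have hi := LT_inv hv h0 hne
  have N0 := LT_nice hv
  have Na := fun j => LT_nice (hv.Xm j)
  have Nb := fun j => LT_nice ((hv.Xm j).Xm j)
  have N1 := (Nice.const 2).mul (Nice.time.mul (Nice.sum Finset.univ Nb))
  have N2 := (Nice.const (-1)).mul (Nice.sum Finset.univ fun j => (Nice.coord j).mul (Na j))
  have N3 := N0.mul (N0.log hi hp)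
  have N4 := (Nice.const (-1)).mul (Nice.time.mul (Nice.sum Finset.univ fun j =>
    ((Na j).mul (Na j)).mul (N0.inv hi hp)))
  refine ⟨_, (((N1.add N2).add N3).add N4).congr (fun x s => ?_) (fun x s => ?_)⟩
  · simp only [PP, ← sq]; ring
  · have hL := (hp x s).ne'
    simp only [BP]
    have e1 : ∀ j, ∑ k, LT (Xm k (Xm j v)) x s * (-LT (Xm k v) x s) = 
      - ∑ k, LT (Xm k (Xm j v)) x s * LT (Xm k v) x s := by
      intro j; simp
    have key : ∀ j, (∑ k, cov v k j x s ^ 2) * LT v x s * 2 =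
       (2 * ∑ k, LT (Xm k (Xm j v)) x s * LT (Xm k (Xm j v)) x s) * (LT v x s)⁻¹ +
        LT (Xm j v) x s * LT (Xm j v) x s * (2 * (∑ k, LT (Xm k v) x s ^ 2) * (LT v x s)⁻¹ ^ 3) +
        2 * ∑ k, (LT (Xm k (Xm j v)) x s * LT (Xm j v) x s +
          LT (Xm j v) x s * LT (Xm k (Xm j v)) x s) *
            (-LT (Xm k v) x s * ((LT v x s)⁻¹ * (LT v x s)⁻¹)) := by
      intro j
      simp only [Finset.mul_sum, Finset.sum_mul, ← Finset.sum_add_distrib]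
      refine Finset.sum_congr rfl fun k _ => ?_
      simp only [cov]
      field_simp
      ring
    have q1 : ∀ j, ∑ k, (if j = k then (1:ℝ) else 0) * LT (Xm k (Xm j v)) x s =
        LT (Xm j (Xm j v)) x s := by intro j; simp
    have q2 : LT v x s * ((0:ℝ) * (LT v x s)⁻¹ - (∑ k, LT (Xm k v) x s ^ 2) * (LT v x s)⁻¹ ^ 2) +
        2 * ∑ k, LT (Xm k v) x s * (LT (Xm k v) x s * (LT v x s)⁻¹) =
        ∑ k, LT (Xm k v) x s * LT (Xm k v) x s * (LT v x s)⁻¹ := by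
      simp only [← mul_assoc, ← Finset.sum_mul, ← sq]
      field_simp
      ring
    simp only [zero_mul, mul_zero, zero_add, add_zero, neg_zero, Finset.sum_const_zero, q1,
      ← key] at q2 ⊢
    rw [q2, ← Finset.sum_mul, ← Finset.sum_mul, ← Finset.sum_mul, ← Finset.mul_sum,
      Finset.sum_comm (f := fun i j => cov v i j x s ^ 2)]
    ring

lemma pdv_eq {F : EE n → ℝ} {x : EE n} {k : Fin n} {d : ℝ} (h : DifferentiableAt ℝ F x)
    (hl : HasLineDerivAt ℝ F d x (ee k)) : pdv k F x = d := by
  unfold pdv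
  exact (h.hasFDerivAt.hasLineDerivAt _).unique hl

lemma grad_sq {F : EE n → ℝ} (x : EE n) : ‖gradient F x‖ ^ 2 = ∑ j, pdv j F x ^ 2 := by
  rw [EuclideanSpace.norm_sq_eq]
  refine Finset.sum_congr rfl fun j _ => ?_
  rw [Real.norm_eq_abs, sq_abs]
  congr 1
  have : inner ℝ (gradient F x) (ee j) = fderiv ℝ F x (ee j) := by
    simp [gradient]
  rw [pdv, ← this, EuclideanSpace.inner_single_right]
  simp

lemma u_eq (v : EE n → ℝ) (y : EE n) {t : ℝ} (ht : 0 < t) :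
    ∫ z, heatK n y z t * v z = (4 * π * t) ^ (-(n : ℝ) / 2) * Real.exp (-‖y‖ ^ 2 / (4 * t)) *
      LT v ((2 * t)⁻¹ • y) (1 / (4 * t)) := by
  rw [LT, ← integral_const_mul]
  congr 1; ext z
  have e : -‖y - z‖ ^ 2 / (4 * t) = -‖y‖ ^ 2 / (4 * t) +
      (inner ℝ z ((2 * t)⁻¹ • y) - 1 / (4 * t) * ‖z‖ ^ 2) := by
    rw [norm_sub_sq_real, inner_smul_right, real_inner_comm]
    field_simp
    ring
  rw [heatK, e, Real.exp_add]
  ring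

lemma f_eq {v : EE n → ℝ} (hv : Cc v) (h0 : ∀ z, 0 ≤ v z) (hne : ∃ z, v z ≠ 0)
    (y : EE n) {t : ℝ} (ht : 0 < t) :
    -Real.log (∫ z, heatK n y z t * v z) - (n / 2 : ℝ) * Real.log (4 * π * t)
      = ‖y‖ ^ 2 * (1 / (4 * t)) - Real.log (LT v ((2 * t)⁻¹ • y) (1 / (4 * t))) := by
  have hp := LT_pos hv h0 hne ((2 * t)⁻¹ • y) (1 / (4 * t))
  rw [u_eq v y ht, Real.log_mul (by positivity) hp.ne', Real.log_mul (by positivity)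
    (by positivity), Real.log_exp, Real.log_rpow (by positivity)]
  ring

lemma nsq_line (x : EE n) (k : Fin n) :
    HasLineDerivAt ℝ (fun y : EE n => ‖y‖ ^ 2) (2 * x k) x (ee k) := by
  have := (hasStrictFDerivAt_norm_sq x).hasFDerivAt.hasLineDerivAt (ee k)
  simpa [EuclideanSpace.inner_single_right] using this

lemma line_scale {F : EE n → ℝ} {d c : ℝ} {x v : EE n} (h : HasLineDerivAt ℝ F d (c • x) v) :
    HasLineDerivAt ℝ (fun y => F (c • y)) (c * d) x v := by
  unfold HasLineDerivAt at *
  have h2 : HasDerivAt (fun t : ℝ => c * t) c 0 := by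
    simpa using (hasDerivAt_id' (0:ℝ)).const_mul c
  have h' : HasDerivAt (fun t : ℝ => F (c • x + t • v)) d (c * 0) := by simpa using h
  have := h'.comp 0 h2
  have e : (fun t : ℝ => F (c • (x + t • v))) =
      (fun t : ℝ => F (c • x + t • v)) ∘ fun t : ℝ => c * t := by
    ext t; simp [smul_smul]
  rw [e]
  exact this.congr_deriv (by ring)

lemma pdv_f {v : EE n → ℝ} (hv : Cc v) (h0 : ∀ z, 0 ≤ v z) (hne : ∃ z, v z ≠ 0)
    (y : EE n) {c s : ℝ} (d : ℝ) (j : Fin n) :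
    pdv j (fun y => ‖y‖ ^ 2 * d - Real.log (LT v (c • y) s)) y =
      2 * y j * d - c * (LT (Xm j v) (c • y) s * (LT v (c • y) s)⁻¹) := by
  have hp := LT_pos hv h0 hne
  have hd := LT_diff hv s
  apply pdv_eq
  · have h1 : DifferentiableAt ℝ (fun y : EE n => LT v (c • y) s) y :=
      (hd (c • y)).comp y (by fun_prop : DifferentiableAt ℝ (fun y : EE n => c • y) y)
    have h2 : DifferentiableAt ℝ (fun y : EE n => ‖y‖ ^ 2) y :=
      (hasStrictFDerivAt_norm_sq y).hasFDerivAt.differentiableAt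
    exact (h2.mul_const d).sub (h1.log (hp _ _).ne')
  · have l1 := line_scale (hld_log (LT_line hv (c • y) s j) (hp (c • y) s).ne')
    exact HasDerivAt.fun_sub (HasDerivAt.mul_const (nsq_line y j) d) l1

lemma hess_f {v : EE n → ℝ} (hv : Cc v) (h0 : ∀ z, 0 ≤ v z) (hne : ∃ z, v z ≠ 0)
    (y : EE n) {c s : ℝ} (d : ℝ) (i j : Fin n) :
    hess i j (fun y => ‖y‖ ^ 2 * d - Real.log (LT v (c • y) s)) y =
      2 * d * (if i = j then 1 else 0) - c ^ 2 * cov v i j (c • y) s := by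
  have hp := LT_pos hv h0 hne
  unfold hess
  have : pdv j (fun y => ‖y‖ ^ 2 * d - Real.log (LT v (c • y) s)) = fun y =>
      2 * y j * d - c * (LT (Xm j v) (c • y) s * (LT v (c • y) s)⁻¹) := by
    ext y; exact pdv_f hv h0 hne y d j
  rw [this]
  apply pdv_eq
  · have hs : DifferentiableAt ℝ (fun y : EE n => c • y) y := by fun_prop
    have h1 : DifferentiableAt ℝ (fun y : EE n => LT v (c • y) s) y :=
      (LT_diff hv s (c • y)).comp y hs
    have h2 : DifferentiableAt ℝ (fun y : EE n => LT (Xm j v) (c • y) s) y :=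
      (LT_diff (hv.Xm j) s (c • y)).comp y hs
    have h3 : DifferentiableAt ℝ (fun y : EE n => 2 * y j * d) y := by fun_prop
    exact h3.sub ((h2.mul (h1.inv (hp _ _).ne')).const_mul c)
  · have l1 := line_scale (hld_mul (LT_line (hv.Xm j) (c • y) s i)
      (hld_inv (LT_line hv (c • y) s i) (hp (c • y) s).ne'))
    have l2 := HasDerivAt.mul_const (HasDerivAt.const_mul 2 ((Nice.coord j).dg i y 0)) d
    refine (HasDerivAt.fun_sub l2 (HasDerivAt.const_mul c l1)).congr_deriv ?_
    simp only [cov, eq_comm (a := j)]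
    ring

lemma change_var (G : EE n → ℝ) (x₀ : EE n) {t t₀ : ℝ} (ht : 0 < t) (htt : t < t₀) :
    ∫ y : EE n, G ((2 * t)⁻¹ • y) * ((4 * π * t) ^ (-(n : ℝ) / 2) * Real.exp (-‖y‖ ^ 2 / (4 * t)) *
      ((4 * π * (t₀ - t)) ^ (-(n : ℝ) / 2)
          * Real.exp (-‖x₀ - y‖ ^ 2 / (4 * (t₀ - t))))) =
    ((4 * π * t₀) ^ (-(n : ℝ) / 2) * Real.exp (-‖x₀‖ ^ 2 / (4 * t₀))) *
      ∫ x, G x * heatK n x ((2 * t₀)⁻¹ • x₀) (1 / (4 * t) - 1 / (4 * t₀)) := by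
  have ht0 : 0 < t₀ := ht.trans htt
  have hτ : 0 < t₀ - t := by linarith
  have hr : 1 / (4 * t) - 1 / (4 * t₀) = (t₀ - t) / (4 * t * t₀) := by field_simp
  rw [hr]
  have hcv := Measure.integral_comp_smul (volume : Measure (EE n))
    (fun x => G x * heatK n x ((2 * t₀)⁻¹ • x₀) ((t₀ - t) / (4 * t * t₀))) (2 * t)⁻¹
  have e0 : |(((2 * t)⁻¹ : ℝ) ^ (Module.finrank ℝ (EE n)))⁻¹| = (2 * t) ^ n := by
    rw [finrank_euclideanSpace_fin, inv_pow, inv_inv, abs_of_pos (by positivity)]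
  rw [e0, smul_eq_mul] at hcv
  have e1 : ∫ x, G x * heatK n x ((2 * t₀)⁻¹ • x₀) ((t₀ - t) / (4 * t * t₀)) =
      ((2 * t) ^ n)⁻¹ * ∫ y : EE n, G ((2 * t)⁻¹ • y) * heatK n ((2 * t)⁻¹ • y) ((2 * t₀)⁻¹ • x₀)
        ((t₀ - t) / (4 * t * t₀)) := by
    rw [hcv]; field_simp
  rw [e1, ← mul_assoc, ← integral_const_mul]
  congr 1; ext y
  have e2 : ((2 * t) ^ n)⁻¹ = ((2 * t) ^ 2) ^ (-(n : ℝ) / 2) := by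
    rw [← Real.rpow_natCast (2 * t) 2, ← Real.rpow_mul (by positivity), ← Real.rpow_natCast,
      ← Real.rpow_neg (by positivity)]
    congr 1; push_cast; ring
  have e3 : (4 * π * t) ^ (-(n : ℝ) / 2) * (4 * π * (t₀ - t)) ^ (-(n : ℝ) / 2) =
      (4 * π * t₀) ^ (-(n : ℝ) / 2) * ((2 * t) ^ n)⁻¹ *
        (4 * π * ((t₀ - t) / (4 * t * t₀))) ^ (-(n : ℝ) / 2) := by
    rw [e2, ← Real.mul_rpow (by positivity) (by positivity),
      ← Real.mul_rpow (by positivity) (by positivity),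
      ← Real.mul_rpow (by positivity) (by positivity)]
    congr 1; field_simp; ring
  have e4 : Real.exp (-‖y‖ ^ 2 / (4 * t)) * Real.exp (-‖x₀ - y‖ ^ 2 / (4 * (t₀ - t))) =
      Real.exp (-‖x₀‖ ^ 2 / (4 * t₀)) * Real.exp (-‖(2 * t)⁻¹ • y - (2 * t₀)⁻¹ • x₀‖ ^ 2 /
        (4 * ((t₀ - t) / (4 * t * t₀)))) := by
    rw [← Real.exp_add, ← Real.exp_add, norm_sub_sq_real, norm_sub_sq_real, inner_smul_left,
      inner_smul_right, norm_smul, norm_smul, real_inner_comm y x₀, Real.norm_of_nonneg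
      (by positivity), Real.norm_of_nonneg (by positivity)]
    congr 1
    simp only [conj_trivial]
    field_simp
    ring
  calc _ = G ((2 * t)⁻¹ • y) * (((4 * π * t) ^ (-(n : ℝ) / 2) *
        (4 * π * (t₀ - t)) ^ (-(n : ℝ) / 2)) * (Real.exp (-‖y‖ ^ 2 / (4 * t)) *
        Real.exp (-‖x₀ - y‖ ^ 2 / (4 * (t₀ - t))))) := by ring
    _ = _ := by rw [e3, e4, heatK]; ring

theorem main_aux (n : ℕ)
    (u₀ : EuclideanSpace ℝ (Fin n) → ℝ) (hv : Cc u₀)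
    (hnn : ∀ z, 0 ≤ u₀ z) (hne : ∃ z, u₀ z ≠ 0)
    (u : EuclideanSpace ℝ (Fin n) → ℝ → ℝ)
    (hu : ∀ y t, u y t = ∫ z, heatK n y z t * u₀ z)
    (f : EuclideanSpace ℝ (Fin n) → ℝ → ℝ)
    (hf : ∀ y t, f y t = -Real.log (u y t) - (n / 2 : ℝ) * Real.log (4 * π * t))
    (W : EuclideanSpace ℝ (Fin n) → ℝ → ℝ)
    (hW : ∀ y t, W y t
      = t * (2 * lap (fun z => f z t) y - ‖gradient (fun z => f z t) y‖ ^ 2)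
        + f y t - n)
    (x₀ : EuclideanSpace ℝ (Fin n)) (t₀ : ℝ) (ht₀ : 0 < t₀)
    (hatH : EuclideanSpace ℝ (Fin n) → ℝ → ℝ)
    (hhatH : ∀ y t, hatH y t
      = (4 * π * (t₀ - t)) ^ (-(n : ℝ) / 2)
          * Real.exp (-‖x₀ - y‖ ^ 2 / (4 * (t₀ - t))))
    (F D : ℝ → ℝ)
    (hF : ∀ t, F t = ∫ y, (-W y t) * u y t * hatH y t)
    (hD : ∀ t, D t = 2 * t * ∫ y,
      (∑ i, ∑ j, (hess i j (fun z => f z t) y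
          - (1 / (2 * t)) * (if i = j then 1 else 0)) ^ 2)
        * u y t * hatH y t) :
    ∀ t ∈ Set.Ioo (0 : ℝ) t₀, HasDerivAt F (D t) t ∧ 0 ≤ D t := by
  have hp := LT_pos hv hnn hne
  have hfe : ∀ t, 0 < t → (fun z => f z t) = fun y => ‖y‖ ^ 2 * (1 / (4 * t)) -
      Real.log (LT u₀ ((2 * t)⁻¹ • y) (1 / (4 * t))) := by
    intro t ht
    ext y
    rw [hf, hu, f_eq hv hnn hne y ht]
  have hue : ∀ y t, 0 < t → u y t = (4 * π * t) ^ (-(n : ℝ) / 2) * Real.exp (-‖y‖ ^ 2 / (4 * t)) *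
      LT u₀ ((2 * t)⁻¹ • y) (1 / (4 * t)) := fun y t ht => by rw [hu, u_eq _ _ ht]
  have hWe : ∀ y t, 0 < t → -W y t * LT u₀ ((2 * t)⁻¹ • y) (1 / (4 * t)) =
      PP u₀ ((2 * t)⁻¹ • y) (1 / (4 * t)) := by
    intro y t ht
    have hfy : f y t = _ := congrFun (hfe t ht) y
    have hL := (hp ((2 * t)⁻¹ • y) (1 / (4 * t))).ne'
    rw [hW, hfy, hfe t ht, grad_sq]
    simp only [lap, hess_f hv hnn hne, pdv_f hv hnn hne]
    have e1 : ‖y‖ ^ 2 = ∑ j, y j ^ 2 := by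
      rw [EuclideanSpace.norm_sq_eq]; simp
    rw [e1]
    simp only [PP, cov, PiLp.smul_apply, smul_eq_mul, if_true]
    generalize LT u₀ ((2 * t)⁻¹ • y) (1 / (4 * t)) = L at *
    have e2 : ∑ i : Fin n, (2 * (1 / (4 * t)) * 1 - (2 * t)⁻¹ ^ 2 *
        (LT (Xm i (Xm i u₀)) ((2 * t)⁻¹ • y) (1 / (4 * t)) * L⁻¹ -
          LT (Xm i u₀) ((2 * t)⁻¹ • y) (1 / (4 * t)) * LT (Xm i u₀) ((2 * t)⁻¹ • y) (1 / (4 * t))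
          * L⁻¹ ^ 2)) = n / (2 * t) - (2 * t)⁻¹ ^ 2 * L⁻¹ *
            (∑ i, LT (Xm i (Xm i u₀)) ((2 * t)⁻¹ • y) (1 / (4 * t))) +
            (2 * t)⁻¹ ^ 2 * L⁻¹ ^ 2 * ∑ i, LT (Xm i u₀) ((2 * t)⁻¹ • y) (1 / (4 * t)) ^ 2 := by
      rw [Finset.sum_sub_distrib, ← Finset.mul_sum, ← Finset.mul_sum, Finset.sum_sub_distrib, ← Finset.sum_mul,
        ← Finset.sum_mul]
      simp only [← sq]
      simp
      ring
    have e3 : ∑ j : Fin n, (2 * y j * (1 / (4 * t)) - (2 * t)⁻¹ *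
        (LT (Xm j u₀) ((2 * t)⁻¹ • y) (1 / (4 * t)) * L⁻¹)) ^ 2 =
        (2 * t)⁻¹ ^ 2 * ∑ j, y j ^ 2 - 2 * (2 * t)⁻¹ ^ 2 * L⁻¹ *
          (∑ j, y j * LT (Xm j u₀) ((2 * t)⁻¹ • y) (1 / (4 * t))) +
          (2 * t)⁻¹ ^ 2 * L⁻¹ ^ 2 * ∑ i, LT (Xm i u₀) ((2 * t)⁻¹ • y) (1 / (4 * t)) ^ 2 := by
      simp only [Finset.mul_sum, ← Finset.sum_add_distrib, ← Finset.sum_sub_distrib]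
      refine Finset.sum_congr rfl fun j _ => ?_
      field_simp
      ring
    rw [e2, e3]
    simp only [mul_assoc (2 * t)⁻¹, ← Finset.mul_sum, ← Finset.sum_mul]
    field_simp
    ring
  set c₀ := (4 * π * t₀) ^ (-(n : ℝ) / 2) * Real.exp (-‖x₀‖ ^ 2 / (4 * t₀)) with hc₀
  have hFe : ∀ t ∈ Set.Ioo (0 : ℝ) t₀, F t = c₀ * ∫ x, PP u₀ x (1 / (4 * t₀) +
      (1 / (4 * t) - 1 / (4 * t₀))) *
      heatK n x ((2 * t₀)⁻¹ • x₀) (1 / (4 * t) - 1 / (4 * t₀)) := by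
    intro t ht
    rw [add_sub_cancel, hF, ← change_var (fun x => PP u₀ x (1 / (4 * t))) x₀ ht.1 ht.2]
    congr 1; ext y
    rw [hue y t ht.1, hhatH, ← hWe y t ht.1]
    ring
  intro t ht
  have hDe : D t = (c₀ * ∫ x, BP u₀ x (1 / (4 * t₀) +
      (1 / (4 * t) - 1 / (4 * t₀))) *
      heatK n x ((2 * t₀)⁻¹ • x₀) (1 / (4 * t) - 1 / (4 * t₀))) * (-(1 / (4 * t ^ 2))) := by
    rw [add_sub_cancel, hD, ← change_var (fun x => BP u₀ x (1 / (4 * t))) x₀ ht.1 ht.2,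
      ← integral_const_mul, ← integral_mul_const]
    congr 1; ext y
    have ht0 := ht.1
    have e : ∀ i j, (hess i j (fun z => f z t) y - (1 / (2 * t)) * (if i = j then 1 else 0)) ^ 2
        = (2 * t)⁻¹ ^ 4 * cov u₀ i j ((2 * t)⁻¹ • y) (1 / (4 * t)) ^ 2 := by
      intro i j
      rw [hfe t ht.1, hess_f hv hnn hne]
      field_simp
      ring
    simp only [e, ← Finset.mul_sum]
    rw [hue y t ht.1, hhatH, BP]
    field_simp
    ring
  constructor
  · obtain ⟨g, hN⟩ := PP_nice hv hnn hne
    have ht0 := ht.1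
    have hr : 0 < 1 / (4 * t) - 1 / (4 * t₀) := by
      have := one_div_lt_one_div_of_lt (by linarith : 0 < 4 * t) (by linarith [ht.2] : 4 * t < 4 * t₀)
      linarith
    have h1 := (hN.hasDerivAt (1 / (4 * t₀)) ((2 * t₀)⁻¹ • x₀) hr).const_mul c₀
    have h2 : HasDerivAt (fun t : ℝ => 1 / (4 * t) - 1 / (4 * t₀)) (-(1 / (4 * t ^ 2))) t := by
      have := (((hasDerivAt_id' t).const_mul 4).fun_inv (by positivity)).sub_const (1 / (4 * t₀))
      simp only [← one_div] at this
      exact this.congr_deriv (by field_simp)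
    rw [hDe]
    refine (h1.comp t h2).congr_of_eventuallyEq ?_
    filter_upwards [Ioo_mem_nhds ht.1 ht.2] with t' ht'
    exact hFe t' ht'
  · rw [hD]
    refine mul_nonneg (by linarith [ht.1]) (integral_nonneg fun y => ?_)
    have h1 : 0 ≤ u y t := by
      rw [hue y t ht.1]
      have := hp ((2 * t)⁻¹ • y) (1 / (4 * t))
      have := ht.1
      positivity
    have h2 : 0 ≤ hatH y t := by
      rw [hhatH]
      have : 0 < t₀ - t := by linarith [ht.2]
      positivity
    exact mul_nonneg (mul_nonneg (Finset.sum_nonneg fun i _ => Finset.sum_nonneg fun j _ =>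
      sq_nonneg _) h1) h2

end EntAux

/-- Flat-space weighted entropy monotonicity (the linear analogue of Perelman's
estimate `v_H ≤ 0` from Section 4 of the paper):
`d/dt ∫ (-W) u Ĥ dy = 2t ∫ ‖∇²f - I/(2t)‖²_F u Ĥ dy ≥ 0`. -/
theorem stmt10 (n : ℕ) (hn : 1 ≤ n)
    (u₀ : EuclideanSpace ℝ (Fin n) → ℝ) (hc : Continuous u₀)
    (hsupp : HasCompactSupport u₀) (hnn : ∀ z, 0 ≤ u₀ z) (hne : ∃ z, u₀ z ≠ 0)
    (u : EuclideanSpace ℝ (Fin n) → ℝ → ℝ)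
    (hu : ∀ y t, u y t = ∫ z, heatK n y z t * u₀ z)
    (f : EuclideanSpace ℝ (Fin n) → ℝ → ℝ)
    (hf : ∀ y t, f y t = -Real.log (u y t) - (n / 2 : ℝ) * Real.log (4 * π * t))
    (W : EuclideanSpace ℝ (Fin n) → ℝ → ℝ)
    (hW : ∀ y t, W y t
      = t * (2 * lap (fun z => f z t) y - ‖gradient (fun z => f z t) y‖ ^ 2)
        + f y t - n)
    (x₀ : EuclideanSpace ℝ (Fin n)) (t₀ : ℝ) (ht₀ : 0 < t₀)
    (hatH : EuclideanSpace ℝ (Fin n) → ℝ → ℝ)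
    (hhatH : ∀ y t, hatH y t
      = (4 * π * (t₀ - t)) ^ (-(n : ℝ) / 2)
          * Real.exp (-‖x₀ - y‖ ^ 2 / (4 * (t₀ - t))))
    (F D : ℝ → ℝ)
    (hF : ∀ t, F t = ∫ y, (-W y t) * u y t * hatH y t)
    (hD : ∀ t, D t = 2 * t * ∫ y,
      (∑ i, ∑ j, (hess i j (fun z => f z t) y
          - (1 / (2 * t)) * (if i = j then 1 else 0)) ^ 2)
        * u y t * hatH y t) :
    ∀ t ∈ Set.Ioo (0 : ℝ) t₀, HasDerivAt F (D t) t ∧ 0 ≤ D t := by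
  exact EntAux.main_aux n u₀ ⟨hc, hsupp⟩ hnn hne u hu f hf W hW x₀ t₀ ht₀ hatH hhatH F D hF hD
end

section
/- Let T > 0 and let Υ : ℝⁿ × [0,T] → Sym(n,ℝ) be a smooth family of symmetric n×n matrices such that Υ and its first and second spatial derivatives are bounded, each entry satisfies the heat equation ∂Υ_{ij}/∂t = ΔΥ_{ij}, and Υ(·,0) is positive semidefinite at every point. Then for every (x,t) ∈ ℝⁿ × (0,T] and every vector V ∈ ℝⁿ: Σ_{i,j} ∂_i ∂_j Υ_{ij}(x,t) + 2 Σ_{i,j} (∂_i Υ_{ij}(x,t)) V_j + Σ_{i,j} Υ_{ij}(x,t) V_i V_j + (tr Υ(x,t))/t ≥ 0. -/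
open Real MeasureTheory Filter Set

theorem isOpenO {n : ℕ} (T : ℝ) : IsOpen ((Set.univ : Set (EuclideanSpace ℝ (Fin n))) ×ˢ Set.Ioo 0 T) :=
  isOpen_univ.prod isOpen_Ioo

/-- directional derivative -/
noncomputable def Dd {E : Type*} [NormedAddCommGroup E] [NormedSpace ℝ E] (v : E) (F : E → ℝ) : E → ℝ :=
  fun p => fderiv ℝ F p v

section gen
variable {E : Type*} [NormedAddCommGroup E] [NormedSpace ℝ E] {O : Set E} {F G : E → ℝ}

theorem Dd_smooth (hO : IsOpen O) (hF : ContDiffOn ℝ (⊤ : ℕ∞) F O) (v : E) :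
    ContDiffOn ℝ (⊤ : ℕ∞) (Dd v F) O := by
  have := hF.fderiv_of_isOpen (m := (⊤ : ℕ∞)) hO (by simp)
  exact this.clm_apply contDiffOn_const

theorem sm_diff (hO : IsOpen O) (hF : ContDiffOn ℝ (⊤ : ℕ∞) F O) {p : E} (hp : p ∈ O) :
    DifferentiableAt ℝ F p :=
  (hF.contDiffAt (hO.mem_nhds hp)).differentiableAt (by simp)

theorem Dd_congr (hO : IsOpen O) (h : ∀ p ∈ O, F p = G p) (v : E) :
    ∀ p ∈ O, Dd v F p = Dd v G p := by
  intro p hp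
  unfold Dd
  rw [Filter.EventuallyEq.fderiv_eq]
  filter_upwards [hO.mem_nhds hp] with q hq using h q hq

theorem Dd_add {p : E} (hF : DifferentiableAt ℝ F p) (hG : DifferentiableAt ℝ G p) (v : E) :
    Dd v (fun q => F q + G q) p = Dd v F p + Dd v G p := by
  unfold Dd
  rw [fderiv_fun_add hF hG]; rfl

theorem Dd_sub {p : E} (hF : DifferentiableAt ℝ F p) (hG : DifferentiableAt ℝ G p) (v : E) :
    Dd v (fun q => F q - G q) p = Dd v F p - Dd v G p := by
  unfold Dd
  rw [fderiv_fun_sub hF hG]; rfl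

theorem Dd_mul {p : E} (hF : DifferentiableAt ℝ F p) (hG : DifferentiableAt ℝ G p) (v : E) :
    Dd v (fun q => F q * G q) p = F p * Dd v G p + G p * Dd v F p := by
  unfold Dd
  rw [fderiv_fun_mul hF hG]; simp

theorem Dd_cmul {p : E} (hF : DifferentiableAt ℝ F p) (c : ℝ) (v : E) :
    Dd v (fun q => c * F q) p = c * Dd v F p := by
  unfold Dd
  rw [fderiv_const_mul hF]; simp

theorem Dd_sum {ι : Type*} (s : Finset ι) {F : ι → E → ℝ} {p : E}
    (hF : ∀ i ∈ s, DifferentiableAt ℝ (F i) p) (v : E) :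
    Dd v (fun q => ∑ i ∈ s, F i q) p = ∑ i ∈ s, Dd v (F i) p := by
  unfold Dd
  rw [fderiv_fun_sum hF]; simp

theorem Dd_comm (hO : IsOpen O) (hF : ContDiffOn ℝ (⊤ : ℕ∞) F O) (v w : E) :
    ∀ p ∈ O, Dd v (Dd w F) p = Dd w (Dd v F) p := by
  intro p hp
  have hs : IsSymmSndFDerivAt ℝ F p :=
    (hF.contDiffAt (hO.mem_nhds hp)).isSymmSndFDerivAt
      (by simp only [minSmoothness_of_isRCLikeNormedField]; exact WithTop.coe_le_coe.2 (le_top (a := (2 : ℕ∞))))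
  have hd : DifferentiableAt ℝ (fderiv ℝ F) p :=
    ((hF.fderiv_of_isOpen (m := (⊤ : ℕ∞)) hO (by simp)).contDiffAt (hO.mem_nhds hp)).differentiableAt (by simp)
  unfold Dd
  have e : ∀ v w : E, fderiv ℝ (fun p => fderiv ℝ F p w) p v = fderiv ℝ (fderiv ℝ F) p v w := by
    intro v w
    rw [fderiv_clm_apply hd (differentiableAt_const w)]
    simp
  rw [e, e, hs]

end gen

/-- spatial directions -/
noncomputable def eX {n : ℕ} (k : Fin n) : EuclideanSpace ℝ (Fin n) × ℝ := (EuclideanSpace.single k 1, 0)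
/-- time direction -/
noncomputable def eT {n : ℕ} : EuclideanSpace ℝ (Fin n) × ℝ := (0, 1)

/-- heat operator -/
noncomputable def Ht {n : ℕ} (F : EuclideanSpace ℝ (Fin n) × ℝ → ℝ) : EuclideanSpace ℝ (Fin n) × ℝ → ℝ :=
  fun p => Dd eT F p - ∑ k, Dd (eX k) (Dd (eX k) F) p

section heat
variable {n : ℕ} {O : Set (EuclideanSpace ℝ (Fin n) × ℝ)} {F G : EuclideanSpace ℝ (Fin n) × ℝ → ℝ}

theorem Ht_congr (hO : IsOpen O) (h : ∀ p ∈ O, F p = G p) :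
    ∀ p ∈ O, Ht F p = Ht G p := by
  intro p hp
  unfold Ht
  rw [Dd_congr hO h _ p hp]
  congr 1
  exact Finset.sum_congr rfl fun k _ => Dd_congr hO (Dd_congr hO h _) _ p hp

theorem Ht_add (hO : IsOpen O) (hF : ContDiffOn ℝ (⊤ : ℕ∞) F O) (hG : ContDiffOn ℝ (⊤ : ℕ∞) G O) :
    ∀ p ∈ O, Ht (fun q => F q + G q) p = Ht F p + Ht G p := by
  intro p hp
  unfold Ht
  rw [Dd_add (sm_diff hO hF hp) (sm_diff hO hG hp)]
  have : ∀ k : Fin n, Dd (eX k) (Dd (eX k) (fun q => F q + G q)) p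
      = Dd (eX k) (Dd (eX k) F) p + Dd (eX k) (Dd (eX k) G) p := by
    intro k
    rw [Dd_congr hO (fun q hq => Dd_add (sm_diff hO hF hq) (sm_diff hO hG hq) _) _ p hp,
      Dd_add (sm_diff hO (Dd_smooth hO hF _) hp) (sm_diff hO (Dd_smooth hO hG _) hp)]
  simp_rw [this, Finset.sum_add_distrib]
  ring

theorem Ht_cmul (hO : IsOpen O) (hF : ContDiffOn ℝ (⊤ : ℕ∞) F O) (c : ℝ) :
    ∀ p ∈ O, Ht (fun q => c * F q) p = c * Ht F p := by
  intro p hp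
  unfold Ht
  rw [Dd_cmul (sm_diff hO hF hp)]
  have : ∀ k : Fin n, Dd (eX k) (Dd (eX k) (fun q => c * F q)) p
      = c * Dd (eX k) (Dd (eX k) F) p := by
    intro k
    rw [Dd_congr hO (fun q hq => Dd_cmul (sm_diff hO hF hq) _ _) _ p hp,
      Dd_cmul (sm_diff hO (Dd_smooth hO hF _) hp)]
  simp_rw [this, ← Finset.mul_sum]
  ring

theorem Ht_sum (hO : IsOpen O) {ι : Type*} (s : Finset ι) {F : ι → EuclideanSpace ℝ (Fin n) × ℝ → ℝ}
    (hF : ∀ i, ContDiffOn ℝ (⊤ : ℕ∞) (F i) O) :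
    ∀ p ∈ O, Ht (fun q => ∑ i ∈ s, F i q) p = ∑ i ∈ s, Ht (F i) p := by
  intro p hp
  classical
  induction s using Finset.induction_on with
  | empty =>
    have : ∀ v : EuclideanSpace ℝ (Fin n) × ℝ, Dd v (fun _ => (0 : ℝ)) = fun _ => 0 := by
      intro v; funext q; simp [Dd]
    simp [Ht, this]
  | insert a s ha ih =>
    simp_rw [Finset.sum_insert ha]
    rw [Ht_add hO (hF a) (ContDiffOn.sum fun i _ => hF i) p hp, ih]

theorem Ht_Dd (hO : IsOpen O) (hF : ContDiffOn ℝ (⊤ : ℕ∞) F O) (h : ∀ p ∈ O, Ht F p = 0)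
    (v : EuclideanSpace ℝ (Fin n) × ℝ) : ∀ p ∈ O, Ht (Dd v F) p = 0 := by
  intro p hp
  have h1 : Dd v (Ht F) p = 0 := by
    rw [Dd_congr hO h _ p hp]; simp [Dd]
  rw [← h1]
  unfold Ht
  have hs := fun v => Dd_smooth hO hF v
  have hss := fun v w => Dd_smooth hO (hs v) w
  rw [Dd_sub (sm_diff hO (hs _) hp) (sm_diff hO (ContDiffOn.sum fun i _ => hss _ _) hp),
    Dd_sum _ (fun i _ => sm_diff hO (hss _ _) hp), Dd_comm hO hF _ _ p hp]
  congr 1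
  refine Finset.sum_congr rfl fun k _ => ?_
  rw [Dd_congr hO (Dd_comm hO hF _ _) _ p hp, Dd_comm hO (hs _) _ _ p hp]

theorem X_hasF (i : Fin n) (a : ℝ) (p : EuclideanSpace ℝ (Fin n) × ℝ) :
    HasFDerivAt (fun q : EuclideanSpace ℝ (Fin n) × ℝ => q.1 i + a)
      ((EuclideanSpace.proj i : EuclideanSpace ℝ (Fin n) →L[ℝ] ℝ).comp
        (ContinuousLinearMap.fst ℝ (EuclideanSpace ℝ (Fin n)) ℝ)) p := by
  refine HasFDerivAt.add_const a ?_
  exact ((EuclideanSpace.proj i : EuclideanSpace ℝ (Fin n) →L[ℝ] ℝ).comp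
        (ContinuousLinearMap.fst ℝ (EuclideanSpace ℝ (Fin n)) ℝ)).hasFDerivAt

theorem X_smooth (i : Fin n) (a : ℝ) : ContDiff ℝ (⊤ : ℕ∞)
    (fun q : EuclideanSpace ℝ (Fin n) × ℝ => q.1 i + a) := by
  fun_prop

theorem Dd_X (i : Fin n) (a : ℝ) (v p : EuclideanSpace ℝ (Fin n) × ℝ) :
    Dd v (fun q : EuclideanSpace ℝ (Fin n) × ℝ => q.1 i + a) p = v.1 i := by
  unfold Dd
  rw [(X_hasF i a p).fderiv]; simp

theorem Dd_T (v p : EuclideanSpace ℝ (Fin n) × ℝ) :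
    Dd v (fun q : EuclideanSpace ℝ (Fin n) × ℝ => q.2) p = v.2 := by
  unfold Dd
  rw [fderiv_snd]; simp

theorem Ht_X (hO : IsOpen O) (hF : ContDiffOn ℝ (⊤ : ℕ∞) F O) (i : Fin n) (a : ℝ) :
    ∀ p ∈ O, Ht (fun q => (q.1 i + a) * F q) p = (p.1 i + a) * Ht F p - 2 * Dd (eX i) F p := by
  intro p hp
  have hX : ∀ q, DifferentiableAt ℝ (fun q : EuclideanSpace ℝ (Fin n) × ℝ => q.1 i + a) q :=
    fun q => (X_hasF i a q).differentiableAt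
  have hm : ∀ v, ∀ q ∈ O, Dd v (fun q => (q.1 i + a) * F q) q
      = (q.1 i + a) * Dd v F q + v.1 i * F q := by
    intro v q hq
    rw [Dd_mul (hX q) (sm_diff hO hF hq), Dd_X]; ring
  have hs := fun v => Dd_smooth hO hF v
  have h2 : ∀ v, Dd v (Dd v (fun q => (q.1 i + a) * F q)) p
      = (p.1 i + a) * Dd v (Dd v F) p + 2 * (v.1 i * Dd v F p) := by
    intro v
    rw [Dd_congr hO (hm v) v p hp, Dd_add ((hX p).fun_mul (sm_diff hO (hs v) hp))
      ((sm_diff hO hF hp).const_mul _), Dd_mul (hX p) (sm_diff hO (hs v) hp), Dd_X,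
      Dd_cmul (sm_diff hO hF hp)]
    ring
  unfold Ht
  simp_rw [h2, hm eT p hp, Finset.sum_add_distrib, ← Finset.mul_sum]
  have : ∑ k, (eX k : EuclideanSpace ℝ (Fin n) × ℝ).1 i * Dd (eX k) F p = Dd (eX i) F p := by
    rw [Finset.sum_eq_single i]
    · simp [eX]
    · intro b _ hb
      simp [eX, hb.symm]
    · simp
  rw [this]
  simp [eT]; ring

theorem Ht_T (hO : IsOpen O) (hF : ContDiffOn ℝ (⊤ : ℕ∞) F O) :
    ∀ p ∈ O, Ht (fun q => q.2 * F q) p = p.2 * Ht F p + F p := by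
  intro p hp
  have hX : ∀ q, DifferentiableAt ℝ (fun q : EuclideanSpace ℝ (Fin n) × ℝ => q.2) q :=
    fun q => differentiableAt_snd
  have hm : ∀ v, ∀ q ∈ O, Dd v (fun q => q.2 * F q) q
      = q.2 * Dd v F q + v.2 * F q := by
    intro v q hq
    rw [Dd_mul (hX q) (sm_diff hO hF hq), Dd_T]; ring
  have hs := fun v => Dd_smooth hO hF v
  have h2 : ∀ k, Dd (eX k) (Dd (eX k) (fun q => q.2 * F q)) p
      = p.2 * Dd (eX k) (Dd (eX k) F) p := by
    intro k
    rw [Dd_congr hO (hm (eX k)) _ p hp, Dd_add ((hX p).fun_mul (sm_diff hO (hs _) hp))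
      ((sm_diff hO hF hp).const_mul _), Dd_mul (hX p) (sm_diff hO (hs _) hp), Dd_T,
      Dd_cmul (sm_diff hO hF hp)]
    simp [eX]
  unfold Ht
  simp_rw [h2, hm eT p hp, ← Finset.mul_sum]
  simp [eT]; ring

/-- Galilean operator -/
noncomputable def Lg (i : Fin n) (a : ℝ) (F : EuclideanSpace ℝ (Fin n) × ℝ → ℝ) :
    EuclideanSpace ℝ (Fin n) × ℝ → ℝ :=
  fun q => (q.1 i + a) * F q + 2 * (q.2 * Dd (eX i) F q)

theorem T_smooth : ContDiff ℝ (⊤ : ℕ∞)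
    (fun q : EuclideanSpace ℝ (Fin n) × ℝ => q.2) := contDiff_snd

theorem Lg_smooth (hO : IsOpen O) (hF : ContDiffOn ℝ (⊤ : ℕ∞) F O) (i : Fin n) (a : ℝ) :
    ContDiffOn ℝ (⊤ : ℕ∞) (Lg i a F) O :=
  ((X_smooth i a).contDiffOn.mul hF).add
    (contDiffOn_const.mul (T_smooth.contDiffOn.mul (Dd_smooth hO hF _)))

theorem Ht_Lg (hO : IsOpen O) (hF : ContDiffOn ℝ (⊤ : ℕ∞) F O) (h : ∀ p ∈ O, Ht F p = 0)
    (i : Fin n) (a : ℝ) : ∀ p ∈ O, Ht (Lg i a F) p = 0 := by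
  intro p hp
  have hs := Dd_smooth hO hF (eX i)
  unfold Lg
  rw [Ht_add hO ((X_smooth i a).contDiffOn.mul hF)
    (contDiffOn_const.mul (T_smooth.contDiffOn.mul hs)) p hp, Ht_X hO hF i a p hp,
    Ht_cmul hO (T_smooth.contDiffOn.mul hs) 2 p hp, Ht_T hO hs p hp, h p hp,
    Ht_Dd hO hF h _ p hp]
  ring

theorem LL_eq (hO : IsOpen O) (hF : ContDiffOn ℝ (⊤ : ℕ∞) F O) (i j : Fin n) (a b : ℝ) :
    ∀ p ∈ O, Lg i a (Lg j b F) p =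
      (p.1 i + a) * (p.1 j + b) * F p + 2 * p.2 * ((p.1 i + a) * Dd (eX j) F p)
      + 2 * p.2 * ((p.1 j + b) * Dd (eX i) F p)
      + (if i = j then 2 * p.2 * F p else 0) + 4 * p.2 ^ 2 * Dd (eX i) (Dd (eX j) F) p := by
  intro p hp
  have hs := Dd_smooth hO hF (eX j)
  have hX := (X_hasF j b p).differentiableAt
  have hT : DifferentiableAt ℝ (fun q : EuclideanSpace ℝ (Fin n) × ℝ => q.2) p :=
    differentiableAt_snd
  have : Dd (eX i) (Lg j b F) p = (p.1 j + b) * Dd (eX i) F p + (if i = j then F p else 0)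
      + 2 * p.2 * Dd (eX i) (Dd (eX j) F) p := by
    unfold Lg
    rw [Dd_add (hX.fun_mul (sm_diff hO hF hp)) ((hT.fun_mul (sm_diff hO hs hp)).const_mul _),
      Dd_mul hX (sm_diff hO hF hp), Dd_cmul (hT.fun_mul (sm_diff hO hs hp)),
      Dd_mul hT (sm_diff hO hs hp), Dd_X, Dd_T]
    have : (eX i : EuclideanSpace ℝ (Fin n) × ℝ).1 j = if i = j then 1 else 0 := by
      simp [eX, eq_comm]
    rw [this]
    split_ifs <;> simp [eX] <;> ring
  show (p.1 i + a) * Lg j b F p + 2 * (p.2 * Dd (eX i) (Lg j b F) p) = _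
  rw [this]
  unfold Lg
  split_ifs <;> ring

end heat

section maxp
variable {n : ℕ}

theorem cosh_lb (z : ℝ) : z ^ 4 / 32 ≤ Real.cosh z := by
  have h1 : ∀ x : ℝ, 1 + x ^ 2 / 2 ≤ Real.cosh x := by
    intro x
    have h := Real.cosh_two_mul (x / 2)
    rw [Real.cosh_sq, mul_div_cancel₀ x (two_ne_zero)] at h
    have : (x / 2) ^ 2 ≤ Real.sinh (x / 2) ^ 2 := by
      rcases le_total 0 (x / 2) with hx | hx
      · have := Real.self_le_sinh_iff.2 hx
        nlinarith
      · have := Real.sinh_le_self_iff.2 hx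
        nlinarith
    rw [h]; nlinarith
  have h := Real.cosh_two_mul (z / 2)
  rw [mul_div_cancel₀ z (two_ne_zero), Real.sinh_sq] at h
  have := h1 (z / 2)
  rw [h]
  have h2 : 0 ≤ 1 + (z / 2) ^ 2 / 2 := by positivity
  nlinarith [mul_self_le_mul_self h2 this, sq_nonneg z]

theorem second_deriv_nonneg {g : ℝ → ℝ} {x : ℝ} (h : IsLocalMin g x) (hc : ContinuousAt g x) :
    0 ≤ deriv (deriv g) x := by
  by_contra! hneg
  have hmax := isLocalMax_of_deriv_deriv_neg hneg h.deriv_eq_zero hc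
  have he : g =ᶠ[nhds x] fun _ => g x := by
    filter_upwards [h, hmax] with y h1 h2 using le_antisymm h2 h1
  have h1 : deriv g =ᶠ[nhds x] deriv fun _ => g x := he.deriv
  rw [h1.deriv_eq] at hneg
  simp at hneg

/-- barrier -/
noncomputable def bar : EuclideanSpace ℝ (Fin n) × ℝ → ℝ :=
  fun p => ∑ k, Real.exp (2 * p.2) * Real.cosh (p.1 k)

theorem bar_smooth : ContDiff ℝ (⊤ : ℕ∞) (bar (n := n)) := by
  unfold bar
  refine ContDiff.sum fun k _ => ?_
  have := X_smooth k 0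
  simp only [add_zero] at this
  exact (Real.contDiff_exp.comp (contDiff_const.mul contDiff_snd)).mul (Real.contDiff_cosh.comp this)

theorem Dd_exp_cosh (k : Fin n) (v p : EuclideanSpace ℝ (Fin n) × ℝ) :
    Dd v (fun p => Real.exp (2 * p.2) * Real.cosh (p.1 k)) p
      = Real.exp (2 * p.2) * (2 * v.2 * Real.cosh (p.1 k) + v.1 k * Real.sinh (p.1 k)) := by
  have h1 := X_hasF k 0 p
  simp only [add_zero] at h1
  have h2 : HasFDerivAt (fun q : EuclideanSpace ℝ (Fin n) × ℝ => q.2) (ContinuousLinearMap.snd ℝ _ ℝ) p := hasFDerivAt_snd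
  unfold Dd
  rw [((h2.const_mul 2).exp.fun_mul h1.cosh).fderiv]
  simp; ring

theorem Dd_exp_sinh (k : Fin n) (c : ℝ) (v p : EuclideanSpace ℝ (Fin n) × ℝ) :
    Dd v (fun p => Real.exp (2 * p.2) * (c * Real.sinh (p.1 k))) p
      = Real.exp (2 * p.2) * (c * (2 * v.2 * Real.sinh (p.1 k) + v.1 k * Real.cosh (p.1 k))) := by
  have h1 := X_hasF k 0 p
  simp only [add_zero] at h1
  have h2 : HasFDerivAt (fun q : EuclideanSpace ℝ (Fin n) × ℝ => q.2) (ContinuousLinearMap.snd ℝ _ ℝ) p := hasFDerivAt_snd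
  unfold Dd
  rw [((h2.const_mul 2).exp.fun_mul (h1.sinh.const_mul c)).fderiv]
  simp; ring

theorem Ht_bar (p : EuclideanSpace ℝ (Fin n) × ℝ) : Ht bar p = bar p := by
  unfold bar
  rw [Ht_sum isOpen_univ _ (fun k => ?_) p (mem_univ p)]
  · refine Finset.sum_congr rfl fun k _ => ?_
    unfold Ht
    have : ∀ i : Fin n, Dd (eX i) (Dd (eX i) (fun p => Real.exp (2 * p.2) * Real.cosh (p.1 k))) p
        = if i = k then Real.exp (2 * p.2) * Real.cosh (p.1 k) else 0 := by
      intro i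
      have h : Dd (eX i) (fun p => Real.exp (2 * p.2) * Real.cosh (p.1 k)) =
          fun p => Real.exp (2 * p.2) * ((eX i : EuclideanSpace ℝ (Fin n) × ℝ).1 k * Real.sinh (p.1 k)) := by
        funext q
        rw [Dd_exp_cosh]; simp [eX]
      rw [h, Dd_exp_sinh]
      by_cases hik : i = k
      · subst hik; simp [eX]
      · have : k ≠ i := fun h => hik h.symm
        simp [eX, hik, this]
    simp_rw [this]
    rw [Dd_exp_cosh]
    simp [eT]; ring
  · have := X_smooth k 0
    simp only [add_zero] at this
    exact ((Real.contDiff_exp.comp (contDiff_const.mul contDiff_snd)).mul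
      (Real.contDiff_cosh.comp this)).contDiffOn

theorem line_hasDeriv {E : Type*} [NormedAddCommGroup E] [NormedSpace ℝ E] {w : E → ℝ} {p v : E} {s : ℝ}
    (h : DifferentiableAt ℝ w (p + s • v)) :
    HasDerivAt (fun s : ℝ => w (p + s • v)) (Dd v w (p + s • v)) s := by
  have h1 : HasDerivAt (fun s : ℝ => p + s • v) v s := by
    simpa using ((hasDerivAt_id s).smul_const v).const_add p
  exact h.hasFDerivAt.comp_hasDerivAt s h1

theorem Ht_le_of_min {T : ℝ} {w : EuclideanSpace ℝ (Fin n) × ℝ → ℝ}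
    (hw : ContDiffOn ℝ (⊤ : ℕ∞) w (Set.univ ×ˢ Set.Ioo 0 T))
    {p : EuclideanSpace ℝ (Fin n) × ℝ} (hp : p ∈ (Set.univ : Set (EuclideanSpace ℝ (Fin n))) ×ˢ Set.Ioo 0 T)
    (hmin : ∀ y, ∀ t ∈ Set.Icc 0 p.2, w p ≤ w (y, t)) : Ht w p ≤ 0 := by
  have hO := isOpenO (n := n) T
  have hpt : p.2 ∈ Set.Ioo 0 T := hp.2
  have hx : ∀ k, 0 ≤ Dd (eX k) (Dd (eX k) w) p := by
    intro k
    have hin : ∀ s : ℝ, p + s • eX k ∈ (Set.univ : Set (EuclideanSpace ℝ (Fin n))) ×ˢ Set.Ioo 0 T := by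
      intro s
      refine ⟨mem_univ _, ?_⟩
      simpa [eX] using hpt
    have h1 : ∀ s, HasDerivAt (fun s : ℝ => w (p + s • eX k)) (Dd (eX k) w (p + s • eX k)) s :=
      fun s => line_hasDeriv (sm_diff hO hw (hin s))
    have h2 : deriv (fun s : ℝ => w (p + s • eX k)) = fun s => Dd (eX k) w (p + s • eX k) :=
      funext fun s => (h1 s).deriv
    have h3 := (line_hasDeriv (s := 0) (v := eX k) (p := p)
      (sm_diff hO (Dd_smooth hO hw (eX k)) (hin 0))).deriv
    have h4 : IsLocalMin (fun s : ℝ => w (p + s • eX k)) 0 := by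
      refine Filter.Eventually.of_forall fun s => ?_
      have := hmin (p + s • eX k).1 p.2 ⟨hpt.1.le, le_rfl⟩
      have e : (p + s • eX k) = ((p + s • eX k).1, p.2) := by
        ext <;> simp [eX]
      simp only [zero_smul, add_zero]
      rw [e]; exact this
    have h5 := second_deriv_nonneg h4 (h1 0).continuousAt
    rw [h2, h3] at h5
    simpa using h5
  have ht : Dd eT w p ≤ 0 := by
    have h1 := line_hasDeriv (s := 0) (v := eT) (p := p) (w := w)
      (by simpa using sm_diff hO hw hp)
    have h4 : IsLocalMinOn (fun s : ℝ => w (p + s • eT)) (Set.Icc (-p.2) 0) 0 := by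
      refine Filter.eventually_of_mem self_mem_nhdsWithin fun s hs => ?_
      have := hmin p.1 (p.2 + s) ⟨by linarith [hs.1], by linarith [hs.2]⟩
      have e : (p + s • eT) = (p.1, p.2 + s) := by
        ext <;> simp [eT]
      simp only [zero_smul, add_zero]
      rw [e]; exact this
    have h5 := h4.hasFDerivWithinAt_nonneg h1.hasFDerivAt.hasFDerivWithinAt
      (y := -p.2) (by
        apply mem_posTangentConeAt_of_segment_subset
        rw [zero_add, segment_symm, segment_eq_Icc (by linarith [hpt.1])])
    simp at h5
    nlinarith [hpt.1]
  unfold Ht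
  have := Finset.sum_nonneg fun k (_ : k ∈ Finset.univ) => hx k
  linarith

theorem maxp (hn : 1 ≤ n) {T : ℝ} {u : EuclideanSpace ℝ (Fin n) × ℝ → ℝ}
    (hc : ContinuousOn u (Set.univ ×ˢ Set.Icc 0 T))
    (hs : ContDiffOn ℝ (⊤ : ℕ∞) u (Set.univ ×ˢ Set.Ioo 0 T))
    (hH : ∀ p ∈ (Set.univ : Set (EuclideanSpace ℝ (Fin n))) ×ˢ Set.Ioo 0 T, Ht u p = 0)
    {K1 K2 : ℝ}
    (hlb : ∀ y, ∀ t ∈ Set.Icc 0 T, -(K1 * ‖y‖ ^ 2 + K2) ≤ u (y, t))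
    (h0 : ∀ y, 0 ≤ u (y, 0)) : ∀ y, ∀ t ∈ Set.Ioo 0 T, 0 ≤ u (y, t) := by
  intro y1 t1 ht1
  have hO := isOpenO (n := n) T
  have : Nonempty (Fin n) := ⟨⟨0, hn⟩⟩
  have hbpos : ∀ p : EuclideanSpace ℝ (Fin n) × ℝ, 0 < bar p := by
    intro p
    unfold bar
    exact Finset.sum_pos (fun k _ => mul_pos (Real.exp_pos _) (Real.cosh_pos _)) Finset.univ_nonempty
  have key : ∀ ε : ℝ, 0 < ε → 0 ≤ u (y1, t1) + ε * bar (y1, t1) := by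
    intro ε hε
    by_contra! hneg
    set w : EuclideanSpace ℝ (Fin n) × ℝ → ℝ := fun p => u p + ε * bar p with hw
    have hws : ContDiffOn ℝ (⊤ : ℕ∞) w (Set.univ ×ˢ Set.Ioo 0 T) :=
      hs.add (contDiffOn_const.mul bar_smooth.contDiffOn)
    have hwc : ContinuousOn w (Set.univ ×ˢ Set.Icc 0 T) :=
      hc.add (continuousOn_const.mul bar_smooth.continuous.continuousOn)
    set M : ℝ := 8 * (K1 + 1) ^ 2 / ε with hM
    have hgrow : ∀ y, ∀ t ∈ Set.Icc 0 T, ‖y‖ ^ 2 - (K2 + n * M) ≤ w (y, t) := by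
      intro y t ht
      have h1 := hlb y t ht
      have h2 : (K1 + 1) * ‖y‖ ^ 2 - n * M ≤ ε * bar (y, t) := by
        rw [EuclideanSpace.real_norm_sq_eq]
        unfold bar
        rw [Finset.mul_sum, Finset.mul_sum]
        have : (n : ℝ) * M = ∑ k : Fin n, M := by simp
        rw [this, ← Finset.sum_sub_distrib]
        refine Finset.sum_le_sum fun k _ => ?_
        have h3 := cosh_lb (y k)
        have h4 : 1 ≤ Real.exp (2 * t) := Real.one_le_exp (by linarith [ht.1])
        have h5 : (y k) ^ 4 / 32 ≤ Real.exp (2 * t) * Real.cosh (y k) := by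
          nlinarith [Real.cosh_pos (y k)]
        have h6 : (K1 + 1) * (y k) ^ 2 - M ≤ ε * ((y k) ^ 4 / 32) := by
          have : ε * ((y k) ^ 4 / 32) - ((K1 + 1) * (y k) ^ 2 - M)
              = (ε * (y k) ^ 2 - 16 * (K1 + 1)) ^ 2 / (32 * ε) := by
            rw [hM]; field_simp; ring
          have h7 : 0 ≤ (ε * (y k) ^ 2 - 16 * (K1 + 1)) ^ 2 / (32 * ε) := by positivity
          linarith
        exact h6.trans (mul_le_mul_of_nonneg_left h5 hε.le)
      simp only [hw]
      linarith
    set R : ℝ := |K2 + n * M| + 1 + ‖y1‖ with hR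
    have hR1 : 1 ≤ R := by rw [hR]; linarith [abs_nonneg (K2 + n * M), norm_nonneg y1]
    have hout : ∀ y, ∀ t ∈ Set.Icc 0 T, R < ‖y‖ → 0 ≤ w (y, t) := by
      intro y t ht hy
      have := hgrow y t ht
      have h2 : R ≤ ‖y‖ ^ 2 := by nlinarith
      have := le_abs_self (K2 + n * M)
      linarith [norm_nonneg y1]
    have hcomp : IsCompact (Metric.closedBall (0 : EuclideanSpace ℝ (Fin n)) R ×ˢ Set.Icc 0 t1) :=
      (isCompact_closedBall _ _).prod isCompact_Icc
    have hsub : Set.Icc 0 t1 ⊆ Set.Icc 0 T := Set.Icc_subset_Icc le_rfl ht1.2.le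
    have hmem1 : (y1, t1) ∈ Metric.closedBall (0 : EuclideanSpace ℝ (Fin n)) R ×ˢ Set.Icc 0 t1 := by
      refine ⟨?_, ht1.1.le, le_rfl⟩
      simp only [mem_closedBall_zero_iff, hR]
      linarith [abs_nonneg (K2 + n * M)]
    obtain ⟨p, hp, hpm⟩ := hcomp.exists_isMinOn ⟨_, hmem1⟩
      (hwc.mono (Set.prod_mono (Set.subset_univ _) hsub))
    have hpneg : w p < 0 := lt_of_le_of_lt (hpm hmem1) hneg
    have hp2 : p.2 ∈ Set.Icc 0 t1 := hp.2
    have hp0 : 0 < p.2 := by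
      rcases hp2.1.lt_or_eq with h | h
      · exact h
      · exfalso
        have e : p = (p.1, 0) := by ext <;> simp [h]
        have := h0 p.1
        have hb := hbpos p
        rw [← e] at this
        have : 0 < w p := by simp only [hw]; positivity
        linarith
    have hpO : p ∈ (Set.univ : Set (EuclideanSpace ℝ (Fin n))) ×ˢ Set.Ioo 0 T :=
      ⟨mem_univ _, hp0, lt_of_le_of_lt hp2.2 ht1.2⟩
    have hle := Ht_le_of_min hws hpO (by
      intro y t ht
      have ht' : t ∈ Set.Icc 0 t1 := ⟨ht.1, ht.2.trans hp2.2⟩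
      by_cases hy : R < ‖y‖
      · exact hpneg.le.trans (hout y t (hsub ht') hy)
      · exact hpm (a := (y, t)) ⟨by simpa using hy, ht'⟩)
    rw [hw, Ht_add hO hs (contDiffOn_const.mul bar_smooth.contDiffOn) p hpO, hH p hpO,
      Ht_cmul hO bar_smooth.contDiffOn ε p hpO, Ht_bar] at hle
    have := mul_pos hε (hbpos p)
    linarith
  by_contra! hneg
  have hb := hbpos (y1, t1)
  have := key (-u (y1, t1) / (2 * bar (y1, t1))) (by apply div_pos <;> linarith)
  have e : -u (y1, t1) / (2 * bar (y1, t1)) * bar (y1, t1) = -u (y1, t1) / 2 := by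
    field_simp
  rw [e] at this
  linarith

theorem maxp' (hn : 1 ≤ n) {T : ℝ} (hT : 0 < T) {u : EuclideanSpace ℝ (Fin n) × ℝ → ℝ}
    (hc : ContinuousOn u (Set.univ ×ˢ Set.Icc 0 T))
    (hs : ContDiffOn ℝ (⊤ : ℕ∞) u (Set.univ ×ˢ Set.Ioo 0 T))
    (hH : ∀ p ∈ (Set.univ : Set (EuclideanSpace ℝ (Fin n))) ×ˢ Set.Ioo 0 T, Ht u p = 0)
    {K1 K2 : ℝ}
    (hlb : ∀ y, ∀ t ∈ Set.Icc 0 T, -(K1 * ‖y‖ ^ 2 + K2) ≤ u (y, t))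
    (h0 : ∀ y, 0 ≤ u (y, 0)) : ∀ y, ∀ t ∈ Set.Icc 0 T, 0 ≤ u (y, t) := by
  intro y t ht
  have h := maxp hn hc hs hH hlb h0 y
  have hc' : ContinuousOn (fun t => u (y, t)) (Set.Icc 0 T) := by
    refine hc.comp (by fun_prop) ?_
    intro s hs
    exact ⟨mem_univ _, hs⟩
  rw [← closure_Ioo hT.ne] at ht hc'
  have := hc'.image_closure
  have h2 := this (mem_image_of_mem _ ht)
  have h3 : closure ((fun t => u (y, t)) '' Set.Ioo 0 T) ⊆ Set.Ici 0 := by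
    refine closure_minimal ?_ isClosed_Ici
    rintro _ ⟨s, hs, rfl⟩
    exact h s hs
  exact h3 h2

end maxp

section fin
variable {n : ℕ} {T : ℝ} {F : EuclideanSpace ℝ (Fin n) × ℝ → ℝ}

/-- spatial derivative as a function of space-time -/
noncomputable def Pd (k : Fin n) (F : EuclideanSpace ℝ (Fin n) × ℝ → ℝ) : EuclideanSpace ℝ (Fin n) × ℝ → ℝ :=
  fun p => pdv k (fun z => F (z, p.2)) p.1

theorem Pd_eq_within (hF : ContDiffOn ℝ (⊤ : ℕ∞) F (Set.univ ×ˢ Set.Icc 0 T)) (k : Fin n)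
    {p : EuclideanSpace ℝ (Fin n) × ℝ} (hp : p ∈ (Set.univ : Set (EuclideanSpace ℝ (Fin n))) ×ˢ Set.Icc 0 T) :
    Pd k F p = fderivWithin ℝ F (Set.univ ×ˢ Set.Icc 0 T) p (eX k) := by
  have h1 : HasFDerivWithinAt F (fderivWithin ℝ F (Set.univ ×ˢ Set.Icc 0 T) p) (Set.univ ×ˢ Set.Icc 0 T)
      ((fun z => (z, p.2)) p.1) := ((hF.differentiableOn (by simp)) p hp).hasFDerivWithinAt
  have h2 : HasFDerivAt (fun z : EuclideanSpace ℝ (Fin n) => (z, p.2))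
      ((ContinuousLinearMap.id ℝ _).prod 0) p.1 := (hasFDerivAt_id _).prodMk (hasFDerivAt_const _ _)
  have h3 := h1.comp_hasFDerivAt p.1 h2 (Filter.Eventually.of_forall
    (fun z => Set.mk_mem_prod (mem_univ z) hp.2))
  unfold Pd pdv
  have := h3.fderiv
  simp only [Function.comp_def] at this
  rw [this]
  simp [eX]

theorem Pd_smooth (hT : 0 < T) (hF : ContDiffOn ℝ (⊤ : ℕ∞) F (Set.univ ×ˢ Set.Icc 0 T)) (k : Fin n) :
    ContDiffOn ℝ (⊤ : ℕ∞) (Pd k F) (Set.univ ×ˢ Set.Icc 0 T) := by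
  have hu : UniqueDiffOn ℝ ((Set.univ : Set (EuclideanSpace ℝ (Fin n))) ×ˢ Set.Icc 0 T) :=
    uniqueDiffOn_univ.prod (uniqueDiffOn_Icc hT)
  have h := (hF.fderivWithin (m := (⊤ : ℕ∞)) hu (by simp)).clm_apply
    (contDiffOn_const (c := (eX k : EuclideanSpace ℝ (Fin n) × ℝ)))
  exact h.congr fun p hp => Pd_eq_within hF k hp

theorem O_sub : (Set.univ : Set (EuclideanSpace ℝ (Fin n))) ×ˢ Set.Ioo 0 T ⊆ Set.univ ×ˢ Set.Icc 0 T :=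
  Set.prod_mono le_rfl Set.Ioo_subset_Icc_self

theorem Pd_eq (hF : ContDiffOn ℝ (⊤ : ℕ∞) F (Set.univ ×ˢ Set.Icc 0 T)) (k : Fin n) :
    ∀ p ∈ (Set.univ : Set (EuclideanSpace ℝ (Fin n))) ×ˢ Set.Ioo 0 T, Pd k F p = Dd (eX k) F p := by
  intro p hp
  rw [Pd_eq_within hF k (O_sub hp)]
  unfold Dd
  rw [fderivWithin_of_mem_nhds]
  exact Filter.mem_of_superset ((isOpenO T).mem_nhds hp) O_sub

theorem PdPd_eq (hT : 0 < T) (hF : ContDiffOn ℝ (⊤ : ℕ∞) F (Set.univ ×ˢ Set.Icc 0 T)) (k l : Fin n) :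
    ∀ p ∈ (Set.univ : Set (EuclideanSpace ℝ (Fin n))) ×ˢ Set.Ioo 0 T,
      Pd k (Pd l F) p = Dd (eX k) (Dd (eX l) F) p := by
  intro p hp
  rw [Pd_eq (Pd_smooth hT hF l) k p hp]
  exact Dd_congr (isOpenO T) (Pd_eq hF l) _ p hp

theorem Ht_zero (hT : 0 < T) (hF : ContDiffOn ℝ (⊤ : ℕ∞) F (Set.univ ×ˢ Set.Icc 0 T))
    (h : ∀ y, ∀ t ∈ Set.Icc 0 T, deriv (fun s => F (y, s)) t = lap (fun z => F (z, t)) y) :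
    ∀ p ∈ (Set.univ : Set (EuclideanSpace ℝ (Fin n))) ×ˢ Set.Ioo 0 T, Ht F p = 0 := by
  intro p hp
  have h1 := h p.1 p.2 (O_sub hp).2
  have hd : HasFDerivAt F (fderiv ℝ F p) ((fun s => (p.1, s)) p.2) :=
    (sm_diff (isOpenO T) (hF.mono O_sub) hp).hasFDerivAt
  have h2 : HasDerivAt (fun s : ℝ => (p.1, s)) (0, 1) p.2 :=
    (hasDerivAt_const _ _).prodMk (hasDerivAt_id _)
  have h3 := (hd.comp_hasDerivAt p.2 h2).deriv
  simp only [Function.comp_def] at h3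
  rw [h1] at h3
  have h4 : lap (fun z => F (z, p.2)) p.1 = ∑ k, Dd (eX k) (Dd (eX k) F) p :=
    Finset.sum_congr rfl fun k _ => PdPd_eq hT hF k k p hp
  unfold Ht
  rw [← h4, h3]
  simp [Dd, eT]

end fin

/-- Flat static-metric Li–Yau–Hamilton estimate for symmetric tensors evolving
entrywise by the heat equation (Theorem 4 of the paper in the case of ℝⁿ):
if `Υ(·,0) ≥ 0`, then for all `t ∈ (0,T]` and every vector `V`,
`Σ ∂ᵢ∂ⱼΥᵢⱼ + 2 Σ (∂ᵢΥᵢⱼ)Vⱼ + Σ Υᵢⱼ Vᵢ Vⱼ + (tr Υ)/t ≥ 0`. -/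
theorem stmt15 (n : ℕ) (hn : 1 ≤ n) (T : ℝ) (hT : 0 < T)
    (Υ : EuclideanSpace ℝ (Fin n) → ℝ → Fin n → Fin n → ℝ)
    (hsmooth : ∀ i j, ContDiffOn ℝ (⊤ : ℕ∞)
      (fun p : (EuclideanSpace ℝ (Fin n)) × ℝ => Υ p.1 p.2 i j)
      (Set.univ ×ˢ Set.Icc 0 T))
    (hsymm : ∀ y t i j, Υ y t i j = Υ y t j i)
    (hbdd : ∃ C : ℝ, ∀ (y : EuclideanSpace ℝ (Fin n)), ∀ t ∈ Set.Icc (0 : ℝ) T,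
      ∀ i j, |Υ y t i j| ≤ C
        ∧ (∀ k, |pdv k (fun z => Υ z t i j) y| ≤ C)
        ∧ (∀ k l, |hess k l (fun z => Υ z t i j) y| ≤ C))
    (hheat : ∀ (y : EuclideanSpace ℝ (Fin n)), ∀ t ∈ Set.Icc (0 : ℝ) T, ∀ i j,
      deriv (fun s => Υ y s i j) t = lap (fun z => Υ z t i j) y)
    (hpsd : ∀ (y : EuclideanSpace ℝ (Fin n)) (V : Fin n → ℝ),
      0 ≤ ∑ i, ∑ j, Υ y 0 i j * V i * V j) :
    ∀ (x : EuclideanSpace ℝ (Fin n)), ∀ t ∈ Set.Ioc (0 : ℝ) T, ∀ V : Fin n → ℝ,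
      0 ≤ (∑ i, ∑ j, hess i j (fun z => Υ z t i j) x)
          + 2 * (∑ i, ∑ j, pdv i (fun z => Υ z t i j) x * V j)
          + (∑ i, ∑ j, Υ x t i j * V i * V j)
          + (∑ i, Υ x t i i) / t := by
  obtain ⟨C, hC⟩ := hbdd
  intro x t ht V
  have hO := isOpenO (n := n) T
  have htI : t ∈ Set.Icc 0 T := ⟨ht.1.le, ht.2⟩
  set F : Fin n → Fin n → EuclideanSpace ℝ (Fin n) × ℝ → ℝ := fun i j p => Υ p.1 p.2 i j with hFdef
  have hF : ∀ i j, ContDiffOn ℝ (⊤ : ℕ∞) (F i j) (Set.univ ×ˢ Set.Icc 0 T) := hsmooth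
  have hFO := fun i j => (hF i j).mono O_sub
  have hFH : ∀ i j, ∀ p ∈ (Set.univ : Set (EuclideanSpace ℝ (Fin n))) ×ˢ Set.Ioo 0 T, Ht (F i j) p = 0 :=
    fun i j => Ht_zero hT (hF i j) (fun y t ht => hheat y t ht i j)
  have hFs : ∀ i j, F i j = F j i := fun i j => funext fun p => hsymm p.1 p.2 i j
  have hC0 : 0 ≤ C := (abs_nonneg _).trans (hC x t htI ⟨0, hn⟩ ⟨0, hn⟩).1
  -- diagonal entries are nonnegative
  have hdiag : ∀ i, 0 ≤ Υ x t i i := by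
    intro i
    refine maxp' hn hT (u := F i i) (hF i i).continuousOn (hFO i i) (hFH i i) (K1 := 0) (K2 := C)
      ?_ ?_ x t htI
    · intro y s hs
      have := neg_le_of_abs_le (hC y s hs i i).1
      simpa using this
    · intro y
      have := hpsd y (Pi.single i 1)
      simpa [Pi.single_apply] using this
  have htr : 0 ≤ (∑ i, Υ x t i i) / t :=
    div_nonneg (Finset.sum_nonneg fun i _ => hdiag i) ht.1.le
  set a : Fin n → ℝ := fun i => 2 * t * V i - x i with ha
  set f : Fin n → Fin n → EuclideanSpace ℝ (Fin n) × ℝ → ℝ := fun i j p =>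
    (p.1 i + a i) * (p.1 j + a j) * F i j p + 2 * p.2 * ((p.1 i + a i) * Pd j (F i j) p)
      + 2 * p.2 * ((p.1 j + a j) * Pd i (F i j) p)
      + (if i = j then 2 * p.2 * F i j p else 0) + 4 * p.2 ^ 2 * Pd i (Pd j (F i j)) p with hf
  have hfL : ∀ i j, ∀ p ∈ (Set.univ : Set (EuclideanSpace ℝ (Fin n))) ×ˢ Set.Ioo 0 T,
      f i j p = Lg i (a i) (Lg j (a j) (F i j)) p := by
    intro i j p hp
    rw [LL_eq hO (hFO i j) i j _ _ p hp, hf]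
    simp only
    rw [PdPd_eq hT (hF i j) i j p hp, Pd_eq (hF i j) i p hp, Pd_eq (hF i j) j p hp]
  have hfO : ∀ i j, ContDiffOn ℝ (⊤ : ℕ∞) (f i j) (Set.univ ×ˢ Set.Ioo 0 T) := fun i j =>
    (Lg_smooth hO (Lg_smooth hO (hFO i j) j (a j)) i (a i)).congr (hfL i j)
  have hfH : ∀ i j, ∀ p ∈ (Set.univ : Set (EuclideanSpace ℝ (Fin n))) ×ˢ Set.Ioo 0 T, Ht (f i j) p = 0 := by
    intro i j p hp
    rw [Ht_congr hO (hfL i j) p hp]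
    exact Ht_Lg hO (Lg_smooth hO (hFO i j) j (a j)) (Ht_Lg hO (hFO i j) (hFH i j) j (a j)) i (a i) p hp
  have hfc : ∀ i j, ContinuousOn (f i j) (Set.univ ×ˢ Set.Icc 0 T) := by
    intro i j
    have c0 := (hF i j).continuousOn
    have c1 := (Pd_smooth hT (hF i j) i).continuousOn
    have c2 := (Pd_smooth hT (hF i j) j).continuousOn
    have c3 := (Pd_smooth hT (Pd_smooth hT (hF i j) j) i).continuousOn
    have x1 := (X_smooth i (a i)).continuous.continuousOn (s := Set.univ ×ˢ Set.Icc 0 T)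
    have x2 := (X_smooth j (a j)).continuous.continuousOn (s := Set.univ ×ˢ Set.Icc 0 T)
    have c4 : ContinuousOn (fun p : EuclideanSpace ℝ (Fin n) × ℝ => if i = j then 2 * p.2 * F i j p else 0)
        (Set.univ ×ˢ Set.Icc 0 T) := by
      split_ifs
      · fun_prop
      · fun_prop
    simp only [hf]
    fun_prop
  have hflb : ∀ i j, ∀ y, ∀ s ∈ Set.Icc 0 T,
      -(C * 4 * ‖y‖ ^ 2 + C * (4 * ‖a‖ ^ 2 + 8 * T ^ 2 + 2 * T)) ≤ f i j (y, s) := by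
    intro i j y s hs
    obtain ⟨b0, b1, b2⟩ := hC y s hs i j
    have hr : ∀ k, |y k + a k| ≤ ‖y‖ + ‖a‖ := by
      intro k
      refine (abs_add_le _ _).trans (add_le_add ?_ ?_)
      · exact PiLp.norm_apply_le y k
      · exact norm_le_pi_norm a k
    set r := ‖y‖ + ‖a‖ with hrd
    have hr0 : 0 ≤ r := by positivity
    have hs0 := hs.1
    have hsT := hs.2
    have e1 : |(y i + a i) * (y j + a j) * F i j (y, s)| ≤ r * r * C := by
      rw [abs_mul, abs_mul]
      gcongr
      · exact hr i
      · exact hr j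
    have e2 : ∀ k l, |2 * s * ((y k + a k) * Pd l (F i j) (y, s))| ≤ 2 * T * (r * C) := by
      intro k l
      rw [abs_mul, abs_mul (y k + a k), abs_of_nonneg (by positivity : 0 ≤ 2 * s)]
      gcongr
      · exact hr k
      · exact b1 l
    have e3 : |if i = j then 2 * s * F i j (y, s) else 0| ≤ 2 * T * C := by
      split_ifs
      · rw [abs_mul, abs_of_nonneg (by positivity : 0 ≤ 2 * s)]
        gcongr
      · rw [abs_zero]; positivity
    have e4 : |4 * s ^ 2 * Pd i (Pd j (F i j)) (y, s)| ≤ 4 * T ^ 2 * C := by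
      rw [abs_mul, abs_of_nonneg (by positivity : 0 ≤ 4 * s ^ 2)]
      gcongr
      exact b2 i j
    have g1 := neg_le_of_abs_le e1
    have g2 := neg_le_of_abs_le (e2 i j)
    have g2' := neg_le_of_abs_le (e2 j i)
    have g3 := neg_le_of_abs_le e3
    have g4 := neg_le_of_abs_le e4
    have q : r * r + 4 * T * r + 2 * T + 4 * T ^ 2 ≤ 4 * ‖y‖ ^ 2 + (4 * ‖a‖ ^ 2 + 8 * T ^ 2 + 2 * T) := by
      nlinarith [sq_nonneg (‖y‖ - ‖a‖), sq_nonneg (r - 2 * T)]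
    have q2 := mul_le_mul_of_nonneg_left q hC0
    simp only [hf]
    linarith
  have hmain := maxp' hn hT (u := fun p => ∑ i, ∑ j, f i j p)
    (continuousOn_finsetSum _ fun i _ => continuousOn_finsetSum _ fun j _ => hfc i j)
    (ContDiffOn.sum fun i _ => ContDiffOn.sum fun j _ => hfO i j)
    (by
      intro p hp
      rw [Ht_sum hO _ (fun i => ContDiffOn.sum fun j _ => hfO i j) p hp]
      refine Finset.sum_eq_zero fun i _ => ?_
      rw [Ht_sum hO _ (fun j => hfO i j) p hp]
      exact Finset.sum_eq_zero fun j _ => hfH i j p hp)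
    (K1 := n * (n * (C * 4))) (K2 := n * (n * (C * (4 * ‖a‖ ^ 2 + 8 * T ^ 2 + 2 * T))))
    (by
      intro y s hs
      have : ∑ i : Fin n, ∑ j : Fin n, -(C * 4 * ‖y‖ ^ 2 + C * (4 * ‖a‖ ^ 2 + 8 * T ^ 2 + 2 * T))
          ≤ ∑ i, ∑ j, f i j (y, s) :=
        Finset.sum_le_sum fun i _ => Finset.sum_le_sum fun j _ => hflb i j y s hs
      simp only [Finset.sum_const, Finset.card_univ, Fintype.card_fin, nsmul_eq_mul] at this
      linarith)
    (by
      intro y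
      refine (hpsd y (fun i => y i + a i)).trans_eq ?_
      refine Finset.sum_congr rfl fun i _ => Finset.sum_congr rfl fun j _ => ?_
      simp [hf, hFdef]; ring)
    x t htI
  -- evaluate at the point
  have hev : ∀ i j, f i j (x, t) = 4 * t ^ 2 * hess i j (fun z => Υ z t i j) x
      + 4 * t ^ 2 * (pdv i (fun z => Υ z t i j) x * V j)
      + 4 * t ^ 2 * (pdv j (fun z => Υ z t j i) x * V i)
      + 4 * t ^ 2 * (Υ x t i j * V i * V j) + (if i = j then 2 * t * Υ x t i j else 0) := by
    intro i j
    have s1 : pdv j (fun z => Υ z t j i) x = Pd j (F i j) (x, t) := by rw [hFs]; rfl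
    have s2 : pdv i (fun z => Υ z t i j) x = Pd i (F i j) (x, t) := rfl
    have s3 : hess i j (fun z => Υ z t i j) x = Pd i (Pd j (F i j)) (x, t) := rfl
    have s4 : Υ x t i j = F i j (x, t) := rfl
    rw [s1, s2, s3, s4]
    simp only [hf, ha]
    ring
  simp only [hev, Finset.sum_add_distrib, ← Finset.mul_sum, Finset.sum_ite_eq, Finset.mem_univ,
    if_true] at hmain
  rw [Finset.sum_comm (f := fun i j => pdv j (fun z => Υ z t j i) x * V i)] at hmain
  set A := ∑ i, ∑ j, hess i j (fun z => Υ z t i j) x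
  set B := ∑ i, ∑ j, pdv i (fun z => Υ z t i j) x * V j
  set Q := ∑ i, ∑ j, Υ x t i j * V i * V j
  set R := ∑ i, Υ x t i i
  have ht0 : 0 < t := ht.1
  have hfin : 0 ≤ A + 2 * B + Q + R / t / 2 := by
    have e : 4 * t ^ 2 * A + 4 * t ^ 2 * B + 4 * t ^ 2 * B + 4 * t ^ 2 * Q + 2 * t * R
        = 4 * t ^ 2 * (A + 2 * B + Q + R / t / 2) := by
      field_simp; ring
    rw [e] at hmain
    exact nonneg_of_mul_nonneg_right hmain (by positivity)
  linarith
end
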